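/- arXiv:2211.05752 — 2 statements merged into one kernel-verified Lean document; each statement's English description precedes it below -/
import Mathlib

section
/- Fix n ≥ 1. Then liminf_{l→∞} of the ratio #{(r₁, …, r_n) ∈ 𝓡_l : the group G = ⟨x₁, …, x_{n+1} ∣ r₁, …, r_n⟩ is not subgroup separable} / #𝓡_l is strictly positive. (That is, a random deficiency 1 group in the few-relator model is not subgroup separable with positive asymptotic probability.) -/
open scoped Classical

/-- A word in the letters `x₁^{±1}, …, x_{n+1}^{±1}`. -/
abbrev RWord (n : ℕ) := List (Fin (n + 1) × Bool)

/-- A word is cyclically reduced if its double is a reduced word. -/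
def CyclicallyReduced {n : ℕ} (w : RWord n) : Prop :=
  FreeGroup.reduce (w ++ w) = w ++ w

/-- The set of relators determined by a tuple of words. -/
def relsOf {n : ℕ} (r : Fin n → RWord n) : Set (FreeGroup (Fin (n + 1))) :=
  Set.range fun i => FreeGroup.mk (r i)

/-- A group is *subgroup separable (LERF)* if every finitely generated subgroup is the
intersection of the finite-index subgroups containing it. -/
def SubgroupSeparable (G : Type*) [Group G] : Prop :=
  ∀ H : Subgroup G, H.FG → H = ⨅ (K : Subgroup G) (_ : H ≤ K) (_ : K.FiniteIndex), K

/-- `𝓡_l`: the set of `n`-tuples of nonempty cyclically reduced words of length at most `l`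
in the alphabet `{x₁^{±1}, …, x_{n+1}^{±1}}`. -/
def Rtuples (n l : ℕ) : Set (Fin n → RWord n) :=
  {r | ∀ i, r i ≠ [] ∧ (r i).length ≤ l ∧ CyclicallyReduced (r i)}

/-- The proportion of tuples in `𝓡_l` satisfying the property `Pr`. -/
noncomputable def tupleRatio (n : ℕ) (Pr : (Fin n → RWord n) → Prop) (l : ℕ) : ℝ :=
  (Nat.card {r : Fin n → RWord n // r ∈ Rtuples n l ∧ Pr r} : ℝ) /
    (Nat.card (Rtuples n l) : ℝ)

theorem conj_mem_of_lerf {G : Type*} [Group G] (hG : SubgroupSeparable G) (K : Subgroup G)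
    (hK : K.FG) (t : G) (h : ∀ x ∈ K, t * x * t⁻¹ ∈ K) : ∀ x ∈ K, t⁻¹ * x * t ∈ K := by
  intro x hx
  have hpow : ∀ k : ℕ, ∀ x ∈ K, t ^ k * x * (t ^ k)⁻¹ ∈ K := by
    intro k
    induction k with
    | zero => intro x hx; simpa using hx
    | succ k ih =>
      intro x hx
      have := ih _ (h x hx)
      have e : t ^ (k + 1) * x * (t ^ (k + 1))⁻¹ = t ^ k * (t * x * t⁻¹) * (t ^ k)⁻¹ := by
        rw [pow_succ]; group
      rw [e]; exact this
  set K' := K.map (MulAut.conj t).toMonoidHom with hK'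
  have hK'fg : K'.FG := by
    obtain ⟨S, hS⟩ := hK
    refine ⟨S.image (MulAut.conj t).toMonoidHom, ?_⟩
    rw [hK', ← hS, MonoidHom.map_closure, Finset.coe_image]
  have key : x ∈ K' := by
    rw [hG K' hK'fg]
    simp only [Subgroup.mem_iInf]
    intro H hH hfi
    have hcore : H.normalCore.FiniteIndex := inferInstance
    obtain ⟨k, hk0, -, hk⟩ := Subgroup.exists_pow_mem_of_index_ne_zero hcore.index_ne_zero t
    have hnn : H.normalCore.Normal := inferInstance
    obtain ⟨j, rfl⟩ : ∃ j, k = j + 1 := ⟨k - 1, by omega⟩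
    have h1 : t ^ (j + 1) * x * (t ^ (j + 1))⁻¹ ∈ H := by
      apply hH
      refine Subgroup.mem_map.2 ⟨t ^ j * x * (t ^ j)⁻¹, hpow j x hx, ?_⟩
      simp only [MulEquiv.toMonoidHom_eq_coe, MonoidHom.coe_coe, MulAut.conj_apply]
      rw [pow_succ']; group
    have h2 : x * (t ^ (j + 1)) * x⁻¹ ∈ H := H.normalCore_le (hnn.conj_mem _ hk x)
    have h3 : t ^ (j + 1) ∈ H := H.normalCore_le hk
    have h4 : x = (t ^ (j+1))⁻¹ * (t ^ (j + 1) * x * (t ^ (j + 1))⁻¹) * t ^ (j+1) := by group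
    rw [h4]
    exact H.mul_mem (H.mul_mem (H.inv_mem h3) h1) h3
  obtain ⟨y, hy, hyx⟩ := Subgroup.mem_map.1 key
  simp only [MulEquiv.toMonoidHom_eq_coe, MonoidHom.coe_coe, MulAut.conj_apply] at hyx
  rw [← hyx]
  have : t⁻¹ * (t * y * t⁻¹) * t = y := by group
  rw [this]; exact hy

theorem char_two_aux {L : Type*} [Field L] [Algebra (ZMod 2) L] (x : L)
    (hx : Transcendental (ZMod 2) x) (P : Polynomial ℤ) (hall : ∀ i, (2 : ℤ) ∣ P.coeff i) :
    Polynomial.aeval x P = 0 ∧ ¬ IsIntegral ℤ x⁻¹ := by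
  constructor
  · have : P.map (Int.castRingHom (ZMod 2)) = 0 := by
      ext i
      simp only [Polynomial.coeff_map, Polynomial.coeff_zero, eq_intCast]
      exact (ZMod.intCast_zmod_eq_zero_iff_dvd _ 2).2 (by exact_mod_cast hall i)
    rw [← Polynomial.aeval_map_algebraMap (ZMod 2)]
    have e : (algebraMap ℤ (ZMod 2)) = Int.castRingHom (ZMod 2) := rfl
    rw [e, this]; simp
  · intro h
    have h1 : IsIntegral (ZMod 2) x⁻¹ := h.tower_top
    have h2 : IsAlgebraic (ZMod 2) x := by
      have := h1.isAlgebraic.inv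
      simpa using this
    exact hx h2

theorem exists_field_root (P : Polynomial ℤ) (n : ℕ) (hn : 1 ≤ n) (hP : P.coeff 0 = 2 ^ n) :
    ∃ (L : Type) (_ : Field L) (α : L), α ≠ 0 ∧ Polynomial.aeval α P = 0 ∧
      ¬ IsIntegral ℤ α⁻¹ := by
  by_cases hall : ∀ i, (2 : ℤ) ∣ P.coeff i
  · have := char_two_aux (RatFunc.X : RatFunc (ZMod 2)) RatFunc.transcendental_X P hall
    exact ⟨RatFunc (ZMod 2), inferInstance, RatFunc.X, RatFunc.X_ne_zero, this.1, this.2⟩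
  · have hP0 : P ≠ 0 := by
      rintro rfl
      simp at hP
      exact absurd hP.symm (by positivity)
    by_contra hcon
    push Not at hcon
    apply hall
    set Q := (P.map (Int.castRingHom ℂ)).reverse with hQ
    have hPm : (P.map (Int.castRingHom ℂ)).coeff 0 = 2 ^ n := by simp [hP]
    have hQl : Q.leadingCoeff = 2 ^ n := by
      rw [hQ, Polynomial.reverse_leadingCoeff, Polynomial.trailingCoeff_eq_coeff_zero, hPm]
      rw [hPm]; exact pow_ne_zero _ two_ne_zero
    have hroots : ∀ u ∈ Q.roots, IsIntegral ℤ u := by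
      intro u hu
      by_cases hu0 : u = 0
      · rw [hu0]; exact isIntegral_zero
      have hr : Q.IsRoot u := Polynomial.isRoot_of_mem_roots hu
      have hr' : Polynomial.eval₂ (RingHom.id ℂ) u⁻¹ (P.map (Int.castRingHom ℂ)) = 0 := by
        have : Invertible u⁻¹ := invertibleOfNonzero (inv_ne_zero hu0)
        have := (Polynomial.eval₂_reverse_eq_zero_iff (RingHom.id ℂ) u⁻¹ (P.map (Int.castRingHom ℂ))).1
        apply this
        rw [invOf_eq_inv, inv_inv]; simpa [Polynomial.eval₂_id] using hr
      have := hcon ℂ inferInstance u⁻¹ (inv_ne_zero hu0) (by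
        rw [Polynomial.eval₂_id, Polynomial.eval_map] at hr'
        simpa [Polynomial.aeval_def] using hr')
      simpa using this
    have hsp : Q.Splits := IsAlgClosed.splits Q
    have hprod := hsp.eq_prod_roots
    have hcoef : ∀ i, ∃ z : ℂ, IsIntegral ℤ z ∧ Q.coeff i = 2 ^ n * z := by
      intro i
      refine ⟨((Q.roots.map (fun a => Polynomial.X - Polynomial.C a)).prod).coeff i, ?_, ?_⟩
      · have : ∃ R : Polynomial (integralClosure ℤ ℂ), R.map (algebraMap _ ℂ) =
            (Q.roots.map (fun a => Polynomial.X - Polynomial.C a)).prod := by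
          have gen : ∀ s : Multiset ℂ, (∀ u ∈ s, IsIntegral ℤ u) →
              ∃ R : Polynomial (integralClosure ℤ ℂ), R.map (algebraMap _ ℂ) =
              (s.map (fun a => Polynomial.X - Polynomial.C a)).prod := by
            intro s
            induction s using Multiset.induction with
            | empty => intro _; exact ⟨1, by simp⟩
            | cons a s ih =>
              intro hs
              obtain ⟨R, hR⟩ := ih (fun u hu => hs u (Multiset.mem_cons_of_mem hu))
              refine ⟨(Polynomial.X - Polynomial.C ⟨a, hs a (Multiset.mem_cons_self a s)⟩) * R, ?_⟩
              simp [hR]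
          exact gen _ hroots
        obtain ⟨R, hR⟩ := this
        rw [← hR, Polynomial.coeff_map]
        exact (R.coeff i).2
      · conv_lhs => rw [hprod]
        rw [hQl, Polynomial.coeff_C_mul]
    intro i
    have hPi : ∃ j, ((P.coeff i : ℤ) : ℂ) = Q.coeff j := by
      refine ⟨(Polynomial.revAt (P.map (Int.castRingHom ℂ)).natDegree i), ?_⟩
      rw [hQ, Polynomial.coeff_reverse]; simp
    obtain ⟨j, hj⟩ := hPi
    obtain ⟨z, hz, hz'⟩ := hcoef j
    have hzq : z = algebraMap ℚ ℂ ((P.coeff i : ℚ) / 2 ^ n) := by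
      rw [← hj] at hz'
      simp
      rw [hz']; field_simp
    rw [hzq] at hz
    have hz2 : IsIntegral ℤ ((P.coeff i : ℚ) / 2 ^ n) :=
      (isIntegral_algebraMap_iff (algebraMap ℚ ℂ).injective).1 hz
    obtain ⟨k, hk⟩ := IsIntegrallyClosed.isIntegral_iff.1 hz2
    have : P.coeff i = 2 ^ n * k := by
      simp at hk
      have h2 : (P.coeff i : ℚ) = 2 ^ n * k := by rw [hk]; field_simp
      exact_mod_cast h2
    rw [this]
    exact Dvd.dvd.mul_right (dvd_pow_self 2 (by omega)) k
namespace DefOne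

def ht {ι : Type} (φ : ι → ℤ) (c : ι × Bool) : ℤ := cond c.2 (φ c.1) (-φ c.1)

def bar {ι : Type} (c : ι × Bool) : ι × Bool := (c.1, !c.2)

def hts {ι : Type} (φ : ι → ℤ) (w : List (ι × Bool)) : ℤ := (w.map (ht φ)).sum

/-- All vertices of the path satisfy `p`. -/
def AllV {ι : Type} (φ : ι → ℤ) (p : ℤ → Prop) : ℤ → List (ι × Bool) → Prop
  | a, [] => p a
  | a, c :: w => p a ∧ AllV φ p (a + ht φ c) w

/-- All vertices of the path but the last one satisfy `p`. -/
def AllS {ι : Type} (φ : ι → ℤ) (p : ℤ → Prop) : ℤ → List (ι × Bool) → Prop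
  | _, [] => True
  | a, c :: w => p a ∧ AllS φ p (a + ht φ c) w

def ev {ι G : Type} [Group G] (g : ι → G) (c : ι × Bool) : G := cond c.2 (g c.1) (g c.1)⁻¹

def evs {ι G : Type} [Group G] (g : ι → G) (w : List (ι × Bool)) : G := (w.map (ev g)).prod

section basic
variable {ι : Type} (φ : ι → ℤ)

@[simp] theorem ht_bar (c : ι × Bool) : ht φ (bar c) = - ht φ c := by
  rcases c with ⟨j, _ | _⟩ <;> simp [ht, bar]

@[simp] theorem bar_bar (c : ι × Bool) : bar (bar c) = c := by
  simp [bar]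

@[simp] theorem bar_fst (c : ι × Bool) : (bar c).1 = c.1 := rfl
@[simp] theorem bar_snd (c : ι × Bool) : (bar c).2 = !c.2 := rfl

@[simp] theorem hts_nil : hts φ [] = 0 := rfl
@[simp] theorem hts_cons (c : ι × Bool) (w) : hts φ (c :: w) = ht φ c + hts φ w := by simp [hts]
@[simp] theorem hts_append (u w) : hts φ (u ++ w) = hts φ u + hts φ w := by simp [hts]

theorem ht_neg (c : ι × Bool) : ht (-φ) c = - ht φ c := by
  rcases c with ⟨j, _ | _⟩ <;> simp [ht]

theorem hts_neg (w) : hts (-φ) w = - hts φ w := by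
  induction w with
  | nil => simp
  | cons c w ih => simp [ih, ht_neg]; ring

variable {φ}

@[simp] theorem AllV_nil (p : ℤ → Prop) (a) : AllV φ p a [] ↔ p a := Iff.rfl
@[simp] theorem AllV_cons (p : ℤ → Prop) (a c w) :
  AllV φ p a (c :: w) ↔ p a ∧ AllV φ p (a + ht φ c) w := Iff.rfl
@[simp] theorem AllS_nil (p : ℤ → Prop) (a) : AllS φ p a [] ↔ True := Iff.rfl
@[simp] theorem AllS_cons (p : ℤ → Prop) (a c w) :
  AllS φ p a (c :: w) ↔ p a ∧ AllS φ p (a + ht φ c) w := Iff.rfl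

theorem AllV.first {p : ℤ → Prop} {a w} (h : AllV φ p a w) : p a := by
  cases w with
  | nil => exact h
  | cons c w => exact h.1

theorem AllV.last {p : ℤ → Prop} {a w} (h : AllV φ p a w) : p (a + hts φ w) := by
  induction w generalizing a with
  | nil => simpa using h
  | cons c w ih => have := ih h.2; simpa [add_assoc] using this

theorem AllV_append {p : ℤ → Prop} {a u w} :
    AllV φ p a (u ++ w) ↔ AllV φ p a u ∧ AllV φ p (a + hts φ u) w := by
  induction u generalizing a with
  | nil => simp; exact fun h => h.first
  | cons c u ih => simp [ih, and_assoc, add_assoc]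

theorem AllS_append {p : ℤ → Prop} {a u w} :
    AllS φ p a (u ++ w) ↔ AllS φ p a u ∧ AllS φ p (a + hts φ u) w := by
  induction u generalizing a with
  | nil => simp
  | cons c u ih => simp [ih, and_assoc, add_assoc]

theorem AllV.mono {p q : ℤ → Prop} {a w} (h : AllV φ p a w) (hpq : ∀ x, p x → q x) :
    AllV φ q a w := by
  induction w generalizing a with
  | nil => exact hpq _ h
  | cons c w ih => exact ⟨hpq _ h.1, ih h.2⟩

theorem AllV.and {p q : ℤ → Prop} {a w} (h : AllV φ p a w) (h' : AllV φ q a w) :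
    AllV φ (fun x => p x ∧ q x) a w := by
  induction w generalizing a with
  | nil => exact ⟨h, h'⟩
  | cons c w ih => exact ⟨⟨h.1, h'.1⟩, ih h.2 h'.2⟩

theorem AllS.mono {p q : ℤ → Prop} {a w} (h : AllS φ p a w) (hpq : ∀ x, p x → q x) :
    AllS φ q a w := by
  induction w generalizing a with
  | nil => trivial
  | cons c w ih => exact ⟨hpq _ h.1, ih h.2⟩

theorem AllS.toV {p : ℤ → Prop} {a w} (h : AllS φ p a w) (h' : p (a + hts φ w)) :
    AllV φ p a w := by
  induction w generalizing a with
  | nil => simpa using h'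
  | cons c w ih => exact ⟨h.1, ih h.2 (by simpa [add_assoc] using h')⟩

theorem AllV.shift {p : ℤ → Prop} {a w} (b : ℤ) (h : AllV φ p a w) :
    AllV φ (fun x => p (x - b)) (a + b) w := by
  induction w generalizing a with
  | nil => simpa using h
  | cons c w ih =>
    refine ⟨by simpa using h.1, ?_⟩
    have := ih h.2
    rwa [show a + b + ht φ c = a + ht φ c + b by ring]

theorem AllV_neg {p : ℤ → Prop} {a w} :
    AllV (-φ) p a w ↔ AllV φ (fun x => p (-x)) (-a) w := by
  induction w generalizing a with
  | nil => simp
  | cons c w ih =>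
    simp [ih, ht_neg]
    intro _
    rw [add_comm]

theorem exists_lower (a : ℤ) (w) : ∃ lo : ℤ, AllV φ (fun x => lo ≤ x) a w := by
  induction w generalizing a with
  | nil => exact ⟨a, le_refl a⟩
  | cons c w ih =>
    obtain ⟨lo, h⟩ := ih (a + ht φ c)
    exact ⟨min lo a, min_le_right _ _, h.mono fun x hx => le_trans (min_le_left _ _) hx⟩

end basic

section reach
variable {ι G : Type} [Group G] (g : ι → G) (φ : ι → ℤ)

@[simp] theorem ev_bar (c : ι × Bool) : ev g (bar c) = (ev g c)⁻¹ := by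
  rcases c with ⟨j, _ | _⟩ <;> simp [ev, bar]

@[simp] theorem evs_nil : evs g [] = 1 := rfl
@[simp] theorem evs_cons (c : ι × Bool) (w) : evs g (c :: w) = ev g c * evs g w := by simp [evs]
@[simp] theorem evs_append (u w) : evs g (u ++ w) = evs g u * evs g w := by simp [evs]

inductive Reach (lo hi : ℤ) : ℤ → ℤ → G → Prop
  | nil (a : ℤ) : lo ≤ a → a ≤ hi → Reach lo hi a a 1
  | cons (a b : ℤ) (c : ι × Bool) (x : G) : lo ≤ a → a ≤ hi → Reach lo hi (a + ht φ c) b x →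
      Reach lo hi a b (ev g c * x)

variable {g φ} {lo hi a b c : ℤ} {x y : G}

theorem Reach.left (h : Reach g φ lo hi a b x) : lo ≤ a ∧ a ≤ hi := by
  cases h <;> exact ⟨by assumption, by assumption⟩

theorem Reach.right (h : Reach g φ lo hi a b x) : lo ≤ b ∧ b ≤ hi := by
  induction h with
  | nil a h1 h2 => exact ⟨h1, h2⟩
  | cons a b c x h1 h2 h3 ih => exact ih

theorem Reach.trans (h : Reach g φ lo hi a b x) (h' : Reach g φ lo hi b c y) :
    Reach g φ lo hi a c (x * y) := by
  induction h with
  | nil a h1 h2 => simpa using h'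
  | cons a b c x h1 h2 h3 ih => rw [mul_assoc]; exact Reach.cons _ _ _ _ h1 h2 (ih h')

theorem Reach.single (l : ι × Bool) (h1 : lo ≤ a) (h2 : a ≤ hi) (h3 : lo ≤ a + ht φ l)
    (h4 : a + ht φ l ≤ hi) : Reach g φ lo hi a (a + ht φ l) (ev g l) := by
  have := Reach.cons (g := g) a _ l 1 h1 h2 (Reach.nil _ h3 h4)
  simpa using this

theorem Reach.symm (h : Reach g φ lo hi a b x) : Reach g φ lo hi b a x⁻¹ := by
  induction h with
  | nil a h1 h2 => simpa using Reach.nil a h1 h2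
  | cons a b c x h1 h2 h3 ih =>
    rw [mul_inv_rev, ← ev_bar]
    refine ih.trans ?_
    have := Reach.single (g := g) (φ := φ) (lo := lo) (hi := hi) (a := a + ht φ c) (bar c)
      h3.left.1 h3.left.2 (by simpa using h1) (by simpa using h2)
    simpa using this

theorem Reach.mono {lo' hi' : ℤ} (h : Reach g φ lo hi a b x) (h1 : lo' ≤ lo) (h2 : hi ≤ hi') :
    Reach g φ lo' hi' a b x := by
  induction h with
  | nil a h3 h4 => exact Reach.nil a (by omega) (by omega)
  | cons a b c x h3 h4 h5 ih => exact Reach.cons _ _ _ _ (by omega) (by omega) ih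

theorem Reach.shift (d : ℤ) (h : Reach g φ lo hi a b x) :
    Reach g φ (lo + d) (hi + d) (a + d) (b + d) x := by
  induction h with
  | nil a h3 h4 => exact Reach.nil _ (by omega) (by omega)
  | cons a b c x h3 h4 h5 ih =>
    refine Reach.cons _ _ _ _ (by omega) (by omega) ?_
    rwa [show a + d + ht φ c = a + ht φ c + d by ring]

theorem Reach.of_list {w} (h : AllV φ (fun x => lo ≤ x ∧ x ≤ hi) a w) :
    Reach g φ lo hi a (a + hts φ w) (evs g w) := by
  induction w generalizing a with
  | nil => simpa using Reach.nil a h.1 h.2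
  | cons c w ih =>
    have := ih h.2
    simp only [evs_cons, hts_cons, ← add_assoc]
    exact Reach.cons _ _ _ _ h.1.1 h.1.2 this

theorem collapse_step {M τ : ℤ} (t : ι × Bool)
    (hup : ∀ c, 0 < ht φ c → Reach g φ 0 M (M + 1 - ht φ c) (M + 1 - τ) (ev g c * (ev g t)⁻¹))
    (hz : ∀ c, ht φ c = 0 → Reach g φ 0 M (M + 1 - τ) (M + 1 - τ) (ev g t * ev g c * (ev g t)⁻¹))
    (h : Reach g φ 0 (M + 1) a b x) (hb : b ≤ M) :
    (a ≤ M → Reach g φ 0 M a b x) ∧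
      (a = M + 1 → Reach g φ 0 M (M + 1 - τ) b (ev g t * x)) := by
  induction h with
  | nil a h1 h2 => exact ⟨fun h => Reach.nil _ h1 h, fun h => by omega⟩
  | cons a b c x h1 h2 h3 ih =>
    obtain ⟨ih1, ih2⟩ := ih hb
    have hl := h3.left
    constructor
    · intro ha
      by_cases hc : a + ht φ c ≤ M
      · exact Reach.cons _ _ _ _ h1 ha (ih1 hc)
      · have h5 := ih2 (by omega)
        have h6 := hup c (by omega)
        have h7 := h6.trans h5
        rw [show M + 1 - ht φ c = a by omega] at h7
        have e : ev g c * (ev g t)⁻¹ * (ev g t * x) = ev g c * x := by group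
        rwa [e] at h7
    · intro ha
      by_cases hc : ht φ c = 0
      · have h5 := (hz c hc).trans (ih2 (by omega))
        have e : ev g t * ev g c * (ev g t)⁻¹ * (ev g t * x) = ev g t * (ev g c * x) := by group
        rwa [e] at h5
      · have h6 := (hup (bar c) (by simp; omega)).symm
        have h7 := ih1 (by omega)
        rw [show a + ht φ c = M + 1 - ht φ (bar c) by simp; omega] at h7
        have h8 := h6.trans h7
        have e : (ev g (bar c) * (ev g t)⁻¹)⁻¹ * x = ev g t * (ev g c * x) := by
          rw [ev_bar]; group
        rwa [e] at h8

/-- The subgroup of loops at height `0` in a strip. -/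
def strip (g : ι → G) (φ : ι → ℤ) (M : ℤ) (hM : 0 ≤ M) : Subgroup G where
  carrier := {x | Reach g φ 0 M 0 0 x}
  mul_mem' h h' := Reach.trans h h'
  one_mem' := Reach.nil 0 le_rfl hM
  inv_mem' h := Reach.symm h

theorem mem_strip {M : ℤ} {hM : 0 ≤ M} : x ∈ strip g φ M hM ↔ Reach g φ 0 M 0 0 x := Iff.rfl

theorem strip_fg [Finite ι] (M : ℤ) (hM : 0 ≤ M) : (strip g φ M hM).FG := by
  classical
  have hex : ∀ h : ℤ, ∃ p : G, (∃ q, Reach g φ 0 M h 0 q) → Reach g φ 0 M h 0 p := by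
    intro h
    by_cases hq : ∃ q, Reach g φ 0 M h 0 q
    · exact ⟨hq.choose, fun _ => hq.choose_spec⟩
    · exact ⟨1, fun h => absurd h hq⟩
  choose p hp using hex
  -- generators
  let S : Set G := {y | y ∈ strip g φ M hM ∧ ∃ h ∈ Set.Icc (0 : ℤ) M, ∃ c : ι × Bool,
    y = (p h)⁻¹ * ev g c * p (h + ht φ c)} ∪ {p 0}
  have hSfin : S.Finite := by
    refine Set.Finite.union ?_ (Set.finite_singleton _)
    have : (Set.image2 (fun (h : ℤ) (c : ι × Bool) => (p h)⁻¹ * ev g c * p (h + ht φ c))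
      (Set.Icc (0 : ℤ) M) Set.univ).Finite :=
      Set.Finite.image2 _ (Set.finite_Icc _ _) Set.finite_univ
    refine this.subset ?_
    rintro y ⟨-, h, hh, c, rfl⟩
    exact ⟨h, hh, c, trivial, rfl⟩
  have hp0 : Reach g φ 0 M 0 0 (p 0) := hp 0 ⟨1, Reach.nil 0 le_rfl hM⟩
  refine (Subgroup.fg_iff _).2 ⟨S, le_antisymm ?_ ?_, hSfin⟩
  · rw [Subgroup.closure_le]
    rintro y (⟨hy, -⟩ | rfl)
    · exact hy
    · exact hp0
  · intro y hy
    have gen : ∀ a b x, Reach g φ 0 M a b x → b = 0 → (p a)⁻¹ * x ∈ Subgroup.closure S := by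
      intro a b x h
      induction h with
      | nil a h1 h2 =>
        rintro rfl
        rw [mul_one]
        exact Subgroup.inv_mem _ (Subgroup.subset_closure (Or.inr rfl))
      | cons a b c x h1 h2 h3 ih =>
        rintro rfl
        have e : (p a)⁻¹ * (ev g c * x) =
          ((p a)⁻¹ * ev g c * p (a + ht φ c)) * ((p (a + ht φ c))⁻¹ * x) := by group
        rw [e]
        refine Subgroup.mul_mem _ (Subgroup.subset_closure (Or.inl ⟨?_, a, ⟨h1, h2⟩, c, rfl⟩)) (ih rfl)
        have q1 : Reach g φ 0 M (a + ht φ c) 0 (p (a + ht φ c)) := hp _ ⟨_, h3⟩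
        have q2 : Reach g φ 0 M a 0 (p a) := hp _ ⟨_, Reach.cons _ _ _ _ h1 h2 h3⟩
        rw [mem_strip, mul_assoc]
        exact q2.symm.trans (Reach.cons _ _ _ _ h1 h2 q1)
    have h1 := gen 0 0 y hy rfl
    have h2 : p 0 ∈ Subgroup.closure S := Subgroup.subset_closure (Or.inr rfl)
    have := Subgroup.mul_mem _ h2 h1
    simpa using this

end reach
section words
variable {ι : Type}

def detU (s z : ι × Bool) : List (ι × Bool) := [s, s, bar z, bar s, z, bar s]

def detV (s z : ι × Bool) : List (ι × Bool) :=
  [s, s, bar z, bar s, z, s, bar z, bar s, z, bar s]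

def up (φ : ι → ℤ) (j : ι) : ι × Bool := (j, decide (0 ≤ φ j))

@[simp] theorem up_fst (φ : ι → ℤ) (j : ι) : (up φ j).1 = j := rfl

theorem ht_up (φ : ι → ℤ) (j : ι) : ht φ (up φ j) = |φ j| := by
  by_cases h : 0 ≤ φ j
  · simp [ht, up, h, abs_of_nonneg]
  · simp [ht, up, h]
    rw [abs_of_neg (by omega)]

theorem eq_up_or (φ : ι → ℤ) (c : ι × Bool) : c = up φ c.1 ∨ c = bar (up φ c.1) := by
  rcases c with ⟨j, b⟩
  cases b <;> by_cases h : 0 ≤ φ j <;> simp [up, bar, h]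

theorem eq_up_of_pos (φ : ι → ℤ) (c : ι × Bool) (h : 0 < ht φ c) : c = up φ c.1 := by
  rcases eq_up_or φ c with h1 | h1
  · exact h1
  · rw [h1, ht_bar, ht_up] at h
    have := abs_nonneg (φ c.1)
    omega

end words

section peaks
variable {ι G : Type} [Group G] {g : ι → G} {φ : ι → ℤ}

theorem peak_lemma {t y : ι × Bool} {A B : List (ι × Bool)} {H lo M : ℤ}
    (ht0 : 0 < ht φ t) (hy0 : 0 ≤ ht φ y) (hyt : ht φ y ≤ ht φ t)
    (hA : hts φ A = H) (hA' : AllV φ (fun x => x ≤ H) 0 A) (hB' : AllV φ (fun x => x ≤ H) H B)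
    (h0 : hts φ (A ++ detU t y ++ B) = 0) (hev : evs g (A ++ detU t y ++ B) = 1)
    (hlo : AllV φ (fun x => lo ≤ x) 0 (A ++ detU t y ++ B))
    (hM : H + 2 * ht φ t - lo ≤ M + 1) :
    (0 < ht φ y → Reach g φ 0 M (M + 1 - ht φ y) (M + 1 - ht φ t) (ev g y * (ev g t)⁻¹)) ∧
    (ht φ y = 0 → Reach g φ 0 M (M + 1 - ht φ t) (M + 1 - ht φ t)
      (ev g t * ev g y * (ev g t)⁻¹)) := by
  set τ := ht φ t with hτ
  set η := ht φ y with hη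
  have hB : H + hts φ B = 0 := by
    simp [detU, hA, ← hτ, ← hη] at h0; linarith
  rw [AllV_append, AllV_append] at hlo
  obtain ⟨⟨hl1, hl2⟩, hl3⟩ := hlo
  simp only [detU, AllV_cons, AllV_nil, hts_append, hts_cons, hts_nil, ht_bar, ← hτ, ← hη, zero_add, hA] at hl2 hl3
  have hev' : evs g A * ev g t * (ev g t * (ev g y)⁻¹ * (ev g t)⁻¹ * ev g y * (ev g t)⁻¹) *
      evs g B = 1 := by
    simp [detU] at hev; simpa [mul_assoc] using hev
  have hl3' : AllV φ (fun x => lo ≤ x) H B := by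
    convert hl3 using 1; ring
  have Q1 : Reach g φ lo (H + 2 * τ - 1) 0 (H + τ) (evs g (A ++ [t])) := by
    have := Reach.of_list (g := g) (φ := φ) (lo := lo) (hi := H + 2 * τ - 1) (a := 0) (w := A ++ [t]) (by
      rw [AllV_append]
      refine ⟨hl1.and (hA'.mono fun x hx => by omega), ?_⟩
      simp only [AllV_cons, AllV_nil, ← hτ, zero_add, hA]
      omega)
    simpa [hA, ← hτ] using this
  have Bw : AllV φ (fun x => lo ≤ x ∧ x ≤ H + 2 * τ - 1) H B :=
    hl3'.and (hB'.mono fun x hx => by omega)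
  have hd : ∀ a b x, Reach g φ lo (H + 2 * τ - 1) a b x →
      Reach g φ 0 M (a + (M + 1 - (H + 2 * τ))) (b + (M + 1 - (H + 2 * τ))) x := by
    intro a b x h
    exact (h.shift (M + 1 - (H + 2 * τ))).mono (by omega) (by omega)
  constructor
  · intro hpos
    have Q2 := Reach.of_list (g := g) (φ := φ) (lo := lo) (hi := H + 2 * τ - 1)
      (a := H + 2 * τ - η) (w := [bar t, y, bar t] ++ B) (by
      rw [AllV_append]
      constructor
      · simp only [AllV_cons, AllV_nil, ht_bar, ← hτ, ← hη]
        omega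
      · convert Bw using 1; simp [← hτ, ← hη]; ring)
    rw [show H + 2 * τ - η + hts φ ([bar t, y, bar t] ++ B) = 0 by
      simp [← hτ, ← hη]; linarith] at Q2
    have Q3 := hd _ _ _ (Q2.trans Q1)
    have e : evs g ([bar t, y, bar t] ++ B) * evs g (A ++ [t]) = ev g y * (ev g t)⁻¹ := by
      have h1 : (evs g A * ev g t * (ev g t * (ev g y)⁻¹)) *
        (evs g ([bar t, y, bar t] ++ B)) = 1 := by
        rw [← hev']; simp [mul_assoc]
      rw [eq_inv_of_mul_eq_one_right h1]
      simp [mul_assoc]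
    rw [e] at Q3
    convert Q3 using 1 <;> ring
  · intro hzero
    have Q2 := Reach.of_list (g := g) (φ := φ) (lo := lo) (hi := H + 2 * τ - 1)
      (a := H + τ) (w := [y, bar t] ++ B) (by
      rw [AllV_append]
      constructor
      · simp only [AllV_cons, AllV_nil, ht_bar, ← hτ, ← hη]
        omega
      · convert Bw using 1; simp [← hτ, ← hη, hzero])
    rw [show H + τ + hts φ ([y, bar t] ++ B) = 0 by
      simp [← hτ, ← hη]; linarith] at Q2
    have Q3 := hd _ _ _ (Q2.trans Q1)
    have e : evs g ([y, bar t] ++ B) * evs g (A ++ [t]) = ev g t * ev g y * (ev g t)⁻¹ := by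
      have h1 : (evs g A * ev g t * (ev g t * (ev g y)⁻¹ * (ev g t)⁻¹)) *
        (evs g ([y, bar t] ++ B)) = 1 := by
        rw [← hev']; simp [mul_assoc]
      rw [eq_inv_of_mul_eq_one_right h1]
      simp [mul_assoc]
    rw [e] at Q3
    convert Q3 using 1 <;> ring

/-- The strip subgroups stabilise. -/
theorem strip_stable {n : ℕ} {G : Type} [Group G] {g : Fin (n + 1) → G} {φ : Fin (n + 1) → ℤ}
    (m : Fin (n + 1)) (hm : ∀ j, |φ j| ≤ |φ m|) (hφ : 0 < |φ m|) (r : Fin n → RWord n)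
    (h0 : ∀ i, hts φ (r i) = 0) (hev : ∀ i, evs g (r i) = 1)
    (htop : ∀ i, ∃ A B, r i = A ++ detU (up φ m) (up φ (m.succAbove i)) ++ B ∧
      AllV φ (fun x => x ≤ hts φ A) 0 A ∧ AllV φ (fun x => x ≤ hts φ A) (hts φ A) B) :
    ∃ M0 : ℤ, 0 ≤ M0 ∧ ∀ (M : ℤ) (x : G), Reach g φ 0 M 0 0 x → Reach g φ 0 M0 0 0 x := by
  have hpk : ∀ i, ∃ Mi : ℤ, ∀ M, Mi ≤ M → ∀ y, y = up φ (m.succAbove i) →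
      (0 < ht φ y → Reach g φ 0 M (M + 1 - ht φ y) (M + 1 - ht φ (up φ m))
        (ev g y * (ev g (up φ m))⁻¹)) ∧
      (ht φ y = 0 → Reach g φ 0 M (M + 1 - ht φ (up φ m)) (M + 1 - ht φ (up φ m))
        (ev g (up φ m) * ev g y * (ev g (up φ m))⁻¹)) := by
    intro i
    obtain ⟨A, B, hr, hA, hB⟩ := htop i
    obtain ⟨lo, hlo⟩ := exists_lower (φ := φ) 0 (r i)
    refine ⟨hts φ A + 2 * ht φ (up φ m) - lo, ?_⟩
    rintro M hM y rfl
    have e0 := h0 i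
    have e1 := hev i
    rw [hr] at hlo e0 e1
    refine peak_lemma (A := A) (B := B) (lo := lo) ?_ ?_ ?_ rfl hA hB e0 e1 hlo (by omega)
    · rw [ht_up]; exact hφ
    · rw [ht_up]; exact abs_nonneg _
    · rw [ht_up, ht_up]; exact hm _
  choose Mi hMi using hpk
  set M0 : ℤ := |φ m| + ∑ i, |Mi i| with hM0
  have hM0i : ∀ i, Mi i ≤ M0 := by
    intro i
    have h1 : |Mi i| ≤ ∑ i, |Mi i| :=
      Finset.single_le_sum (f := fun i => |Mi i|) (fun i _ => abs_nonneg _) (Finset.mem_univ i)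
    have := le_abs_self (Mi i)
    omega
  have hM0t : |φ m| ≤ M0 := by
    have : 0 ≤ ∑ i, |Mi i| := Finset.sum_nonneg fun i _ => abs_nonneg _
    omega
  have step : ∀ M, M0 ≤ M → ∀ x, Reach g φ 0 (M + 1) 0 0 x → Reach g φ 0 M 0 0 x := by
    intro M hM x hx
    have ht' := ht_up φ m
    refine (collapse_step (τ := ht φ (up φ m)) (up φ m) ?_ ?_ hx (by omega)).1 (by omega)
    · intro c hc
      have hce := eq_up_of_pos φ c hc
      rw [hce] at hc ⊢
      rcases Fin.eq_self_or_eq_succAbove m c.1 with h | ⟨i, h⟩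
      · rw [h, mul_inv_cancel]
        exact Reach.nil _ (by omega) (by omega)
      · rw [h] at hc ⊢
        exact (hMi i M (le_trans (hM0i i) hM) _ rfl).1 hc
    · intro c hc
      rcases Fin.eq_self_or_eq_succAbove m c.1 with h | ⟨i, h⟩
      · exfalso
        rcases eq_up_or φ c with h' | h' <;> rw [h', h] at hc <;> simp [ht'] at hc <;>
          simp [hc] at hφ
      · rcases eq_up_or φ c with h' | h'
        · rw [h', h] at hc ⊢
          exact (hMi i M (le_trans (hM0i i) hM) _ rfl).2 hc
        · rw [h', h] at hc ⊢
          rw [ht_bar] at hc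
          have := ((hMi i M (le_trans (hM0i i) hM) _ rfl).2 (by omega)).symm
          rw [ev_bar]
          simpa [mul_assoc] using this
  refine ⟨M0, by omega, ?_⟩
  have ind : ∀ k : ℕ, ∀ x, Reach g φ 0 (M0 + k) 0 0 x → Reach g φ 0 M0 0 0 x := by
    intro k
    induction k with
    | zero => intro x hx; simpa using hx
    | succ k ih =>
      intro x hx
      apply ih
      apply step _ (by omega)
      push_cast at hx
      rwa [add_assoc]
  intro M x hx
  refine ind (M - M0).toNat x (hx.mono le_rfl (by omega))

end peaks
section rep
open Polynomial

noncomputable def foxc {ι : Type} (φ : ι → ℤ) (j : ι) (a : ℤ) (c : ι × Bool) : ℤ[X] :=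
  if c.1 = j then (if c = up φ j then X ^ a.toNat else - X ^ (a + ht φ c).toNat) else 0

noncomputable def fox {ι : Type} (φ : ι → ℤ) (j : ι) : ℤ → List (ι × Bool) → ℤ[X]
  | _, [] => 0
  | a, c :: w => foxc φ j a c + fox φ j (a + ht φ c) w

@[simp] theorem fox_nil {ι : Type} (φ : ι → ℤ) (j : ι) (a : ℤ) : fox φ j a [] = 0 := rfl
@[simp] theorem fox_cons {ι : Type} (φ : ι → ℤ) (j : ι) (a : ℤ) (c w) :
    fox φ j a (c :: w) = foxc φ j a c + fox φ j (a + ht φ c) w := rfl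

theorem fox_append {ι : Type} (φ : ι → ℤ) (j : ι) (a : ℤ) (u w) :
    fox φ j a (u ++ w) = fox φ j a u + fox φ j (a + hts φ u) w := by
  induction u generalizing a with
  | nil => simp
  | cons c u ih => simp [ih, add_assoc]

theorem fox_coeff_zero {ι : Type} (φ : ι → ℤ) (j : ι) (a : ℤ) (w)
    (h : AllV φ (fun x => 0 < x) a w) : (fox φ j a w).coeff 0 = 0 := by
  induction w generalizing a with
  | nil => simp
  | cons c w ih =>
    have h1 := ih _ h.2
    have h2 : 0 < a := h.1
    have h3 : 0 < a + ht φ c := h.2.first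
    rw [fox_cons, coeff_add, h1, add_zero, foxc]
    split_ifs
    · rw [coeff_X_pow, if_neg (by omega)]
    · rw [coeff_neg, coeff_X_pow, if_neg (by omega), neg_zero]
    · simp

theorem bar_up_ne {ι : Type} (φ : ι → ℤ) (j k : ι) : bar (up φ j) ≠ up φ k := by
  intro h
  have h1 := congrArg Prod.fst h
  simp at h1
  subst h1
  have h2 := congrArg Prod.snd h
  simp at h2

theorem fox_detV {ι : Type} (φ : ι → ℤ) (m i j : ι) (hj : j ≠ m)
    (hφ : 0 < |φ m|) :
    (fox φ j (2 * |φ m|) (detV (bar (up φ m)) (bar (up φ i)))).coeff 0 =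
      if i = j then 2 else 0 := by
  have hi' : ¬ (m = j) := fun h => hj h.symm
  by_cases hij : i = j
  · subst hij
    have hb : ∀ k, (bar (up φ i) = up φ k) = False := fun k => by simpa using bar_up_ne φ i k
    have e1 : (2 * |φ m| + -|φ m| + -|φ m|).toNat = 0 := by omega
    have e2 : ∀ z, (2 * |φ m| + -|φ m| + -|φ m| + |φ i| + |φ m| + -|φ i| + z).toNat =
      (|φ m| + z).toNat := by intro z; congr 1; ring
    have e3 : (2 * |φ m| + -|φ m| + -|φ m| + |φ i| + |φ m| + -|φ i|).toNat =
      (|φ m|).toNat := by congr 1; ring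
    have e4 : (2 * |φ m| + -|φ m| + -|φ m| + |φ i| + |φ m| + -|φ i| + -|φ m|).toNat = 0 := by omega
    have e5 : (2 * |φ m| + -|φ m| + -|φ m| + |φ i| + |φ m| + -|φ i| + -|φ m| + |φ i| + |φ m| + -|φ i|).toNat =
      (|φ m|).toNat := by congr 1; ring
    have e6 : ¬ (0 = (|φ m|).toNat) := by omega
    simp [detV, foxc, ht_up, hi', hb, e1, e3, e4, e5, coeff_X_pow, e6, -abs_pos]
  · simp [detV, foxc, hij, hi']

variable {L : Type} [Field L]

noncomputable def affP (α : L) (hα : α ≠ 0) (k : ℤ) (d : L) : Equiv.Perm L where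
  toFun v := α ^ k * v + d
  invFun v := α ^ (-k) * (v - d)
  left_inv v := by
    have : α ^ k ≠ 0 := zpow_ne_zero _ hα
    simp only [zpow_neg]; field_simp; ring
  right_inv v := by
    have : α ^ k ≠ 0 := zpow_ne_zero _ hα
    simp only [zpow_neg]; field_simp; ring

noncomputable def genP {ι : Type} (φ : ι → ℤ) (α : L) (hα : α ≠ 0) (δ : ι → L) (j : ι) :
    Equiv.Perm L :=
  if 0 ≤ φ j then affP α hα |φ j| (δ j) else (affP α hα |φ j| (δ j))⁻¹

theorem ev_genP_up {ι : Type} (φ : ι → ℤ) (α : L) (hα : α ≠ 0) (δ : ι → L) (j : ι) :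
    ev (genP φ α hα δ) (up φ j) = affP α hα |φ j| (δ j) := by
  by_cases h : 0 ≤ φ j <;> simp [ev, up, genP, h]

theorem evs_genP {ι : Type} [Fintype ι] (φ : ι → ℤ) (α : L) (hα : α ≠ 0) (δ : ι → L) (a : ℤ) (w)
    (h : AllV φ (fun x => 0 ≤ x) a w) (v : L) :
    α ^ a * (evs (genP φ α hα δ) w v) =
      α ^ (a + hts φ w) * v + ∑ j, aeval α (fox φ j a w) * δ j := by
  induction w generalizing a with
  | nil => simp
  | cons c w ih =>
    have h1 := ih _ h.2
    have h2 : 0 ≤ a := h.1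
    have h3 : 0 ≤ a + ht φ c := h.2.first
    simp only [evs_cons, Equiv.Perm.mul_apply, hts_cons, fox_cons, map_add, add_mul,
      Finset.sum_add_distrib]
    set u := evs (genP φ α hα δ) w v with hu
    have key : α ^ a * (ev (genP φ α hα δ) c u) =
        α ^ (a + ht φ c) * u + ∑ j, aeval α (foxc φ j a c) * δ j := by
      rw [Finset.sum_eq_single c.1]
      · rcases eq_up_or φ c with hc | hc
        · have e : aeval α (foxc φ c.1 a c) = α ^ a := by
            rw [foxc, if_pos rfl, if_pos hc]
            conv_rhs => rw [← Int.toNat_of_nonneg h2, zpow_natCast]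
            simp
          rw [e]
          have e2 : ht φ c = |φ c.1| := by
            conv_lhs => rw [hc]
            exact ht_up φ _
          have e3 : ev (genP φ α hα δ) c = affP α hα |φ c.1| (δ c.1) := by
            conv_lhs => rw [hc]
            exact ev_genP_up φ α hα δ _
          rw [e2, e3, zpow_add₀ hα]
          simp [affP]; ring
        · have e : aeval α (foxc φ c.1 a c) = - α ^ (a + ht φ c) := by
            rw [foxc, if_pos rfl, if_neg (by rw [hc]; exact bar_up_ne φ _ _)]
            conv_rhs => rw [← Int.toNat_of_nonneg h3, zpow_natCast]
            simp
          rw [e]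
          have e2 : ht φ c = -|φ c.1| := by
            conv_lhs => rw [hc]
            rw [ht_bar, ht_up]
          have e3 : ev (genP φ α hα δ) c = (affP α hα |φ c.1| (δ c.1))⁻¹ := by
            conv_lhs => rw [hc]
            rw [ev_bar, ev_genP_up φ α hα δ _]
          rw [e2, e3, zpow_add₀ hα]
          change α ^ a * (α ^ (-|φ c.1|) * (u - δ c.1)) = _
          ring
      · intro j _ hj
        rw [foxc, if_neg (fun h => hj h.symm)]; simp
      · simp
    rw [key, h1]
    ring_nf

end rep
section main
open Polynomial

theorem ev_genP_affine {ι L : Type} [Field L] (φ : ι → ℤ) (α : L) (hα : α ≠ 0) (δ : ι → L)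
    (c : ι × Bool) (u : L) :
    ev (genP φ α hα δ) c u = α ^ (ht φ c) * u + ev (genP φ α hα δ) c 0 := by
  rcases eq_up_or φ c with hc | hc
  · rw [hc, ev_genP_up, ht_up]; simp [affP]
  · rw [hc, ev_bar, ht_bar, ev_genP_up, ht_up]
    change α ^ (-|φ c.1|) * (u - δ c.1) = _ + α ^ (-|φ c.1|) * (0 - δ c.1)
    ring

theorem mk_eq_evs {n : ℕ} (r : Fin n → RWord n) (w : RWord n) :
    PresentedGroup.mk (relsOf r) (FreeGroup.mk w) =
      evs (PresentedGroup.of : _ → PresentedGroup (relsOf r)) w := by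
  have : PresentedGroup.mk (relsOf r) =
      FreeGroup.lift (PresentedGroup.of : _ → PresentedGroup (relsOf r)) := by
    ext x; simp [PresentedGroup.of]
  rw [this, FreeGroup.lift_mk]; rfl

theorem not_lerf {n : ℕ} (hn : 1 ≤ n) {φ : Fin (n + 1) → ℤ}
    (m : Fin (n + 1)) (hm : ∀ j, |φ j| ≤ |φ m|) (hφ : 0 < |φ m|) (r : Fin n → RWord n)
    (h0 : ∀ i, hts φ (r i) = 0)
    (htop : ∀ i, ∃ A B, r i = A ++ detU (up φ m) (up φ (m.succAbove i)) ++ B ∧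
      AllV φ (fun x => x ≤ hts φ A) 0 A ∧ AllV φ (fun x => x ≤ hts φ A) (hts φ A) B)
    (hbot : ∀ i, ∃ A B, r i = A ++ detV (bar (up φ m)) (bar (up φ (m.succAbove i))) ++ B ∧
      AllV φ (fun x => hts φ A ≤ x) 0 A ∧ AllV φ (fun x => hts φ A ≤ x) (hts φ A) B) :
    ¬ SubgroupSeparable (PresentedGroup (relsOf r)) := by
  intro hG
  set g : Fin (n + 1) → PresentedGroup (relsOf r) := PresentedGroup.of with hg
  have hev : ∀ i, evs g (r i) = 1 := by
    intro i
    rw [hg, ← mk_eq_evs]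
    exact PresentedGroup.one_of_mem ⟨i, rfl⟩
  obtain ⟨M0, hM0, hst⟩ := strip_stable (g := g) m hm hφ r h0 hev htop
  set K := strip g φ M0 hM0 with hK
  have hKfg : K.FG := strip_fg M0 hM0
  set t := ev g (up φ m) with ht_def
  have hup := ht_up φ m
  have hconj : ∀ x ∈ K, t * x * t⁻¹ ∈ K := by
    intro x hx
    rw [hK, mem_strip] at hx
    refine hst (M0 + |φ m|) _ ?_
    have h1 := (hx.shift |φ m|).mono (lo' := 0) (hi' := M0 + |φ m|) (by omega) le_rfl
    have h2 : Reach g φ 0 (M0 + |φ m|) 0 (0 + ht φ (up φ m)) (ev g (up φ m)) :=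
      Reach.single _ (by omega) (by omega) (by omega) (by omega)
    rw [hup] at h2
    exact (h2.trans h1).trans h2.symm
  have hinv := conj_mem_of_lerf hG K hKfg t hconj
  -- the polynomial matrix
  choose A B hr hA hB using hbot
  set a : Fin n → ℤ := fun i => 2 * |φ m| - hts φ (A i) with ha
  have hpos1 : ∀ i, AllV φ (fun x => 0 < x) (a i) (A i) := by
    intro i
    have := (hA i).shift (a i)
    rw [zero_add] at this
    refine this.mono fun x hx => ?_
    simp only [ha] at hx; omega
  have hpos2 : ∀ i, AllV φ (fun x => 0 < x) (2 * |φ m|) (B i) := by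
    intro i
    have := (hB i).shift (a i)
    rw [show hts φ (A i) + a i = 2 * |φ m| by simp [ha]] at this
    refine this.mono fun x hx => ?_
    simp only [ha] at hx; omega
  have hsplit : ∀ i, a i + hts φ (A i) = 2 * |φ m| := fun i => by simp [ha]
  have hV0 : ∀ i, hts φ (detV (bar (up φ m)) (bar (up φ (m.succAbove i)))) = 0 := by
    intro i; simp [detV, ht_up]; ring
  have hsplit2 : ∀ i, a i + hts φ (A i ++ detV (bar (up φ m)) (bar (up φ (m.succAbove i)))) =
      2 * |φ m| := fun i => by rw [hts_append, hV0, add_zero, hsplit]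
  have hnn : ∀ i, AllV φ (fun x => 0 ≤ x) (a i) (r i) := by
    intro i
    rw [hr i, AllV_append, AllV_append, hsplit, hsplit2]
    refine ⟨⟨(hpos1 i).mono fun x hx => hx.le, ?_⟩, (hpos2 i).mono fun x hx => hx.le⟩
    have h1 := hm (m.succAbove i)
    have h2 := abs_nonneg (φ (m.succAbove i))
    simp only [detV, AllV_cons, AllV_nil, ht_bar, ht_up]
    omega
  set P : Matrix (Fin n) (Fin n) ℤ[X] := fun i j => fox φ (m.succAbove j) (a i) (r i) with hP
  have hPc : ∀ i j, (P i j).coeff 0 = if i = j then 2 else 0 := by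
    intro i j
    simp only [hP]
    rw [hr i, fox_append, fox_append, hsplit, hsplit2, coeff_add, coeff_add,
      fox_coeff_zero _ _ _ _ (hpos1 i), fox_coeff_zero _ _ _ _ (hpos2 i),
      fox_detV φ m _ _ (Fin.succAbove_ne m j) hφ]
    simp
  have hdet : P.det.coeff 0 = 2 ^ n := by
    have h1 : (constantCoeff : ℤ[X] →+* ℤ) P.det = ((constantCoeff : ℤ[X] →+* ℤ).mapMatrix P).det :=
      RingHom.map_det _ _
    have h2 : (constantCoeff : ℤ[X] →+* ℤ).mapMatrix P = Matrix.diagonal (fun _ => 2) := by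
      ext i j
      rw [Matrix.diagonal_apply]
      exact hPc i j
    rw [h2, Matrix.det_diagonal] at h1
    simpa using h1
  obtain ⟨L, _, α, hα, hroot, hni⟩ := exists_field_root P.det n hn hdet
  have hdet2 : ((aeval α : ℤ[X] →ₐ[ℤ] L).toRingHom.mapMatrix P).det = 0 := by
    rw [← RingHom.map_det]; exact hroot
  obtain ⟨δ', hδ0, hδ⟩ := Matrix.exists_mulVec_eq_zero_iff.2 hdet2
  set δ : Fin (n + 1) → L := m.insertNth 0 δ' with hδdef
  have hδm : δ m = 0 := by simp [hδdef]
  have hδs : ∀ j, δ (m.succAbove j) = δ' j := fun j => by simp [hδdef]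
  have hrel : ∀ x ∈ relsOf r, FreeGroup.lift (genP φ α hα δ) x = 1 := by
    rintro _ ⟨i, rfl⟩
    rw [FreeGroup.lift_mk]
    ext v
    have h1 := evs_genP φ α hα δ (a i) (r i) (hnn i) v
    rw [h0 i, add_zero, Fin.sum_univ_succAbove _ m, hδm] at h1
    simp only [hδs, mul_zero, zero_add] at h1
    have h2 : ∑ j, aeval α (fox φ (m.succAbove j) (a i) (r i)) * δ' j = 0 := congrFun hδ i
    rw [h2, add_zero] at h1
    exact mul_left_cancel₀ (zpow_ne_zero _ hα) h1
  set ρ : PresentedGroup (relsOf r) →* Equiv.Perm L := PresentedGroup.toGroup hrel with hρ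
  have hρe : ∀ c, ρ (ev g c) = ev (genP φ α hα δ) c := by
    rintro ⟨j, _ | _⟩ <;> simp [ev, hg, hρ, PresentedGroup.toGroup.of]
  have haff : ∀ b1 b2 b3 b4 x, Reach g φ b1 b2 b3 b4 x → ∀ v, ρ x v = α ^ (b4 - b3) * v + ρ x 0 := by
    intro b1 b2 b3 b4 x hx
    induction hx with
    | nil b _ _ => intro v; simp
    | cons b b' c x _ _ _ ih =>
      intro v
      rw [map_mul, Equiv.Perm.mul_apply, Equiv.Perm.mul_apply, hρe,
        ev_genP_affine _ _ _ _ _ (ρ x v), ev_genP_affine _ _ _ _ _ (ρ x 0), ih v, mul_add, ← mul_assoc,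
        ← zpow_add₀ hα]
      ring_nf
  have haffK : ∀ x ∈ K, ∀ v, ρ x v = v + ρ x 0 := by
    intro x hx v
    have := haff _ _ _ _ x hx v
    simpa using this
  have hρt : ∀ v, ρ t v = α ^ |φ m| * v := by
    intro v
    rw [ht_def, hρe, ev_genP_up, hδm]; simp [affP]
  have hρt' : ∀ v, ρ t⁻¹ v = α ^ (-|φ m|) * v := by
    intro v
    rw [map_inv, Equiv.Perm.inv_eq_iff_eq, hρt, ← mul_assoc, ← zpow_add₀ hα]
    simp
  have hnotint : ¬ IsIntegral ℤ (α ^ (-|φ m|)) := by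
    intro h
    apply hni
    have e : α ^ (-|φ m|) = (α⁻¹) ^ (|φ m|).toNat := by
      rw [← zpow_natCast, Int.toNat_of_nonneg (abs_nonneg _)]; simp
    rw [e] at h
    exact h.of_pow (by omega)
  obtain ⟨S, hS⟩ := hKfg
  have hSK : ∀ s ∈ S, s ∈ K := fun s hs => by
    rw [← hS]; exact Subgroup.subset_closure hs
  set T : Submodule ℤ L := Submodule.span ℤ ((fun x => ρ x 0) '' (S : Set _)) with hT
  have hTfg : T.FG := Submodule.fg_span (S.finite_toSet.image _)
  have hKT : ∀ x ∈ K, ρ x 0 ∈ T := by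
    intro x hx
    rw [← hS] at hx
    induction hx using Subgroup.closure_induction with
    | mem x hx => exact Submodule.subset_span ⟨x, hx, rfl⟩
    | one => simp
    | mul x y hx hy ihx ihy =>
      rw [hS] at hx hy
      rw [map_mul, Equiv.Perm.mul_apply, haffK x hx]
      exact T.add_mem ihy ihx
    | inv x hx ih =>
      rw [hS] at hx
      have e : ρ x⁻¹ 0 = - ρ x 0 := by
        rw [map_inv, Equiv.Perm.inv_eq_iff_eq, haffK x hx]; ring
      rw [e]; exact T.neg_mem ih
  have hmul : ∀ z ∈ T, α ^ (-|φ m|) • z ∈ T := by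
    intro z hz
    induction hz using Submodule.span_induction with
    | mem z hz =>
      obtain ⟨x, hx, rfl⟩ := hz
      have h1 := hKT _ (hinv x (hSK x hx))
      have e : ρ (t⁻¹ * x * t) 0 = α ^ (-|φ m|) • ρ x 0 := by
        rw [map_mul, map_mul, Equiv.Perm.mul_apply, Equiv.Perm.mul_apply, hρt, mul_zero, hρt',
          smul_eq_mul]
      rw [e] at h1; exact h1
    | zero => simp
    | add x y _ _ hx hy => rw [smul_add]; exact T.add_mem hx hy
    | smul k x _ hx => rw [smul_comm]; exact T.smul_mem k hx
  have hTne : T ≠ ⊥ := by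
    obtain ⟨i, hi⟩ := Function.ne_iff.1 hδ0
    set y := up φ (m.succAbove i) with hy
    have hyh : ht φ y = |φ (m.succAbove i)| := ht_up _ _
    have hyn := abs_nonneg (φ (m.succAbove i))
    have h1 : evs g [up φ m, y, bar (up φ m), bar y] ∈ K := by
      rw [hK, mem_strip]
      apply hst (|φ m| + |φ (m.succAbove i)|)
      have := Reach.of_list (g := g) (φ := φ) (lo := 0) (hi := |φ m| + |φ (m.succAbove i)|)
        (a := 0) (w := [up φ m, y, bar (up φ m), bar y]) (by
          simp only [AllV_cons, AllV_nil, ht_bar, hup, hyh]; omega)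
      simpa [hup, hyh] using this
    have h2 := hKT _ h1
    intro hbot
    rw [hbot, Submodule.mem_bot] at h2
    have e1 : ρ (evs g [up φ m, y, bar (up φ m), bar y]) 0 = (α ^ |φ m| - 1) * δ' i := by
      simp only [evs_cons, evs_nil, mul_one, map_mul, Equiv.Perm.mul_apply, ev_bar]
      rw [← ht_def, hρt', hρt, map_inv, hρe, hy, ev_genP_up, hδs]
      change α ^ |φ m| * (α ^ |φ (m.succAbove i)| * (α ^ (-|φ m|) * (α ^ (-|φ (m.succAbove i)|) * (0 - δ' i))) + δ' i) = _
      have z1 := zpow_ne_zero |φ m| hα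
      have z2 := zpow_ne_zero |φ (m.succAbove i)| hα
      simp only [zpow_neg]
      field_simp
      ring
    rw [e1] at h2
    rcases mul_eq_zero.1 h2 with h3 | h3
    · apply hnotint
      rw [zpow_neg, sub_eq_zero.1 h3, inv_one]; exact isIntegral_one
    · exact hi h3
  exact hnotint (isIntegral_of_smul_mem_submodule T hTne hTfg _ hmul)

end main
section ins

theorem AllS_neg {ι : Type} {φ : ι → ℤ} {p : ℤ → Prop} {a w} :
    AllS (-φ) p a w ↔ AllS φ (fun x => p (-x)) (-a) w := by
  induction w generalizing a with
  | nil => simp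
  | cons c w ih =>
    simp [ih, ht_neg]
    intro _
    rw [add_comm]

theorem exists_split {ι : Type} (φ : ι → ℤ) (w : List (ι × Bool)) (a : ℤ) :
    ∃ p : List (ι × Bool) × List (ι × Bool), w = p.1 ++ p.2 ∧
      AllS φ (fun x => x < a + hts φ p.1) a p.1 ∧
      AllV φ (fun x => x ≤ a + hts φ p.1) (a + hts φ p.1) p.2 := by
  induction w generalizing a with
  | nil => exact ⟨([], []), by simp⟩
  | cons c w ih =>
    obtain ⟨⟨A, B⟩, hw, hA, hB⟩ := ih (a + ht φ c)
    simp only at hw hA hB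
    by_cases h : a < a + ht φ c + hts φ A
    · refine ⟨(c :: A, B), by simp [hw], ?_, ?_⟩
      · simp only [hts_cons, ← add_assoc, AllS_cons]
        exact ⟨h, hA⟩
      · simp only [hts_cons, ← add_assoc]
        exact hB
    · refine ⟨([], c :: w), by simp, by simp, ?_⟩
      simp only [hts_nil, add_zero, AllV_cons, le_refl, true_and]
      rw [hw, AllV_append]
      refine ⟨AllS.toV (hA.mono fun x hx => by omega) (by omega), hB.mono fun x hx => by omega⟩

theorem exists_split0 {ι : Type} (φ : ι → ℤ) (w : List (ι × Bool)) :
    ∃ p : List (ι × Bool) × List (ι × Bool), w = p.1 ++ p.2 ∧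
      AllS φ (fun x => x < hts φ p.1) 0 p.1 ∧
      AllV φ (fun x => x ≤ hts φ p.1) (hts φ p.1) p.2 := by
  simpa only [zero_add] using exists_split φ w 0

noncomputable def sp {ι : Type} (φ : ι → ℤ) (w : List (ι × Bool)) :
    List (ι × Bool) × List (ι × Bool) := (exists_split0 φ w).choose

theorem sp_spec {ι : Type} (φ : ι → ℤ) (w : List (ι × Bool)) :
    w = (sp φ w).1 ++ (sp φ w).2 ∧
      AllS φ (fun x => x < hts φ (sp φ w).1) 0 (sp φ w).1 ∧
      AllV φ (fun x => x ≤ hts φ (sp φ w).1) (hts φ (sp φ w).1) (sp φ w).2 := by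
  exact (exists_split0 φ w).choose_spec

noncomputable def ins {ι : Type} (φ : ι → ℤ) (D w : List (ι × Bool)) : List (ι × Bool) :=
  (sp φ w).1 ++ D ++ (sp φ w).2

theorem hts_ins {ι : Type} (φ ψ : ι → ℤ) (D w : List (ι × Bool)) (hD : hts ψ D = 0) :
    hts ψ (ins φ D w) = hts ψ w := by
  conv_rhs => rw [(sp_spec φ w).1]
  simp [ins, hD]

theorem length_ins {ι : Type} (φ : ι → ℤ) (D w : List (ι × Bool)) :
    (ins φ D w).length = w.length + D.length := by
  conv_rhs => rw [(sp_spec φ w).1]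
  simp [ins]; ring

theorem first_max_unique {ι : Type} {φ : ι → ℤ} {P Q P' Q' : List (ι × Bool)}
    (h : P ++ Q = P' ++ Q')
    (h1 : AllS φ (fun x => x < hts φ P) 0 P) (h2 : AllV φ (fun x => x ≤ hts φ P) (hts φ P) Q)
    (h1' : AllS φ (fun x => x < hts φ P') 0 P')
    (h2' : AllV φ (fun x => x ≤ hts φ P') (hts φ P') Q') : P = P' := by
  have aux : ∀ P Q P' Q' C : List (ι × Bool), P' = P ++ C → Q = C ++ Q' →
    AllV φ (fun x => x ≤ hts φ P) (hts φ P) Q →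
    AllS φ (fun x => x < hts φ P') 0 P' → P = P' := by
    intro P Q P' Q' C hP hQ h2 h1'
    cases C with
    | nil => simpa using hP.symm
    | cons c C =>
      exfalso
      rw [hQ, AllV_append] at h2
      have h3 := h2.1.last
      nth_rewrite 2 [hP] at h1'
      rw [AllS_append] at h1'
      have h4 := h1'.2.1
      rw [hP] at h4
      simp only [hts_append] at h4
      omega
  rcases List.append_eq_append_iff.1 h with ⟨C, hC1, hC2⟩ | ⟨C, hC1, hC2⟩
  · exact aux P Q P' Q' C hC1 hC2 h2 h1'
  · exact (aux P' Q' P Q C hC1 hC2 h2' h1).symm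

theorem ins_inj {ι : Type} (φ : ι → ℤ) (s : ι × Bool) (D : List (ι × Bool)) (hs : 0 < ht φ s)
    (hD0 : hts φ (s :: s :: D) = 0)
    (hD : AllV φ (fun x => x ≤ 2 * ht φ s) (2 * ht φ s) D) :
    Function.Injective (ins φ (s :: s :: D)) := by
  have spec : ∀ w, AllS φ (fun x => x < hts φ ((sp φ w).1 ++ [s, s])) 0 ((sp φ w).1 ++ [s, s]) ∧
      AllV φ (fun x => x ≤ hts φ ((sp φ w).1 ++ [s, s])) (hts φ ((sp φ w).1 ++ [s, s]))
        (D ++ (sp φ w).2) := by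
    intro w
    obtain ⟨-, hA, hB⟩ := sp_spec φ w
    constructor
    · rw [AllS_append]
      refine ⟨hA.mono fun x hx => by simp; omega, ?_⟩
      simp; omega
    · rw [AllV_append]
      simp only [hts_cons, hts_append, hts_nil] at hD0 ⊢
      constructor
      · have := hD.shift (hts φ (sp φ w).1)
        rw [show 2 * ht φ s + hts φ (sp φ w).1 = hts φ (sp φ w).1 + (ht φ s + (ht φ s + 0)) by ring]
          at this
        exact this.mono fun x hx => by omega
      · rw [show hts φ (sp φ w).1 + (ht φ s + (ht φ s + 0)) + hts φ D = hts φ (sp φ w).1 by omega]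
        exact hB.mono fun x hx => by omega
  intro w w' h
  have h' : ((sp φ w).1 ++ [s, s]) ++ (D ++ (sp φ w).2) =
      ((sp φ w').1 ++ [s, s]) ++ (D ++ (sp φ w').2) := by
    simpa [ins] using h
  have e := first_max_unique h' (spec w).1 (spec w).2 (spec w').1 (spec w').2
  rw [e] at h'
  have e2 := List.append_cancel_left (List.append_cancel_left h')
  have e1 := List.append_cancel_right e
  rw [(sp_spec φ w).1, (sp_spec φ w').1, e1, e2]

def Jn {ι : Type} (a b : ι × Bool) : Prop := a.1 = b.1 → a.2 = b.2

theorem cr_iff {n : ℕ} (w : RWord n) : CyclicallyReduced w ↔ List.IsChain Jn (w ++ w) := by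
  unfold CyclicallyReduced
  rw [← FreeGroup.isReduced_iff_reduce_eq]; rfl

theorem Jn_of_pos {ι : Type} {φ : ι → ℤ} {c s : ι × Bool} (hc : 0 ≤ ht φ c) (hs : 0 < ht φ s) :
    Jn c s := by
  rcases c with ⟨i, _ | _⟩ <;> rcases s with ⟨j, _ | _⟩ <;> simp [Jn, ht] at * <;> rintro rfl <;> omega

theorem Jn_of_neg {ι : Type} {φ : ι → ℤ} {c s : ι × Bool} (hc : ht φ c ≤ 0) (hs : ht φ s < 0) :
    Jn s c := by
  rcases c with ⟨i, _ | _⟩ <;> rcases s with ⟨j, _ | _⟩ <;> simp [Jn, ht] at * <;> rintro rfl <;> omega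

theorem ins_cr {n : ℕ} (φ : Fin (n + 1) → ℤ) (s : Fin (n + 1) × Bool) (E : RWord n)
    (hs : 0 < ht φ s) (hE : List.IsChain Jn (s :: E ++ [bar s])) (w : RWord n) (hw : w ≠ [])
    (hw0 : hts φ w = 0) (hcr : CyclicallyReduced w) :
    CyclicallyReduced (ins φ (s :: E ++ [bar s]) w) := by
  rw [cr_iff] at *
  obtain ⟨hsp, hA, hB⟩ := sp_spec φ w
  unfold ins
  generalize (sp φ w).1 = A at *
  generalize (sp φ w).2 = B at *
  have hBne : B ≠ [] := by
    rintro rfl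
    rw [List.append_nil] at hsp
    subst hsp
    cases w with
    | nil => exact hw rfl
    | cons c w => have := hA.1; omega
  have jA : ∀ x ∈ A.getLast?, Jn x s := by
    intro x hx
    rcases List.eq_nil_or_concat A with rfl | ⟨A', c, rfl⟩
    · simp at hx
    · simp at hx
      subst hx
      rw [List.concat_eq_append, AllS_append] at hA
      have := hA.2.1
      simp at this
      exact Jn_of_pos (φ := φ) this.le hs
  have jB : ∀ y ∈ B.head?, Jn (bar s) y := by
    intro y hy
    cases B with
    | nil => simp at hy
    | cons c B =>
      simp at hy
      subst hy
      have := hB.2.first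
      exact Jn_of_neg (φ := φ) (by omega) (by simp; exact hs)
  have jBl : A = [] → ∀ x ∈ B.getLast?, Jn x s := by
    rintro rfl x hx
    rw [List.nil_append] at hsp
    rw [hsp] at hw0
    rcases List.eq_nil_or_concat B with rfl | ⟨B', c, rfl⟩
    · simp at hx
    · simp at hx
      subst hx
      rw [List.concat_eq_append, AllV_append] at hB
      have := hB.1.last
      simp at this hw0
      exact Jn_of_pos (φ := φ) (by omega) hs
  rw [hsp] at hcr
  set D := s :: E ++ [bar s] with hD
  have hDh : D.head? = some s := by simp [hD]
  have hDl : D.getLast? = some (bar s) := by rw [hD]; exact List.getLast?_concat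
  have hDne : D ≠ [] := by simp [hD]
  rw [List.isChain_append] at hcr ⊢
  obtain ⟨h1, -, h3⟩ := hcr
  rw [List.isChain_append] at h1
  have half : List.IsChain Jn (A ++ D ++ B) := by
    rw [List.isChain_append, List.isChain_append]
    refine ⟨⟨h1.1, hE, ?_⟩, h1.2.1, ?_⟩
    · intro x hx y hy
      rw [hDh] at hy; simp at hy; subst hy; exact jA x hx
    · intro x hx y hy
      rw [List.getLast?_append, hDl] at hx; simp at hx; subst hx; exact jB y hy
  refine ⟨half, half, ?_⟩
  intro x hx y hy
  have hx' : x ∈ B.getLast? := by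
    rw [List.getLast?_append_of_ne_nil _ hBne] at hx; exact hx
  cases A with
  | nil =>
    have : y = s := by simp [hD] at hy; exact hy.symm
    subst this; exact jBl rfl x hx'
  | cons c A =>
    refine h3 x ?_ y ?_
    · rw [List.getLast?_append_of_ne_nil _ hBne]; exact hx'
    · simpa using hy

end ins
section modification

theorem hts_detU {ι : Type} (ψ : ι → ℤ) (s z) : hts ψ (detU s z) = 0 := by simp [detU]; ring
theorem hts_detV {ι : Type} (ψ : ι → ℤ) (s z) : hts ψ (detV s z) = 0 := by simp [detV]; ring

theorem htop_aux {ι : Type} {φ : ι → ℤ} {t y : ι × Bool} (ht0 : 0 < ht φ t) (hy0 : 0 ≤ ht φ y)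
    (hyt : ht φ y ≤ ht φ t) (w : List (ι × Bool)) :
    ∃ A B, ins (-φ) (detV (bar t) (bar y)) (ins φ (detU t y) w) = A ++ detU t y ++ B ∧
      AllV φ (fun x => x ≤ hts φ A) 0 A ∧ AllV φ (fun x => x ≤ hts φ A) (hts φ A) B := by
  obtain ⟨-, hA0, hB0⟩ := sp_spec φ w
  obtain ⟨h1, hA, hB⟩ := sp_spec (-φ) (ins φ (detU t y) w)
  have hgoal : ins (-φ) (detV (bar t) (bar y)) (ins φ (detU t y) w) =
    (sp (-φ) (ins φ (detU t y) w)).1 ++ detV (bar t) (bar y) ++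
      (sp (-φ) (ins φ (detU t y) w)).2 := rfl
  rw [hgoal]
  clear hgoal
  generalize hw1 : ins φ (detU t y) w = w1 at *
  unfold ins at hw1
  generalize (sp φ w).1 = A0 at *
  generalize (sp φ w).2 = B0 at *
  generalize (sp (-φ) w1).1 = A at *
  generalize (sp (-φ) w1).2 = B at *
  rw [AllS_neg, hts_neg] at hA
  rw [AllV_neg, hts_neg] at hB
  simp only [neg_neg, neg_zero, neg_lt_neg_iff, neg_le_neg_iff] at hA hB
  have hV : ∀ x, hts φ A ≤ x → AllV φ (fun z => z ≤ x) (hts φ A) (detV (bar t) (bar y)) := by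
    intro x hx
    simp [detV]; omega
  have hA0' : AllV φ (fun x => x ≤ hts φ A0) 0 A0 :=
    AllS.toV (hA0.mono fun x hx => by omega) (by omega)
  have hVz := hts_detV φ (bar t) (bar y)
  have hUz := hts_detU φ t y
  have e : A0 ++ (detU t y ++ B0) = A ++ B := by
    rw [← h1, ← hw1, List.append_assoc]
  have case1 : ∀ C, A0 = A ++ C → B = C ++ (detU t y ++ B0) →
    ∃ A' B', A ++ detV (bar t) (bar y) ++ B = A' ++ detU t y ++ B' ∧
      AllV φ (fun x => x ≤ hts φ A') 0 A' ∧ AllV φ (fun x => x ≤ hts φ A') (hts φ A') B' := by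
    intro C hC hBC
    have hh : hts φ (A ++ detV (bar t) (bar y) ++ C) = hts φ A0 := by
      rw [hC]; simp [hVz]
    refine ⟨A ++ detV (bar t) (bar y) ++ C, B0, by rw [hBC]; simp, ?_, ?_⟩
    · rw [hh]
      have h2 := hA0'
      nth_rewrite 2 [hC] at h2
      rw [AllV_append] at h2
      rw [AllV_append, AllV_append]
      simp only [hts_append, hVz, zero_add, add_zero] at h2 ⊢
      exact ⟨⟨h2.1, hV _ (by simpa using h2.1.last)⟩, h2.2⟩
    · rw [hh]; exact hB0
  rcases List.append_eq_append_iff.1 e with ⟨C, hC1, hC2⟩ | ⟨C, hC1, hC2⟩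
  · -- A = A0 ++ C
    rcases List.append_eq_append_iff.1 hC2 with ⟨C', hD1, hD2⟩ | ⟨C', hD1, hD2⟩
    · refine ⟨A0, C' ++ detV (bar t) (bar y) ++ B, ?_, hA0', ?_⟩
      · rw [hC1, hD1]; simp
      · rw [hD2, AllV_append] at hB0
        have hAA : hts φ A = hts φ A0 + hts φ C' := by rw [hC1, hD1]; simp [hUz]
        rw [AllV_append, AllV_append]
        simp only [hts_append, hVz, add_zero, ← hAA] at hB0 ⊢
        refine ⟨⟨hB0.1, hV _ ?_⟩, hB0.2⟩
        have := hB0.1.last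
        omega
    · cases C with
      | nil =>
        exact case1 [] (by simpa using hC1.symm) (by rw [hD2, List.nil_append, hD1]; simp)
      | cons c C =>
        exfalso
        have hp : ∀ P Q, detU t y = P ++ Q → 0 ≤ hts φ P := by
          intro P Q h
          have : AllV φ (fun x => 0 ≤ x) 0 (detU t y) := by simp [detU]; omega
          rw [h, AllV_append] at this
          simpa using this.1.last
        have h3 := hp _ _ hD1
        nth_rewrite 2 [hC1] at hA
        rw [AllS_append] at hA
        have h4 := hA.2.1
        rw [hC1] at h4
        simp only [hts_append] at h4
        omega
  · exact case1 C hC1 hC2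

theorem hbot_aux {ι : Type} {φ : ι → ℤ} (D w : List (ι × Bool)) :
    ∃ A B, ins (-φ) D w = A ++ D ++ B ∧
      AllV φ (fun x => hts φ A ≤ x) 0 A ∧ AllV φ (fun x => hts φ A ≤ x) (hts φ A) B := by
  obtain ⟨-, hA, hB⟩ := sp_spec (-φ) w
  refine ⟨_, _, rfl, ?_, ?_⟩
  · rw [AllS_neg, hts_neg] at hA
    simp only [neg_neg, neg_zero, neg_lt_neg_iff] at hA
    exact AllS.toV (hA.mono fun x hx => by omega) (by omega)
  · rw [AllV_neg, hts_neg] at hB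
    simpa only [neg_neg, neg_zero, neg_le_neg_iff] using hB

theorem hts_eq_sum {k : ℕ} (φ : Fin k → ℤ) (w : List (Fin k × Bool)) :
    hts φ w = ∑ j, hts (Pi.single j 1) w * φ j := by
  induction w with
  | nil => simp
  | cons c w ih =>
    simp only [hts_cons, add_mul, Finset.sum_add_distrib, ← ih, add_left_inj]
    rcases c with ⟨i, _ | _⟩ <;> simp [ht, Pi.single_apply]

theorem exists_ker (n : ℕ) (M : Matrix (Fin n) (Fin (n + 1)) ℤ) :
    ∃ φ : Fin (n + 1) → ℤ, φ ≠ 0 ∧ M.mulVec φ = 0 := by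
  by_contra! h
  have : Function.Injective M.mulVecLin := by
    rw [← LinearMap.ker_eq_bot, LinearMap.ker_eq_bot']
    intro φ hφ
    by_contra h'
    exact h φ h' hφ
  have := card_le_of_injective ℤ M.mulVecLin this
  simp at this

noncomputable def Phi {n : ℕ} (M : Matrix (Fin n) (Fin (n + 1)) ℤ) : Fin (n + 1) → ℤ :=
  (exists_ker n M).choose

theorem exists_am {n : ℕ} (φ : Fin (n + 1) → ℤ) : ∃ m, ∀ j, |φ j| ≤ |φ m| :=
  Finite.exists_max (fun j => |φ j|)

noncomputable def am {n : ℕ} (φ : Fin (n + 1) → ℤ) : Fin (n + 1) := (exists_am φ).choose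

theorem am_spec {n : ℕ} (φ : Fin (n + 1) → ℤ) (j) : |φ j| ≤ |φ (am φ)| :=
  (exists_am φ).choose_spec j

theorem am_pos {n : ℕ} {φ : Fin (n + 1) → ℤ} (h : φ ≠ 0) : 0 < |φ (am φ)| := by
  by_contra h'
  apply h
  funext j
  have := am_spec φ j
  have h2 := abs_nonneg (φ j)
  exact abs_eq_zero.1 (by omega)

def mat {n : ℕ} (r : Fin n → RWord n) : Matrix (Fin n) (Fin (n + 1)) ℤ :=
  fun i j => hts (Pi.single j 1) (r i)

noncomputable def modW {n : ℕ} (φ : Fin (n + 1) → ℤ) (i : Fin n) (w : RWord n) : RWord n :=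
  ins (-φ) (detV (bar (up φ (am φ))) (bar (up φ ((am φ).succAbove i))))
    (ins φ (detU (up φ (am φ)) (up φ ((am φ).succAbove i))) w)

noncomputable def modT {n : ℕ} (r : Fin n → RWord n) : Fin n → RWord n :=
  fun i => modW (Phi (mat r)) i (r i)

theorem hts_modW {n : ℕ} (φ ψ : Fin (n + 1) → ℤ) (i) (w : RWord n) :
    hts ψ (modW φ i w) = hts ψ w := by
  rw [modW, hts_ins _ _ _ _ (hts_detV _ _ _), hts_ins _ _ _ _ (hts_detU _ _ _)]

theorem mat_modT {n : ℕ} (r : Fin n → RWord n) : mat (modT r) = mat r := by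
  funext i j
  simp [mat, modT, hts_modW]

theorem Phi_ne {n : ℕ} (M : Matrix (Fin n) (Fin (n + 1)) ℤ) : Phi M ≠ 0 :=
  (exists_ker n M).choose_spec.1

theorem hts_Phi {n : ℕ} (r : Fin n → RWord n) (i) : hts (Phi (mat r)) (r i) = 0 := by
  have := congrFun (exists_ker n (mat r)).choose_spec.2 i
  rw [hts_eq_sum]
  exact this

theorem modW_inj {n : ℕ} {φ : Fin (n + 1) → ℤ} (hφ : φ ≠ 0) (i) :
    Function.Injective (modW φ i) := by
  have hp := am_pos hφ
  have h1 := ht_up φ (am φ)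
  have h2 := ht_up φ ((am φ).succAbove i)
  have h3 := am_spec φ ((am φ).succAbove i)
  have h4 := abs_nonneg (φ ((am φ).succAbove i))
  unfold modW
  refine Function.Injective.comp (g := ins (-φ) _) (f := ins φ _) ?_ ?_
  · refine ins_inj _ _ _ (by simp [ht_neg]; omega) (hts_detV _ _ _) ?_
    simp [ht_neg]; omega
  · refine ins_inj _ _ _ (by omega) (hts_detU _ _ _) ?_
    simp; omega

theorem modW_cr {n : ℕ} {φ : Fin (n + 1) → ℤ} (hφ : φ ≠ 0) (i) (w : RWord n) (hw : w ≠ [])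
    (hw0 : hts φ w = 0) (hcr : CyclicallyReduced w) : CyclicallyReduced (modW φ i w) := by
  have hp := am_pos hφ
  have h1 := ht_up φ (am φ)
  have hne := Fin.succAbove_ne (am φ) i
  unfold modW
  have hne' := hne.symm
  have hd : detV (bar (up φ (am φ))) (bar (up φ ((am φ).succAbove i))) =
    bar (up φ (am φ)) :: [bar (up φ (am φ)), up φ ((am φ).succAbove i), up φ (am φ),
    bar (up φ ((am φ).succAbove i)), bar (up φ (am φ)), up φ ((am φ).succAbove i), up φ (am φ),
    bar (up φ ((am φ).succAbove i))] ++ [bar (bar (up φ (am φ)))] := by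
    simp [detV]
  rw [hd]
  refine ins_cr (-φ) (bar (up φ (am φ))) _ (by simp [ht_neg]; omega) ?_ _ ?_ ?_ ?_
  · simp [Jn, hne, hne']
  · rw [← List.length_pos_iff, length_ins]; simp [detU]
  · rw [hts_ins _ _ _ _ (hts_detU _ _ _), hts_neg, hw0, neg_zero]
  refine ins_cr φ (up φ (am φ)) [up φ (am φ), bar (up φ ((am φ).succAbove i)), bar (up φ (am φ)),
    up φ ((am φ).succAbove i)] (by omega) ?_ _ hw hw0 hcr
  simp [Jn, hne, hne']

theorem modT_mem {n l : ℕ} {r : Fin n → RWord n} (hr : r ∈ Rtuples n l) :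
    modT r ∈ Rtuples n (l + 16) := by
  intro i
  obtain ⟨h1, h2, h3⟩ := hr i
  have hl : (modT r i).length = (r i).length + 16 := by
    simp [modT, modW, length_ins, detU, detV]
  refine ⟨?_, by omega, modW_cr (Phi_ne _) i _ h1 (hts_Phi r i) h3⟩
  rw [← List.length_pos_iff]; omega

theorem modT_inj {n : ℕ} : Function.Injective (modT (n := n)) := by
  intro r r' h
  have hm : mat r = mat r' := by rw [← mat_modT r, ← mat_modT r', h]
  funext i
  have := congrFun h i
  simp only [modT, hm] at this
  exact modW_inj (Phi_ne _) i this

theorem modT_not_lerf {n : ℕ} (hn : 1 ≤ n) (r : Fin n → RWord n) :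
    ¬ SubgroupSeparable (PresentedGroup (relsOf (modT r))) := by
  have hp := am_pos (Phi_ne (mat r))
  refine not_lerf hn (am (Phi (mat r))) (am_spec _) hp _ ?_ ?_ ?_
  · intro i
    simp only [modT]
    rw [hts_modW, hts_Phi]
  · intro i
    exact htop_aux (by rw [ht_up]; exact hp) (by rw [ht_up]; exact abs_nonneg _)
      (by rw [ht_up, ht_up]; exact am_spec _ _) _
  · intro i
    exact hbot_aux _ _

end modification

section growth

def CW (n l : ℕ) : Set (RWord n) := {w | w ≠ [] ∧ w.length ≤ l ∧ CyclicallyReduced w}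

def dec {n : ℕ} (w : RWord n) :
    Option ((Fin (n + 1) × Bool) × (Fin (n + 1) × Bool)) → RWord n
  | none => w
  | some p => w.dropLast ++ [p.1, p.2]

theorem exists_dec {n : ℕ} (hn : 1 ≤ n) {l : ℕ} (hl : 2 ≤ l) (w : RWord n) (hw : w ∈ CW n (l + 1)) :
    ∃ w' ∈ CW n l, ∃ o, dec w' o = w := by
  obtain ⟨h1, h2, h3⟩ := hw
  by_cases h : w.length ≤ l
  · exact ⟨w, ⟨h1, h, h3⟩, none, rfl⟩
  have hlen : w.length = l + 1 := by omega
  rcases List.eq_nil_or_concat w with rfl | ⟨w1, d, rfl⟩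
  · simp at hlen
  rcases List.eq_nil_or_concat w1 with rfl | ⟨v, c, rfl⟩
  · simp at hlen; omega
  simp only [List.concat_eq_append] at *
  cases v with
  | nil => simp at hlen; omega
  | cons a u =>
    rw [cr_iff] at h3
    have hv : List.IsChain Jn (a :: u) := by
      rw [List.append_assoc, List.append_assoc, List.isChain_append] at h3
      exact h3.1
    obtain ⟨e, he1, he2⟩ : ∃ e : Fin (n + 1) × Bool,
        (∀ x ∈ (a :: u).getLast?, Jn x e) ∧ Jn e a := by
      by_cases hj : ∀ x ∈ (a :: u).getLast?, Jn x a
      · exact ⟨a, hj, fun _ => rfl⟩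
      · push Not at hj
        obtain ⟨x, hx, hxa⟩ := hj
        have hx1 : x.1 = a.1 := by
          by_contra hh; exact hxa fun h => absurd h hh
        have : Nontrivial (Fin (n + 1)) := Fin.nontrivial_iff_two_le.2 (by omega)
        obtain ⟨j, hj⟩ := exists_ne a.1
        refine ⟨(j, true), ?_, fun h => absurd h hj⟩
        intro z hz
        rw [Option.mem_unique hz hx]
        exact fun h => absurd (h.symm.trans hx1) hj
    refine ⟨a :: u ++ [e], ⟨by simp, ?_, ?_⟩, some (c, d), ?_⟩
    · simp at hlen ⊢; omega
    · have hh : List.IsChain Jn (a :: u ++ [e]) := by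
        rw [List.isChain_append]
        refine ⟨hv, by simp, ?_⟩
        intro x hx y hy
        simp at hy; subst hy; exact he1 x hx
      rw [cr_iff, List.isChain_append]
      refine ⟨hh, hh, ?_⟩
      intro x hx y hy
      rw [List.getLast?_concat] at hx
      simp at hx hy; subst hx; subst hy; exact he2
    · simp only [dec, List.dropLast_concat]; simp

theorem finite_Rtuples (n l : ℕ) : (Rtuples n l).Finite := by
  refine (Set.Finite.pi' (fun _ : Fin n => List.finite_length_le (Fin (n + 1) × Bool) l)).subset ?_
  intro r hr i
  exact (hr i).2.1

abbrev Opt (n : ℕ) := Fin n → Option ((Fin (n + 1) × Bool) × (Fin (n + 1) × Bool))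

theorem growth {n : ℕ} (hn : 1 ≤ n) {l : ℕ} (hl : 2 ≤ l) :
    Nat.card (Rtuples n (l + 1)) ≤ Nat.card (Opt n) * Nat.card (Rtuples n l) := by
  have := (finite_Rtuples n l).to_subtype
  rw [← Nat.card_prod]
  have hex : ∀ r : Rtuples n (l + 1), ∃ p : Opt n × Rtuples n l,
      (fun i => dec (p.2.1 i) (p.1 i)) = r.1 := by
    intro r
    have : ∀ i, ∃ w' ∈ CW n l, ∃ o, dec w' o = r.1 i := fun i => exists_dec hn hl _ (r.2 i)
    choose w' hw' o ho using this
    exact ⟨(o, ⟨w', hw'⟩), funext ho⟩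
  choose f hf using hex
  refine Nat.card_le_card_of_injective f ?_
  intro r r' h
  apply Subtype.ext
  rw [← hf r, ← hf r', h]

theorem growth_iter {n : ℕ} (hn : 1 ≤ n) {l : ℕ} (hl : 2 ≤ l) (k : ℕ) :
    Nat.card (Rtuples n (l + k)) ≤ Nat.card (Opt n) ^ k * Nat.card (Rtuples n l) := by
  induction k with
  | zero => simp
  | succ k ih =>
    calc _ ≤ Nat.card (Opt n) * Nat.card (Rtuples n (l + k)) := growth hn (by omega)
      _ ≤ Nat.card (Opt n) * (Nat.card (Opt n) ^ k * Nat.card (Rtuples n l)) :=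
        Nat.mul_le_mul_left _ ih
      _ = _ := by ring

theorem card_pos_R (n : ℕ) {l : ℕ} (hl : 1 ≤ l) : 0 < Nat.card (Rtuples n l) := by
  have := (finite_Rtuples n l).to_subtype
  have : Nonempty (Rtuples n l) := by
    refine ⟨⟨fun _ => [(0, true)], fun i => ⟨by simp, by simpa using hl, ?_⟩⟩⟩
    rw [cr_iff]; simp [Jn]
  exact Nat.card_pos

theorem main (n : ℕ) (hn : 1 ≤ n) :
    0 < Filter.liminf
      (tupleRatio n fun r => ¬SubgroupSeparable (PresentedGroup (relsOf r)))
      Filter.atTop := by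
  have hC : 0 < Nat.card (Opt n) := Nat.card_pos
  have hle1 : ∀ l, tupleRatio n (fun r => ¬SubgroupSeparable (PresentedGroup (relsOf r))) l ≤ 1 := by
    intro l
    have := (finite_Rtuples n l).to_subtype
    refine div_le_one_of_le₀ ?_ (by positivity)
    exact_mod_cast Nat.card_le_card_of_injective
      (fun r : {r : Fin n → RWord n // r ∈ Rtuples n l ∧
        ¬SubgroupSeparable (PresentedGroup (relsOf r))} => (⟨r.1, r.2.1⟩ : Rtuples n l))
      (fun r r' h => Subtype.ext (congrArg (fun x : Rtuples n l => x.1) h))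
  have key : ∀ l, 2 ≤ l → (1 : ℝ) / (Nat.card (Opt n) : ℝ) ^ 16 ≤
      tupleRatio n (fun r => ¬SubgroupSeparable (PresentedGroup (relsOf r))) (l + 16) := by
    intro l hl
    have h1 := growth_iter hn hl 16
    have hpos := card_pos_R n (l := l + 16) (by omega)
    have := (finite_Rtuples n (l + 16)).to_subtype
    have : Finite {r : Fin n → RWord n // r ∈ Rtuples n (l + 16) ∧
        ¬SubgroupSeparable (PresentedGroup (relsOf r))} :=
      ((finite_Rtuples n (l + 16)).subset (fun r hr => hr.1) :
        {r : Fin n → RWord n | r ∈ Rtuples n (l + 16) ∧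
        ¬SubgroupSeparable (PresentedGroup (relsOf r))}.Finite).to_subtype
    have h2 : Nat.card (Rtuples n l) ≤ Nat.card {r : Fin n → RWord n // r ∈ Rtuples n (l + 16) ∧
        ¬SubgroupSeparable (PresentedGroup (relsOf r))} :=
      Nat.card_le_card_of_injective
        (fun r : Rtuples n l => ⟨modT r.1, modT_mem r.2, modT_not_lerf hn r.1⟩)
        (fun r r' h => Subtype.ext (modT_inj (congrArg Subtype.val h)))
    unfold tupleRatio
    rw [div_le_div_iff₀ (by positivity) (by exact_mod_cast hpos), one_mul, mul_comm]
    exact_mod_cast h1.trans (Nat.mul_le_mul_left _ h2)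
  have hpos : (0 : ℝ) < 1 / (Nat.card (Opt n) : ℝ) ^ 16 := by positivity
  refine hpos.trans_le ?_
  refine Filter.le_liminf_of_le ?_ ?_
  · exact (Filter.isBoundedUnder_of ⟨1, hle1⟩).isCoboundedUnder_ge
  · filter_upwards [Filter.eventually_ge_atTop 18] with l hl
    have := key (l - 16) (by omega)
    rwa [Nat.sub_add_cancel (by omega)] at this

end growth

end DefOne

/-- With positive asymptotic probability, a random deficiency 1 group in the few-relator
model is not subgroup separable. -/
theorem random_def1_not_subgroupSeparable (n : ℕ) (hn : 1 ≤ n) :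
    0 < Filter.liminf
      (tupleRatio n fun r => ¬SubgroupSeparable (PresentedGroup (relsOf r)))
      Filter.atTop := by
  exact DefOne.main n hn
end

section
/- Fix n ≥ 1 and for l ≥ 1 let p_l be the proportion of tuples (r₁, …, r_n) ∈ 𝓡_l for which the group G = ⟨x₁, …, x_{n+1} ∣ r₁, …, r_n⟩ is free-by-cyclic, i.e. admits a normal subgroup N which is a finitely generated free group with G/N ≅ ℤ. Then liminf_{l→∞} p_l > 0 and limsup_{l→∞} p_l < 1. (That is, a random deficiency 1 group in the few-relator model is free-by-cyclic with asymptotic probability that is positive and bounded away from 1.) -/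
open scoped Classical

/-- A group is free-by-cyclic if it has a normal subgroup `N` which is a finitely generated
free group such that `G/N ≅ ℤ` (witnessed by a surjection `G → ℤ` with kernel `N`). -/
def FreeByCyclic (G : Type*) [Group G] : Prop :=
  ∃ N : Subgroup G, N.Normal ∧ IsFreeGroup N ∧ Group.FG N ∧
    ∃ ψ : G →* Multiplicative ℤ, Function.Surjective ψ ∧ ψ.ker = N

namespace RD

/-- signed height change of a letter -/
def st {n : ℕ} (a : Fin (n + 1) → ℤ) (x : Fin (n + 1) × Bool) : ℤ :=
  if x.2 then a x.1 else - a x.1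

/-- height of the endpoint of a word -/
def ht {n : ℕ} (a : Fin (n + 1) → ℤ) (w : RWord n) : ℤ := (w.map (st a)).sum

/-- lift of a word to the infinite cyclic cover -/
def lft {n : ℕ} (a : Fin (n + 1) → ℤ) : ℤ → RWord n → List ((Fin (n + 1) × ℤ) × Bool)
  | _, [] => []
  | h, x :: w => ((x.1, if x.2 then h else h - a x.1), x.2) :: lft a (h + st a x) w

/-- top of an edge -/
def top {n : ℕ} (a : Fin (n + 1) → ℤ) (e : Fin (n + 1) × ℤ) : ℤ := e.2 + max 0 (a e.1)
/-- bottom of an edge -/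
def bot {n : ℕ} (a : Fin (n + 1) → ℤ) (e : Fin (n + 1) × ℤ) : ℤ := e.2 + min 0 (a e.1)

section basic
variable {n : ℕ} (a : Fin (n + 1) → ℤ)

@[simp] lemma ht_nil : ht a [] = 0 := rfl
@[simp] lemma ht_cons (x) (w : RWord n) : ht a (x :: w) = st a x + ht a w := by simp [ht]
@[simp] lemma ht_append (u w : RWord n) : ht a (u ++ w) = ht a u + ht a w := by simp [ht]
@[simp] lemma lft_nil (h : ℤ) : lft a h [] = [] := rfl
lemma lft_cons (h : ℤ) (x) (w : RWord n) : lft a h (x :: w) =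
    ((x.1, if x.2 then h else h - a x.1), x.2) :: lft a (h + st a x) w := rfl
lemma lft_append (h : ℤ) (u w : RWord n) :
    lft a h (u ++ w) = lft a h u ++ lft a (h + ht a u) w := by
  induction u generalizing h with
  | nil => simp
  | cons x u ih => simp [lft_cons, ih, add_assoc]
@[simp] lemma length_lft (h : ℤ) (w : RWord n) : (lft a h w).length = w.length := by
  induction w generalizing h with
  | nil => simp
  | cons x u ih => simp [lft_cons, ih]
lemma lft_shift (h k : ℤ) (w : RWord n) :
    lft a (h + k) w = (lft a h w).map (fun E => ((E.1.1, E.1.2 + k), E.2)) := by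
  induction w generalizing h with
  | nil => simp
  | cons x u ih =>
    simp only [lft_cons, List.map_cons]
    rw [← ih, add_right_comm]
    congr 3
    split_ifs <;> ring

lemma st_neg (x) : st (-a) x = - st a x := by
  unfold st; split_ifs <;> simp
lemma ht_neg (w : RWord n) : ht (-a) w = - ht a w := by
  induction w with
  | nil => simp
  | cons x u ih => simp [ih, st_neg]; ring
lemma lft_neg (h : ℤ) (w : RWord n) :
    lft (-a) (-h) w = (lft a h w).map (fun E => ((E.1.1, -E.1.2), E.2)) := by
  induction w generalizing h with
  | nil => simp
  | cons x u ih =>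
    simp only [lft_cons, List.map_cons]
    rw [← ih, st_neg, neg_add]
    congr 3
    split_ifs <;> simp <;> ring
lemma top_neg (e : Fin (n + 1) × ℤ) : top (-a) (e.1, -e.2) = - bot a e := by
  simp only [top, bot, Pi.neg_apply]
  rcases le_total 0 (a e.1) with h | h <;> simp [h]; ring

/-- evaluation of a word in a labelling -/
def ev {I H : Type*} [Group H] (η : I → H) (L : List (I × Bool)) : H :=
  FreeGroup.lift η (FreeGroup.mk L)

lemma ev_append {I H : Type*} [Group H] (η : I → H) (L M : List (I × Bool)) :
    ev η (L ++ M) = ev η L * ev η M := by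
  simp [ev, ← FreeGroup.mul_mk]
@[simp] lemma ev_nil {I H : Type*} [Group H] (η : I → H) : ev η [] = 1 := by
  simp [ev]
lemma ev_cons {I H : Type*} [Group H] (η : I → H) (x) (M : List (I × Bool)) :
    ev η (x :: M) = (if x.2 then η x.1 else (η x.1)⁻¹) * ev η M := by
  rw [show x :: M = [x] ++ M from rfl, ev_append]
  congr 1
  rcases x with ⟨i, _ | _⟩ <;> simp [ev]
lemma ev_congr {I H : Type*} [Group H] (η ζ : I → H) (L : List (I × Bool))
    (h : ∀ x ∈ L, η x.1 = ζ x.1) : ev η L = ev ζ L := by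
  induction L with
  | nil => simp
  | cons x L ih =>
    rw [ev_cons, ev_cons, ih (fun y hy => h y (by simp [hy])), h x (by simp)]
lemma map_ev {I H K : Type*} [Group H] [Group K] (f : H →* K) (η : I → H) (L : List (I × Bool)) :
    f (ev η L) = ev (fun i => f (η i)) L := by
  induction L with
  | nil => simp
  | cons x L ih =>
    rw [ev_cons, ev_cons, map_mul, ih]
    split_ifs <;> simp

/-- triangular systems of relators -/
lemma triangular {I α : Type} [LT α] [WellFoundedLT α] (μ : I → α) (W : Set I)
    (L : I → List (I × Bool))
    (hL : ∀ e ∉ W, ∃ A s B, L e = A ++ (e, s) :: B ∧ ∀ x ∈ A ++ B, μ x.1 < μ e) :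
    ∃ E : I → FreeGroup W, (∀ e ∉ W, ev E (L e) = 1) ∧
      ∀ (H : Type) [Group H] (η : I → H), (∀ e ∉ W, ev η (L e) = 1) →
        ∀ e, FreeGroup.lift (fun w : W => η w) (E e) = η e := by
  choose! A s B hAB hlt using hL
  let Φ : ∀ e : I, (∀ x, μ x < μ e → FreeGroup W) → FreeGroup W := fun e f =>
    if h : e ∈ W then FreeGroup.of ⟨e, h⟩ else
      let g : I → FreeGroup W := fun x => if hx : μ x < μ e then f x hx else 1
      let v := (ev g (A e))⁻¹ * (ev g (B e))⁻¹
      if s e then v else v⁻¹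
  have wf : WellFounded (fun x y : I => μ x < μ y) := InvImage.wf μ wellFounded_lt
  let E : I → FreeGroup W := wf.fix Φ
  have hE : ∀ e, E e = Φ e (fun x _ => E x) := fun e => wf.fix_eq Φ e
  have key : ∀ (H : Type) [Group H] (η : I → H) (e) (he : e ∉ W),
      (ev η (L e) = 1 ↔ η e = if s e then (ev η (A e))⁻¹ * (ev η (B e))⁻¹
        else ((ev η (A e))⁻¹ * (ev η (B e))⁻¹)⁻¹) := by
    intro H _ η e he
    rw [hAB e he, ev_append, ev_cons]
    rcases s e with _ | _
    · simp only [Bool.false_eq_true, if_false]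
      constructor
      · intro h
        rw [← inv_inj, inv_inv, eq_inv_mul_iff_mul_eq, eq_inv_iff_mul_eq_one, mul_assoc, h]
      · intro h; rw [h]; group
    · simp only [if_true]
      constructor
      · intro h
        rw [eq_inv_mul_iff_mul_eq, eq_inv_iff_mul_eq_one, mul_assoc, h]
      · intro h; rw [h]; group
  have hE1 : ∀ e (he : e ∈ W), E e = FreeGroup.of ⟨e, he⟩ := by
    intro e he; rw [hE]; simp only [Φ, he, dif_pos]
  have hE2 : ∀ e ∉ W, E e = if s e then (ev E (A e))⁻¹ * (ev E (B e))⁻¹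
        else ((ev E (A e))⁻¹ * (ev E (B e))⁻¹)⁻¹ := by
    intro e he; rw [hE]; simp only [Φ, he, dif_neg, not_false_eq_true]
    have h1 : ev (fun x => if hx : μ x < μ e then E x else 1) (A e) = ev E (A e) :=
      ev_congr _ _ _ fun x hx => by simp [hlt e he x (by simp [hx])]
    have h2 : ev (fun x => if hx : μ x < μ e then E x else 1) (B e) = ev E (B e) :=
      ev_congr _ _ _ fun x hx => by simp [hlt e he x (by simp [hx])]
    rw [h1, h2]
  refine ⟨E, fun e he => (key _ E e he).2 (hE2 e he), ?_⟩
  intro H _ η hη e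
  induction e using wf.induction with
  | _ e ih =>
    by_cases he : e ∈ W
    · rw [hE1 e he]; simp
    · rw [hE2 e he, (key H η e he).1 (hη e he)]
      have h1 := map_ev (FreeGroup.lift (fun w : W => η w)) E (A e)
      have h2 := map_ev (FreeGroup.lift (fun w : W => η w)) E (B e)
      rw [ev_congr _ η (A e) fun x hx => ih x.1 (hlt e he x (by simp [hx]))] at h1
      rw [ev_congr _ η (B e) fun x hx => ih x.1 (hlt e he x (by simp [hx]))] at h2
      split_ifs <;> simp [h1, h2]

end basic
end RD

namespace RD

/-- the top of the lifted word consists of `e` occurrences of one edge over `y`;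
edges over the generator `0` are ignored -/
def TopC {n : ℕ} (a : Fin (n + 1) → ℤ) (e : ℕ) (y : Fin (n + 1)) (w : RWord n) : Prop :=
  ∃ β s, (lft a 0 w).filter (fun E => decide (E.1.1 ≠ 0 ∧ top a (y, β) ≤ top a E.1)) =
      List.replicate e ((y, β), s) ∧
    ∃ C D, w = C ++ D ∧ ht a C + |a 0| + |a y| ≤ top a (y, β)

section
variable {n : ℕ} (a : Fin (n + 1) → ℤ)

lemma TopC.split {y : Fin (n + 1)} {w : RWord n} (h : TopC a 1 y w) :
    ∃ β s A B, lft a 0 w = A ++ ((y, β), s) :: B ∧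
      ∀ x ∈ A ++ B, x.1.1 ≠ 0 → top a x.1 < top a (y, β) := by
  obtain ⟨β, s, hf, -⟩ := h
  rw [List.replicate_one, List.filter_eq_cons_iff] at hf
  obtain ⟨A, B, h1, h2, h3, h4⟩ := hf
  refine ⟨β, s, A, B, h1, ?_⟩
  rw [List.filter_eq_nil_iff] at h4
  intro x hx hx0
  rcases List.mem_append.1 hx with hx | hx
  · have := h2 x hx
    simp only [decide_eq_true_eq, not_and, not_le] at this
    exact this hx0
  · have := h4 x hx
    simp only [decide_eq_true_eq, not_and, not_le] at this
    exact this hx0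

lemma TopC.split_neg {y : Fin (n + 1)} {w : RWord n} (h : TopC (-a) 1 y w) :
    ∃ β s A B, lft a 0 w = A ++ ((y, β), s) :: B ∧
      ∀ x ∈ A ++ B, x.1.1 ≠ 0 → bot a (y, β) < bot a x.1 := by
  obtain ⟨β, s, A, B, h1, h2⟩ := h.split
  have h3 := lft_neg (-a) 0 w
  rw [neg_neg, neg_zero, h1] at h3
  refine ⟨-β, s, _, _, by simpa using h3, ?_⟩
  intro x hx hx0
  rw [← List.map_append, List.mem_map] at hx
  obtain ⟨z, hz, rfl⟩ := hx
  have h4 := h2 z hz hx0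
  have e1 := top_neg a (y, -β)
  have e2 := top_neg a (z.1.1, -z.1.2)
  simp only [neg_neg] at e1 e2
  rw [e1, show top (-a) z.1 = _ from e2] at h4
  simpa using h4

lemma exists_word {n : ℕ} {rels : Set (FreeGroup (Fin (n + 1)))} (g : PresentedGroup rels) :
    ∃ w : RWord n, PresentedGroup.mk rels (FreeGroup.mk w) = g := by
  obtain ⟨x, rfl⟩ := PresentedGroup.mk_surjective rels g
  exact ⟨x.toWord, by rw [FreeGroup.mk_toWord]⟩

/-- the hom to ℤ -/
lemma exists_psi (r : Fin n → RWord n) (hr : ∀ i, ht a (r i) = 0) :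
    ∃ ψ : PresentedGroup (relsOf r) →* Multiplicative ℤ,
      ∀ w, ψ (PresentedGroup.mk _ (FreeGroup.mk w)) = Multiplicative.ofAdd (ht a w) := by
  have hψ : ∀ w : RWord n, FreeGroup.lift (fun j => Multiplicative.ofAdd (a j)) (FreeGroup.mk w) =
      Multiplicative.ofAdd (ht a w) := by
    intro w
    induction w with
    | nil => simp [← FreeGroup.one_eq_mk]
    | cons x w ih =>
      rw [show x :: w = [x] ++ w from rfl, ← FreeGroup.mul_mk, map_mul, ih, ht_append, ofAdd_add]
      rcases x with ⟨j, _ | _⟩ <;> simp [FreeGroup.lift_mk, st]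
  have hrel : ∀ x ∈ relsOf r, FreeGroup.lift (fun j => Multiplicative.ofAdd (a j)) x = 1 := by
    rintro _ ⟨i, rfl⟩
    rw [hψ, hr, ofAdd_zero]
  exact ⟨PresentedGroup.toGroup hrel, fun w => hψ w⟩

/-- a labelling of the cover satisfying the relators extends to the group -/
lemma exists_R (r : Fin n → RWord n) (hr : ∀ i, ht a (r i) = 0) {H : Type} [Group H]
    (E : Fin (n + 1) × ℤ → H) (hE : ∀ i k, ev E (lft a k (r i)) = 1) :
    ∃ R : PresentedGroup (relsOf r) → ℤ → H,
      ∀ w h, R (PresentedGroup.mk _ (FreeGroup.mk w)) h = ev E (lft a h w) := by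
  let σ : Fin (n + 1) → Equiv.Perm (ℤ × H) := fun j =>
    { toFun := fun p => (p.1 - a j, E (j, p.1 - a j) * p.2)
      invFun := fun p => (p.1 + a j, (E (j, p.1))⁻¹ * p.2)
      left_inv := fun p => by simp
      right_inv := fun p => by simp }
  have key : ∀ (w : RWord n) (h : ℤ) (g : H),
      (FreeGroup.lift σ (FreeGroup.mk w)) (h + ht a w, g) = (h, ev E (lft a h w) * g) := by
    intro w
    induction w with
    | nil => intro h g; simp [← FreeGroup.one_eq_mk]
    | cons x w ih =>
      intro h g
      rw [show x :: w = [x] ++ w from rfl, ← FreeGroup.mul_mk, map_mul, Equiv.Perm.mul_apply,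
        ht_append, ← add_assoc, ih]
      rcases x with ⟨j, _ | _⟩
      · simp [FreeGroup.lift_mk, lft_cons, ev_cons, σ, Equiv.Perm.inv_def, Equiv.symm, st,
          mul_assoc, sub_eq_add_neg]
      · simp [FreeGroup.lift_mk, lft_cons, ev_cons, σ, st, mul_assoc]
  have hrel : ∀ x ∈ relsOf r, FreeGroup.lift σ x = 1 := by
    rintro _ ⟨i, rfl⟩
    ext1 ⟨k, g⟩
    have := key (r i) k g
    rw [hr, add_zero, hE, one_mul] at this
    exact this
  obtain ⟨ψ, hψ⟩ := exists_psi a r hr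
  refine ⟨fun g h => (PresentedGroup.toGroup hrel g (h + (ψ g).toAdd, 1)).2, fun w h => ?_⟩
  have e1 : ∀ x, PresentedGroup.toGroup hrel (PresentedGroup.mk _ x) = FreeGroup.lift σ x :=
    fun x => rfl
  simp only [e1, hψ, toAdd_ofAdd, key, mul_one]

/-- the universal labelling -/
lemma exists_label (r : Fin n → RWord n)
    (h1 : ∀ i, TopC a 1 i.succ (r i)) (h2 : ∀ i, TopC (-a) 1 i.succ (r i)) :
    ∃ W : Set (Fin (n + 1) × ℤ), W.Finite ∧ ∃ E : Fin (n + 1) × ℤ → FreeGroup W,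
      (∀ i k, ev E (lft a k (r i)) = 1) ∧
      ∀ (H : Type) [Group H] (η : Fin (n + 1) × ℤ → H), (∀ k, η (0, k) = 1) →
        (∀ i k, ev η (lft a k (r i)) = 1) →
        ∀ e, FreeGroup.lift (fun w : W => η w) (E e) = η e := by
  choose β s A B hAB hlt using fun i => (h1 i).split
  choose β' s' A' B' hAB' hlt' using fun i => (h2 i).split_neg
  -- bottom of relator
  let m : Fin n → ℤ := fun i => bot a (i.succ, β' i)
  let W : Set (Fin (n + 1) × ℤ) :=
    {e | 0 ≤ bot a e ∧ ∃ i : Fin n, e.1 = i.succ ∧ e.2 - β i + m i < 0}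
  have hW : W.Finite := by
    have : W ⊆ ⋃ i : Fin n, (fun k => (i.succ, k)) '' Set.Icc (-min 0 (a i.succ)) (β i - m i) := by
      rintro ⟨j, k⟩ ⟨hb, i, hj, hk⟩
      simp only at hj hk
      subst hj
      simp only [bot] at hb
      simp only [Set.mem_iUnion]
      exact ⟨i, k, ⟨by linarith, by linarith⟩, rfl⟩
    exact (Set.finite_iUnion fun i => (Set.finite_Icc _ _).image _).subset this
  let μ : Fin (n + 1) × ℤ → ℕ ×ₗ ℕ := fun e =>
    if e.1 = 0 then toLex (0, 0) else if 0 ≤ bot a e then toLex (1, (top a e).toNat)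
      else toLex (2, (-bot a e).toNat)
  let L : Fin (n + 1) × ℤ → List ((Fin (n + 1) × ℤ) × Bool) := fun e =>
    Fin.cases (motive := fun _ => List ((Fin (n + 1) × ℤ) × Bool)) [(e, true)]
      (fun i => if 0 ≤ bot a e then lft a (e.2 - β i) (r i) else lft a (e.2 - β' i) (r i)) e.1
  have hL0 : ∀ k, L (0, k) = [((0, k), true)] := fun k => rfl
  have hLs : ∀ i k, L (Fin.succ i, k) = if 0 ≤ bot a (i.succ, k) then lft a (k - β i) (r i)
    else lft a (k - β' i) (r i) := fun i k => rfl
  have hsh : ∀ (k : ℤ) i, lft a k (r i) =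
      (lft a 0 (r i)).map (fun E => ((E.1.1, E.1.2 + k), E.2)) := fun k i => by
    rw [← lft_shift, zero_add]
  have htop : ∀ (j : Fin (n + 1)) (x k : ℤ), top a (j, x + k) = top a (j, x) + k := by
    intros; simp only [top]; ring
  have hbot : ∀ (j : Fin (n + 1)) (x k : ℤ), bot a (j, x + k) = bot a (j, x) + k := by
    intros; simp only [bot]; ring
  have hbt : ∀ e, bot a e ≤ top a e := by
    intro e; simp only [bot, top]
    have := min_le_left 0 (a e.1); have := le_max_left 0 (a e.1); linarith
  -- every edge of the relator has bottom at least m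
  have hm : ∀ i, ∀ x ∈ lft a 0 (r i), x.1.1 ≠ 0 → m i ≤ bot a x.1 := by
    intro i x hx hx0
    rw [hAB' i] at hx
    rcases List.mem_append.1 hx with hx | hx
    · exact (hlt' i x (by simp [hx]) hx0).le
    rcases List.mem_cons.1 hx with hx | hx
    · rw [hx]
    · exact (hlt' i x (by simp [hx]) hx0).le
  have hmβ : ∀ i, m i ≤ bot a (i.succ, β i) := fun i => by
    have := hm i ((i.succ, β i), s i) (by rw [hAB i]; simp) (by simp)
    exact this
  have hμ0 : ∀ k : ℤ, μ (0, k) = toLex (0, 0) := fun k => by simp [μ]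
  have hLW : ∀ e ∉ W, ∃ A s B, L e = A ++ (e, s) :: B ∧ ∀ x ∈ A ++ B, μ x.1 < μ e := by
    rintro ⟨j, k⟩ he
    induction j using Fin.cases with
    | zero => exact ⟨[], true, [], by rw [hL0]; rfl, by simp⟩
    | succ i =>
      rw [hLs]
      by_cases hb : 0 ≤ bot a (i.succ, k)
      · have hk : 0 ≤ k - β i + m i := by
          by_contra hc
          exact he ⟨hb, i, rfl, not_le.1 hc⟩
        rw [if_pos hb, hsh, hAB, List.map_append, List.map_cons]
        refine ⟨(A i).map (fun E => ((E.1.1, E.1.2 + (k - β i)), E.2)), s i,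
          (B i).map (fun E => ((E.1.1, E.1.2 + (k - β i)), E.2)), ?_, ?_⟩
        · simp only [add_sub_cancel]
        · intro x hx
          rw [← List.map_append, List.mem_map] at hx
          obtain ⟨⟨⟨j, x⟩, b⟩, hz, rfl⟩ := hx
          simp only
          have hμe : μ (i.succ, k) = toLex (1, (top a (i.succ, k)).toNat) := by
            simp only [μ]; rw [if_neg (Fin.succ_ne_zero i), if_pos hb]
          rw [hμe]
          by_cases hj : j = 0
          · rw [hj, hμ0, Prod.Lex.toLex_lt_toLex]; simp
          · have h3 := hlt i _ hz hj
            have h4 := hm i ((j, x), b) (by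
              rw [hAB]; rw [List.mem_append] at hz; simp; tauto) hj
            simp only at h3 h4
            have h5 : 0 ≤ bot a (j, x + (k - β i)) := by rw [hbot]; linarith
            have h6 := hbt (j, x + (k - β i))
            simp only [μ]
            rw [if_neg hj, if_pos h5, Prod.Lex.toLex_lt_toLex]
            right
            refine ⟨rfl, ?_⟩
            simp only
            have e1 : top a (i.succ, k) = top a (i.succ, β i) + (k - β i) := by
              rw [← htop]; congr 2; ring
            rw [Int.toNat_lt_toNat] <;> rw [htop] at * <;> linarith
      · rw [if_neg hb, hsh, hAB', List.map_append, List.map_cons]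
        refine ⟨(A' i).map (fun E => ((E.1.1, E.1.2 + (k - β' i)), E.2)), s' i,
          (B' i).map (fun E => ((E.1.1, E.1.2 + (k - β' i)), E.2)), ?_, ?_⟩
        · simp only [add_sub_cancel]
        · intro x hx
          rw [← List.map_append, List.mem_map] at hx
          obtain ⟨⟨⟨j, x⟩, b⟩, hz, rfl⟩ := hx
          simp only
          have hμe : μ (i.succ, k) = toLex (2, (-bot a (i.succ, k)).toNat) := by
            simp only [μ]; rw [if_neg (Fin.succ_ne_zero i), if_neg hb]
          rw [hμe]
          by_cases hj : j = 0
          · rw [hj, hμ0, Prod.Lex.toLex_lt_toLex]; simp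
          · have h3 := hlt' i _ hz hj
            simp only at h3
            simp only [μ]
            rw [if_neg hj]
            split_ifs with h5
            · rw [Prod.Lex.toLex_lt_toLex]; simp
            · rw [Prod.Lex.toLex_lt_toLex]
              right
              refine ⟨rfl, ?_⟩
              simp only
              have e1 : bot a (i.succ, k) = bot a (i.succ, β' i) + (k - β' i) := by
                rw [← hbot]; congr 2; ring
              rw [hbot] at *
              rw [Int.toNat_lt_toNat] <;> linarith
  obtain ⟨E, hE, hu⟩ := triangular μ W L hLW
  refine ⟨W, hW, E, ?_, ?_⟩
  · intro i k
    by_cases hk : 0 ≤ m i + k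
    · have hb : 0 ≤ bot a (i.succ, β i + k) := by rw [hbot]; have := hmβ i; linarith
      have := hE (i.succ, β i + k) (by
        rintro ⟨_, i', hi', h⟩
        simp only [Fin.succ_inj] at hi'
        subst hi'
        simp only at h
        linarith)
      rw [hLs, if_pos hb] at this
      rwa [add_sub_cancel_left] at this
    · have hb : ¬ 0 ≤ bot a (i.succ, β' i + k) := by rw [hbot]; exact hk
      have := hE (i.succ, β' i + k) (by
        rintro ⟨h, _⟩
        exact hb h)
      rw [hLs, if_neg hb] at this
      rwa [add_sub_cancel_left] at this
  · intro H _ η h0 hη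
    refine hu H η ?_
    rintro ⟨j, k⟩ -
    induction j using Fin.cases with
    | zero => rw [hL0]; simp [ev_cons, h0]
    | succ i => rw [hLs]; split_ifs <;> exact hη _ _

end
end RD

namespace RD

lemma exists_ht_eq {n : ℕ} (a : Fin (n + 1) → ℤ) (h1 : ∃ w : RWord n, ht a w = 1) (k : ℤ) :
    ∃ w : RWord n, ht a w = k := by
  obtain ⟨w, hw⟩ := h1
  have hnat : ∀ m : ℕ, ∃ w : RWord n, ht a w = m := by
    intro m
    induction m with
    | zero => exact ⟨[], by simp⟩
    | succ m ih => obtain ⟨v, hv⟩ := ih; exact ⟨v ++ w, by simp [hv, hw]⟩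
  have hneg : ∀ v : RWord n, ht a (FreeGroup.invRev v) = - ht a v := by
    intro v
    induction v with
    | nil => simp
    | cons x v ih =>
      rw [show x :: v = [x] ++ v from rfl, FreeGroup.invRev_append, ht_append, ih, ht_append]
      rcases x with ⟨j, _ | _⟩ <;> simp [FreeGroup.invRev, st] <;> ring
  rcases Int.eq_nat_or_neg k with ⟨m, rfl | rfl⟩
  · exact hnat m
  · obtain ⟨v, hv⟩ := hnat m
    exact ⟨FreeGroup.invRev v, by rw [hneg, hv]⟩

theorem thmA {n : ℕ} (a : Fin (n + 1) → ℤ) (ha0 : a 0 ≠ 0) (hp : ∃ w : RWord n, ht a w = 1)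
    (r : Fin n → RWord n) (hr : ∀ i, ht a (r i) = 0)
    (h1 : ∀ i, TopC a 1 i.succ (r i)) (h2 : ∀ i, TopC (-a) 1 i.succ (r i)) :
    FreeByCyclic (PresentedGroup (relsOf r)) := by
  obtain ⟨ψ, hψ⟩ := exists_psi a r hr
  obtain ⟨W, hW, E, hE, hu⟩ := exists_label a r h1 h2
  obtain ⟨R, hR⟩ := exists_R a r hr E hE
  let q : RWord n → PresentedGroup (relsOf r) := fun w => PresentedGroup.mk _ (FreeGroup.mk w)
  have hq : ∀ u v, q (u ++ v) = q u * q v := fun u v => by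
    simp only [q, ← FreeGroup.mul_mk, map_mul]
  have hqr : ∀ i, q (r i) = 1 := fun i => PresentedGroup.one_of_mem ⟨i, rfl⟩
  choose s0 hs0 using exists_ht_eq a hp
  let s : ℤ → PresentedGroup (relsOf r) := fun k => if k = 0 then 1 else q (s0 k)
  have hs : ∀ k, ψ (s k) = Multiplicative.ofAdd k := by
    intro k
    simp only [s]
    split_ifs with h
    · rw [h, map_one, ofAdd_zero]
    · rw [hψ, hs0]
  let x : Fin (n + 1) → PresentedGroup (relsOf r) := fun j => q [(j, true)]
  have hx : ∀ j, ψ (x j) = Multiplicative.ofAdd (a j) := fun j => by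
    simp only [x, q, hψ]; simp [st]
  have hxi : ∀ j, q [(j, false)] = (x j)⁻¹ := fun j => by
    simp only [x, q, ← map_inv]
    rfl
  let τ : ℤ → PresentedGroup (relsOf r) := fun k => s (k % a 0) * x 0 ^ (k / a 0)
  have hτ0 : τ 0 = 1 := by simp [τ, s]
  have hτψ : ∀ k, ψ (τ k) = Multiplicative.ofAdd k := by
    intro k
    simp only [τ, map_mul, hs, map_zpow, hx, ← ofAdd_zsmul, ← ofAdd_add, smul_eq_mul]
    congr 1
    rw [mul_comm]
    exact Int.emod_add_mul_ediv k (a 0)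
  have hτx : ∀ k, τ k * x 0 = τ (k + a 0) := by
    intro k
    simp only [τ]
    rw [Int.add_emod_right, Int.add_ediv_of_dvd_right dvd_rfl, Int.ediv_self ha0, zpow_add,
      zpow_one, mul_assoc]
  let η : Fin (n + 1) × ℤ → PresentedGroup (relsOf r) := fun e =>
    τ e.2 * x e.1 * (τ (e.2 + a e.1))⁻¹
  have hη0 : ∀ k, η (0, k) = 1 := fun k => by simp [η, hτx]
  have hev : ∀ (w : RWord n) h, ev η (lft a h w) = τ h * q w * (τ (h + ht a w))⁻¹ := by
    intro w
    induction w with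
    | nil => intro h; simp [q, ← FreeGroup.one_eq_mk]
    | cons y w ih =>
      intro h
      rw [lft_cons, ev_cons, ih, ht_cons, show y :: w = [y] ++ w from rfl, hq, ← add_assoc]
      rcases y with ⟨j, _ | _⟩
      · rw [hxi]
        simp [η, st, mul_assoc, sub_eq_add_neg]
      · change _ = τ h * (x j * q w) * _
        simp [η, st, mul_assoc]
  have hηr : ∀ i k, ev η (lft a k (r i)) = 1 := fun i k => by
    rw [hev, hqr, hr]; simp
  have hu' := hu _ η hη0 hηr
  let f : FreeGroup W →* PresentedGroup (relsOf r) := FreeGroup.lift (fun w : W => η w)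
  have hfR : ∀ g, ψ g = 1 → f (R g 0) = g := by
    intro g hg
    obtain ⟨w, rfl⟩ := exists_word g
    rw [hψ, ofAdd_eq_one] at hg
    rw [hR, map_ev]
    simp only [f, hu']
    rw [show (fun i => η i) = η from rfl, hev, hg, add_zero, hτ0]
    simp [q]
  have hfψ : ∀ y, ψ (f y) = 1 := by
    have : ψ.comp f = 1 := by
      ext w
      simp only [f, MonoidHom.comp_apply, FreeGroup.lift_apply_of, η, map_mul, map_inv, hτψ, hx]
      simp
    intro y
    exact DFunLike.congr_fun this y
  have hrange : f.range = ψ.ker := by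
    ext g
    constructor
    · rintro ⟨y, rfl⟩; exact hfψ y
    · intro hg; exact ⟨_, hfR g hg⟩
  refine ⟨ψ.ker, inferInstance, ?_, ?_, ψ, ?_, rfl⟩
  · let ρ : ψ.ker →* FreeGroup W :=
      { toFun := fun g => R g 0
        map_one' := by
          have := hR [] 0
          simpa [← FreeGroup.one_eq_mk] using this
        map_mul' := by
          rintro ⟨g, hg⟩ ⟨g', hg'⟩
          obtain ⟨w, rfl⟩ := exists_word g
          obtain ⟨w', rfl⟩ := exists_word g'
          rw [MonoidHom.mem_ker, hψ, ofAdd_eq_one] at hg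
          simp only [Subgroup.coe_mul, ← map_mul, FreeGroup.mul_mk, hR, lft_append, ev_append, hg,
            add_zero] }
    have hinj : Function.Injective ρ := by
      intro g g' h
      apply Subtype.ext
      rw [← hfR g g.2, ← hfR g' g'.2]
      exact congrArg f h
    have e := MonoidHom.ofInjective hinj
    obtain ⟨⟨ι, ⟨b⟩⟩⟩ := (inferInstance : IsFreeGroup ρ.range)
    exact (b.map e.symm).isFreeGroup
  · rw [← hrange]
    haveI : Finite W := hW
    haveI : Group.FG (FreeGroup W) := inferInstance
    exact Group.fg_range f
  · intro k
    exact ⟨s k.toAdd, by rw [hs]; rfl⟩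

end RD

namespace RD
open Polynomial

/-- signed sum over the edges of a lifted word lying over the generator `j` -/
def cs {n : ℕ} {R : Type} [CommRing R] (L : List ((Fin (n + 1) × ℤ) × Bool)) (j : Fin (n + 1))
    (g : Fin (n + 1) × ℤ → R) : R :=
  (L.map fun E => if E.1.1 = j then (if E.2 then g E.1 else - g E.1) else 0).sum

@[simp] lemma cs_nil {n : ℕ} {R : Type} [CommRing R] (j : Fin (n + 1))
    (g : Fin (n + 1) × ℤ → R) : cs [] j g = 0 := rfl
lemma cs_cons {n : ℕ} {R : Type} [CommRing R] (E) (L : List ((Fin (n + 1) × ℤ) × Bool))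
    (j : Fin (n + 1)) (g : Fin (n + 1) × ℤ → R) :
    cs (E :: L) j g = (if E.1.1 = j then (if E.2 then g E.1 else - g E.1) else 0) + cs L j g := by
  simp [cs]
lemma map_cs {n : ℕ} {R S : Type} [CommRing R] [CommRing S] (f : R →+* S)
    (L : List ((Fin (n + 1) × ℤ) × Bool)) (j : Fin (n + 1)) (g : Fin (n + 1) × ℤ → R) :
    f (cs L j g) = cs L j (fun e => f (g e)) := by
  induction L with
  | nil => simp
  | cons E L ih =>
    rw [cs_cons, cs_cons, map_add, ih]; congr 1
    split_ifs <;> simp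
lemma cs_mul {n : ℕ} {R : Type} [CommRing R] (c : R) (L : List ((Fin (n + 1) × ℤ) × Bool))
    (j : Fin (n + 1)) (g : Fin (n + 1) × ℤ → R) :
    cs L j (fun e => c * g e) = c * cs L j g := by
  induction L with
  | nil => simp
  | cons E L ih =>
    rw [cs_cons, cs_cons, mul_add, ih]; congr 1
    split_ifs <;> simp
lemma cs_congr {n : ℕ} {R : Type} [CommRing R] (L : List ((Fin (n + 1) × ℤ) × Bool))
    (j : Fin (n + 1)) (g g' : Fin (n + 1) × ℤ → R) (h : ∀ E ∈ L, E.1.1 = j → g E.1 = g' E.1) :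
    cs L j g = cs L j g' := by
  induction L with
  | nil => simp
  | cons E L ih =>
    rw [cs_cons, cs_cons, ih (fun E hE => h E (by simp [hE]))]; congr 1
    by_cases h1 : E.1.1 = j
    · rw [h E (by simp) h1]
    · simp [h1]
lemma cs_filter {n : ℕ} {R : Type} [CommRing R] (L : List ((Fin (n + 1) × ℤ) × Bool))
    (j : Fin (n + 1)) (g : Fin (n + 1) × ℤ → R) (p : (Fin (n + 1) × ℤ) × Bool → Bool)
    (h : ∀ E ∈ L, E.1.1 = j → p E = false → g E.1 = 0) :
    cs L j g = cs (L.filter p) j g := by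
  induction L with
  | nil => simp
  | cons E L ih =>
    rw [cs_cons, ih (fun E hE => h E (by simp [hE])), List.filter_cons]
    split_ifs with h1 h2 h3 h4 <;> simp_all [cs_cons]
lemma cs_replicate {n : ℕ} {R : Type} [CommRing R] (e : ℕ) (E)
    (j : Fin (n + 1)) (g : Fin (n + 1) × ℤ → R) :
    cs (List.replicate e E) j g =
      (if E.1.1 = j then (if E.2 then (e : R) * g E.1 else - (e * g E.1)) else 0) := by
  simp only [cs, List.map_replicate, List.sum_replicate]
  split_ifs <;> simp
lemma cs_map_neg {n : ℕ} {R : Type} [CommRing R] (L : List ((Fin (n + 1) × ℤ) × Bool))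
    (j : Fin (n + 1)) (g : Fin (n + 1) × ℤ → R) (F : ℤ → ℤ) :
    cs (L.map (fun E => ((E.1.1, F E.1.2), E.2))) j g = cs L j (fun e => g (e.1, F e.2)) := by
  simp [cs, Function.comp_def]

lemma polyTop {n : ℕ} (a : Fin (n + 1) → ℤ) (e : ℕ) (r : Fin n → RWord n)
    (h1 : ∀ i, TopC a e i.succ (r i)) :
    ∃ (T : Fin n → ℤ) (Q : Matrix (Fin n) (Fin n) ℤ[X]),
      (∀ i j (z : ℂ), z ≠ 0 → aeval z (Q i j) =
        z ^ (T i) * cs (lft a 0 (r i)) j.succ (fun E => z ^ (- top a E))) ∧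
      (Q.det.eval 0).natAbs = e ^ n := by
  choose β s hf _ using h1
  let T : Fin n → ℤ := fun i => top a (i.succ, β i)
  let Q : Matrix (Fin n) (Fin n) ℤ[X] := Matrix.of fun i j =>
    cs (lft a 0 (r i)) j.succ (fun E => (X : ℤ[X]) ^ (T i - top a E).toNat)
  have hT : ∀ i, ∀ E ∈ lft a 0 (r i), E.1.1 ≠ 0 → top a E.1 ≤ T i := by
    intro i E hE h0
    by_contra hc
    have : E ∈ (lft a 0 (r i)).filter
        (fun E => decide (E.1.1 ≠ 0 ∧ top a (i.succ, β i) ≤ top a E.1)) := by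
      rw [List.mem_filter]; exact ⟨hE, by simpa [h0] using (not_le.1 hc).le⟩
    rw [hf, List.mem_replicate] at this
    rw [this.2] at hc
    exact hc le_rfl
  refine ⟨T, Q, ?_, ?_⟩
  · intro i j z hz
    simp only [Q, Matrix.of_apply]
    rw [← AlgHom.coe_toRingHom, map_cs, ← cs_mul]
    apply cs_congr
    intro E hE hj
    have := hT i E hE (by rw [hj]; exact Fin.succ_ne_zero j)
    simp only [AlgHom.coe_toRingHom, map_pow, aeval_X]
    rw [← zpow_natCast, Int.toNat_of_nonneg (by linarith), sub_eq_add_neg, zpow_add₀ hz]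
  · have hQ0 : (evalRingHom (0 : ℤ)).mapMatrix Q =
        Matrix.diagonal (fun i => if s i then (e : ℤ) else - e) := by
      ext i j
      simp only [RingHom.mapMatrix_apply, Matrix.map_apply, Q, Matrix.of_apply]
      rw [map_cs, cs_filter _ _ _ _ ?_, hf, cs_replicate, Matrix.diagonal_apply]
      · simp only [Fin.succ_inj]
        by_cases hij : i = j
        · simp [hij, T]
        · simp [hij]
      · intro E hE hj hp
        have h0 : E.1.1 ≠ 0 := by rw [hj]; exact Fin.succ_ne_zero j
        simp only [h0, ne_eq, not_false_eq_true, true_and, decide_eq_false_iff_not, not_le] at hp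
        simp only [coe_evalRingHom, eval_pow, eval_X]
        apply zero_pow
        have : 0 < T i - top a E.1 := by simp only [T]; linarith
        omega
    have : Q.det.eval 0 = ((evalRingHom (0 : ℤ)).mapMatrix Q).det := by
      rw [← RingHom.map_det]; rfl
    rw [this, hQ0, Matrix.det_diagonal, ← Int.natAbsHom_apply, map_prod]
    simp only [Int.natAbsHom_apply]
    rw [Finset.prod_congr rfl (g := fun _ => e) (fun i _ => by split_ifs <;> simp)]
    simp

lemma poly_rev (p q : ℤ[X]) (hp : p ≠ 0) (hq : q.eval 0 ≠ 0) (N : ℤ)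
    (h : ∀ z : ℂ, z ≠ 0 → aeval z⁻¹ q = z ^ N * aeval z p) : p.leadingCoeff = q.eval 0 := by
  have hinj : Function.Injective (Int.castRingHom ℂ) := Int.cast_injective
  have h1 : ∀ y : ℂ, y ≠ 0 → aeval y q = y ^ (-(N + p.natDegree)) * aeval y p.reverse := by
    intro y hy
    have := h y⁻¹ (inv_ne_zero hy)
    rw [inv_inv] at this
    rw [this]
    letI := invertibleOfNonzero (inv_ne_zero hy)
    have h2 := eval₂_reverse_mul_pow (Int.castRingHom ℂ) (y⁻¹) p
    simp only [invOf_eq_inv, inv_inv] at h2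
    rw [aeval_def, aeval_def, algebraMap_int_eq, ← h2, zpow_neg, ← inv_zpow, zpow_add₀ (inv_ne_zero hy),
      zpow_natCast]
    ring
  have hext : ∀ f g : ℤ[X], (∀ y : ℂ, y ≠ 0 → aeval y f = aeval y g) → f = g := by
    intro f g hfg
    apply map_injective _ hinj
    apply eq_of_infinite_eval_eq
    refine (Set.Infinite.mono (s := {0}ᶜ) ?_ (Set.finite_singleton (0:ℂ)).infinite_compl)
    intro y hy
    simp only [Set.mem_ofPred_eq, eval_map]
    exact hfg y hy
  have hr0 : p.reverse.eval 0 = p.leadingCoeff := by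
    rw [← coeff_zero_eq_eval_zero, coeff_zero_reverse]
  rcases Int.eq_nat_or_neg (-(N + p.natDegree)) with ⟨m, hm | hm⟩
  · have : q = X ^ m * p.reverse := hext _ _ fun y hy => by
      rw [h1 y hy, hm]; simp
    rcases Nat.eq_zero_or_pos m with h0 | h0
    · rw [this, h0]; simp [hr0]
    · exact absurd (by rw [this]; simp [h0.ne']) hq
  · have : X ^ m * q = p.reverse := hext _ _ fun y hy => by
      rw [map_mul, h1 y hy, hm]; simp [hy]
    rcases Nat.eq_zero_or_pos m with h0 | h0
    · rw [← hr0, ← this, h0]; simp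
    · exfalso
      apply leadingCoeff_ne_zero.2 hp
      rw [← hr0, ← this]; simp [h0.ne']

lemma exists_root (p : ℤ[X]) (h0 : (p.eval 0).natAbs = 1) (h2 : 2 ≤ p.leadingCoeff.natAbs) :
    ∃ z : ℂ, aeval z p = 0 ∧ ¬ IsIntegral ℤ z := by
  by_contra! hc
  have hp : p ≠ 0 := by rintro rfl; simp at h2
  have hinj : Function.Injective (algebraMap ℤ ℂ) := Int.cast_injective
  let P := p.map (algebraMap ℤ ℂ)
  have hsp := IsAlgClosed.splits P
  have h3 := hsp.eq_prod_roots
  have hint : IsIntegral ℤ ((P.roots.map (fun x => X - C x)).prod.eval 0) := by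
    rw [eval_multiset_prod]
    apply IsIntegral.multiset_prod
    intro y hy
    simp only [Multiset.map_map, Multiset.mem_map, Function.comp] at hy
    obtain ⟨x, hx, rfl⟩ := hy
    simp only [eval_sub, eval_X, eval_C, zero_sub]
    apply IsIntegral.neg
    apply hc
    have := (mem_roots'.1 hx).2
    rwa [IsRoot, eval_map] at this
  have h4 : ((p.eval 0 : ℤ) : ℂ) = (p.leadingCoeff : ℂ) *
      ((P.roots.map (fun x => X - C x)).prod.eval 0) := by
    have h5 := congrArg (eval 0) h3
    rw [eval_mul, eval_C] at h5
    have h6 : P.leadingCoeff = (p.leadingCoeff : ℂ) := leadingCoeff_map_of_injective hinj p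
    rw [h6] at h5
    rw [← h5]
    simp [P, eval_map, coeff_zero_eq_eval_zero]
  set w := (P.roots.map (fun x => X - C x)).prod.eval 0
  have hl : (p.leadingCoeff : ℂ) ≠ 0 := by
    exact_mod_cast leadingCoeff_ne_zero.2 hp
  have h5 : w = algebraMap ℚ ℂ (((p.eval 0 : ℤ) : ℚ) / p.leadingCoeff) := by
    simp only [map_div₀]
    rw [eq_div_iff (by simpa using hl)]
    simp only [eq_ratCast, Rat.cast_intCast]
    rw [h4]; ring
  rw [h5] at hint
  rw [isIntegral_algebraMap_iff (algebraMap ℚ ℂ).injective] at hint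
  obtain ⟨k, hk⟩ := IsIntegrallyClosed.isIntegral_iff.1 hint
  have hl' : (p.leadingCoeff : ℚ) ≠ 0 := by
    exact_mod_cast leadingCoeff_ne_zero.2 hp
  rw [eq_div_iff hl'] at hk
  have : k * p.leadingCoeff = p.eval 0 := by
    simp only [algebraMap_int_eq, eq_intCast] at hk
    exact_mod_cast hk
  have h7 := congrArg Int.natAbs this
  rw [Int.natAbs_mul, h0] at h7
  have := Nat.eq_one_of_mul_eq_one_left h7
  omega

end RD

namespace RD
open Polynomial

lemma toAdd_ev {I : Type} (g : I → ℂ) (L : List (I × Bool)) :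
    (ev (fun i => Multiplicative.ofAdd (g i)) L).toAdd =
      (L.map (fun x => if x.2 then g x.1 else - g x.1)).sum := by
  induction L with
  | nil => simp
  | cons x L ih =>
    rw [ev_cons, toAdd_mul, ih, List.map_cons, List.sum_cons]
    congr 1

lemma sum_eq_cs {n : ℕ} (g : Fin (n + 1) × ℤ → ℂ) (v : Fin n → ℂ)
    (L : List ((Fin (n + 1) × ℤ) × Bool)) :
    (L.map (fun x => if x.2 then g x.1 * (Fin.cons 0 v : Fin (n + 1) → ℂ) x.1.1
      else - (g x.1 * (Fin.cons 0 v : Fin (n + 1) → ℂ) x.1.1))).sum =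
      ∑ j : Fin n, cs L j.succ g * v j := by
  induction L with
  | nil => simp
  | cons E L ih =>
    rw [List.map_cons, List.sum_cons, ih]
    simp only [cs_cons, add_mul, Finset.sum_add_distrib]
    congr 1
    rcases E with ⟨⟨j, k⟩, b⟩
    induction j using Fin.cases with
    | zero =>
      rw [Finset.sum_eq_zero]
      · simp
      · intro j _
        rw [if_neg (Fin.succ_ne_zero j).symm, zero_mul]
    | succ i =>
      rw [Finset.sum_eq_single i]
      · simp only [if_true, Fin.cons_succ]; split_ifs <;> simp
      · intro j _ hj
        rw [if_neg (by simpa using hj.symm), zero_mul]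
      · simp

theorem thmB {n : ℕ} (hn : 1 ≤ n) (a : Fin (n + 1) → ℤ) (ha0 : a 0 ≠ 0)
    (hp : ∃ w : RWord n, ht a w = 1)
    (r : Fin n → RWord n) (hr : ∀ i, ht a (r i) = 0)
    (hun : ∀ a' : Fin (n + 1) → ℤ, (∀ i, ht a' (r i) = 0) → ∀ j, a 0 * a' j = a' 0 * a j)
    (h1 : ∀ i, TopC a 2 i.succ (r i)) (h2 : ∀ i, TopC (-a) 1 i.succ (r i)) :
    ¬ FreeByCyclic (PresentedGroup (relsOf r)) := by
  obtain ⟨ψ, hψ⟩ := exists_psi a r hr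
  rintro ⟨N, -, -, hfg, ψ', hψ's, hN⟩
  -- the two kernels agree
  have hker : ∀ w : RWord n, PresentedGroup.mk _ (FreeGroup.mk w) ∈ N ↔ ht a w = 0 := by
    let a' : Fin (n + 1) → ℤ := fun j => (ψ' (PresentedGroup.of j)).toAdd
    have hψ' : ∀ w : RWord n,
        ψ' (PresentedGroup.mk _ (FreeGroup.mk w)) = Multiplicative.ofAdd (ht a' w) := by
      intro w
      induction w with
      | nil => simp [← FreeGroup.one_eq_mk]
      | cons x w ih =>
        rw [show x :: w = [x] ++ w from rfl, ← FreeGroup.mul_mk, map_mul, map_mul, ih, ht_append,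
          ofAdd_add]
        congr 1
        rcases x with ⟨j, _ | _⟩
        · have : (FreeGroup.mk [(j, false)] : FreeGroup (Fin (n + 1))) = (FreeGroup.of j)⁻¹ := rfl
          rw [this, map_inv, map_inv]
          simp [st, a']; rfl
        · simp [st, a']; rfl
    have hr' : ∀ i, ht a' (r i) = 0 := by
      intro i
      have h3 : PresentedGroup.mk (relsOf r) (FreeGroup.mk (r i)) = 1 :=
        PresentedGroup.one_of_mem ⟨i, rfl⟩
      have := hψ' (r i)
      rw [h3, map_one, eq_comm, ofAdd_eq_one] at this
      exact this
    have hj := hun a' hr'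
    have hprop : ∀ w : RWord n, a 0 * ht a' w = a' 0 * ht a w := by
      intro w
      induction w with
      | nil => simp
      | cons x w ih =>
        rw [ht_cons, ht_cons, mul_add, mul_add, ih]
        congr 1
        have := hj x.1
        simp only [st]
        split_ifs <;> linarith
    have ha'0 : a' 0 ≠ 0 := by
      intro h0
      obtain ⟨g, hg⟩ := hψ's (Multiplicative.ofAdd 1)
      obtain ⟨w, rfl⟩ := exists_word g
      rw [hψ'] at hg
      have h3 := Multiplicative.ofAdd.injective hg
      have := hprop w
      rw [h0, h3] at this
      simp at this
      exact ha0 this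
    intro w
    rw [← hN, MonoidHom.mem_ker, hψ', ofAdd_eq_one]
    have := hprop w
    constructor
    · intro h; rw [h, mul_zero] at this
      exact (mul_eq_zero.1 this.symm).resolve_left ha'0
    · intro h; rw [h, mul_zero] at this
      exact (mul_eq_zero.1 this).resolve_left ha0
  -- polynomials
  obtain ⟨T', Q', hQ', hq'⟩ := polyTop a 2 r h1
  obtain ⟨T, Q, hQ, hq⟩ := polyTop (-a) 1 r h2
  have hQ1 : ∀ i j (z : ℂ), z ≠ 0 → aeval z (Q i j) =
        z ^ (T i) * cs (lft a 0 (r i)) j.succ (fun E => z ^ (bot a E)) := by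
    intro i j z hz
    rw [hQ i j z hz]
    have := lft_neg a 0 (r i)
    rw [neg_zero] at this
    rw [this, cs_map_neg _ _ _ (fun k => -k)]
    simp only [top_neg, neg_neg]
  have hrel : ∀ i j (z : ℂ), z ≠ 0 → aeval z⁻¹ (Q' i j) =
      z ^ (-T' i - T i) * (z ^ |a j.succ| * aeval z (Q i j)) := by
    intro i j z hz
    rw [hQ' i j z⁻¹ (inv_ne_zero hz), hQ1 i j z hz]
    have : cs (lft a 0 (r i)) j.succ (fun E => z⁻¹ ^ (- top a E)) =
        z ^ |a j.succ| * cs (lft a 0 (r i)) j.succ (fun E => z ^ (bot a E)) := by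
      rw [← cs_mul]
      apply cs_congr
      intro E _ hE
      rw [inv_zpow', neg_neg, ← zpow_add₀ hz]
      congr 1
      simp only [top, bot, hE]
      rcases le_total 0 (a j.succ) with h | h
      · simp [h, abs_of_nonneg]; ring
      · simp [h, abs_of_nonpos]
    rw [this, sub_eq_add_neg, zpow_add₀ hz, inv_zpow', zpow_neg z (T i)]
    field_simp
  have hdet : ∀ z : ℂ, z ≠ 0 → aeval z⁻¹ Q'.det =
      z ^ (∑ i, (-T' i - T i) + ∑ j : Fin n, |a j.succ|) * aeval z Q.det := by
    intro z hz
    rw [← AlgHom.coe_toRingHom, ← AlgHom.coe_toRingHom, RingHom.map_det, RingHom.map_det]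
    have : (RingHom.mapMatrix (aeval z⁻¹ : ℤ[X] →ₐ[ℤ] ℂ).toRingHom) Q' =
        Matrix.of fun i j => z ^ (-T' i - T i) * (Matrix.of fun i j => z ^ |a (Fin.succ j)| *
          (RingHom.mapMatrix (aeval z : ℤ[X] →ₐ[ℤ] ℂ).toRingHom) Q i j) i j := by
      ext i j
      exact hrel i j z hz
    erw [this]
    rw [Matrix.det_mul_column, Matrix.det_mul_row, zpow_add₀ hz]
    have hpr : ∀ f : Fin n → ℤ, ∏ i, z ^ f i = z ^ ∑ i, f i := by
      intro f
      induction (Finset.univ : Finset (Fin n)) using Finset.induction_on with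
      | empty => simp
      | insert x s hx ih => rw [Finset.prod_insert hx, Finset.sum_insert hx, ih, zpow_add₀ hz]
    rw [hpr, hpr, mul_assoc]
    rfl
  rw [one_pow] at hq
  have hQne : Q.det ≠ 0 := by intro h; rw [h] at hq; simp at hq
  have hlead := poly_rev Q.det Q'.det hQne (by
    intro h; rw [h] at hq'
    have := pow_pos (show 0 < 2 by norm_num) n
    simp at hq'
    omega) _ hdet
  obtain ⟨z, hz, hzint⟩ := exists_root Q.det hq (by
    rw [hlead, hq']
    calc 2 = 2 ^ 1 := rfl
      _ ≤ 2 ^ n := Nat.pow_le_pow_right (by norm_num) hn)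
  have hz0 : z ≠ 0 := by rintro rfl; exact hzint isIntegral_zero
  have hdz : ((aeval z : ℤ[X] →ₐ[ℤ] ℂ).toRingHom.mapMatrix Q).det = 0 := by
    rw [← RingHom.map_det]; exact hz
  obtain ⟨v, hv0, hv⟩ := Matrix.exists_mulVec_eq_zero_iff.2 hdz
  let g : Fin (n + 1) × ℤ → ℂ := fun e => z ^ bot a e * (Fin.cons 0 v : Fin (n + 1) → ℂ) e.1
  let E : Fin (n + 1) × ℤ → Multiplicative ℂ := fun e => Multiplicative.ofAdd (g e)
  have hshift : ∀ (w : RWord n) k, (ev E (lft a k w)).toAdd = z ^ k * (ev E (lft a 0 w)).toAdd := by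
    intro w k
    rw [toAdd_ev, toAdd_ev]
    have := lft_shift a 0 k w
    rw [zero_add] at this
    rw [this, List.map_map, ← List.sum_map_mul_left]
    congr 1
    apply List.map_congr_left
    intro x _
    simp only [Function.comp, g, bot]
    have : x.1.2 + k + min 0 (a x.1.1) = k + (x.1.2 + min 0 (a x.1.1)) := by ring
    rw [this, zpow_add₀ hz0]
    split_ifs <;> ring
  have hE : ∀ i k, ev E (lft a k (r i)) = 1 := by
    intro i k
    apply Multiplicative.toAdd.injective
    rw [hshift, toAdd_ev]
    simp only [g]
    rw [sum_eq_cs (fun e => z ^ bot a e) v]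
    have h3 := congrFun hv i
    simp only [Matrix.mulVec, dotProduct, Pi.zero_apply] at h3
    have h4 : ∀ j, cs (lft a 0 (r i)) (Fin.succ j) (fun e => z ^ bot a e) * v j =
        z ^ (-T i) * ((aeval z : ℤ[X] →ₐ[ℤ] ℂ).toRingHom.mapMatrix Q i j * v j) := by
      intro j
      have : (aeval z : ℤ[X] →ₐ[ℤ] ℂ).toRingHom.mapMatrix Q i j = aeval z (Q i j) := rfl
      rw [this, hQ1 i j z hz0, zpow_neg]
      field_simp
    rw [Finset.sum_congr rfl (fun j _ => h4 j), ← Finset.mul_sum, h3]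
    simp
  obtain ⟨R, hR⟩ := exists_R a r hr E hE
  let ρ : N →* Multiplicative ℂ :=
    { toFun := fun g => R g 0
      map_one' := by
        have := hR [] 0
        simpa [← FreeGroup.one_eq_mk] using this
      map_mul' := by
        rintro ⟨g, hg⟩ ⟨g', hg'⟩
        obtain ⟨w, rfl⟩ := exists_word g
        obtain ⟨w', rfl⟩ := exists_word g'
        rw [hker] at hg
        simp only [Subgroup.coe_mul, ← map_mul, FreeGroup.mul_mk, hR, lft_append, ev_append, hg,
          add_zero] }
  have hρ : ∀ w (hw : PresentedGroup.mk _ (FreeGroup.mk w) ∈ N),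
      ρ ⟨_, hw⟩ = ev E (lft a 0 w) := fun w hw => hR w 0
  have hfgr : Group.FG ρ.range := Group.fg_range ρ
  let A : AddSubgroup ℂ := Subgroup.toAddSubgroup' ρ.range
  have hA : ∀ c, c ∈ A ↔ ∃ y, ρ y = Multiplicative.ofAdd c := fun c => Iff.rfl
  have hAfg : A.FG := by
    rw [AddSubgroup.fg_iff_mul_fg]
    exact (Group.fg_iff_subgroup_fg ρ.range).1 hfgr
  let M : Submodule ℤ ℂ := A.toIntSubmodule
  have hM : M.FG := by
    rw [Submodule.fg_iff_addSubgroup_fg]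
    exact hAfg
  have hMA : ∀ c, c ∈ M ↔ c ∈ A := fun c => Iff.rfl
  apply hzint
  obtain ⟨j, hj⟩ : ∃ j, v j ≠ 0 := by
    by_contra! h; exact hv0 (funext h)
  refine isIntegral_of_smul_mem_submodule M ?_ hM z ?_
  · -- nonzero
    let w : RWord n := [(0, true), (j.succ, true), (0, false), (j.succ, false)]
    have hw : ht a w = 0 := by simp [w, st]
    have hc : (ρ ⟨_, (hker w).2 hw⟩).toAdd ∈ M := (hMA _).2 ((hA _).2 ⟨_, rfl⟩)
    have hne : (ρ ⟨_, (hker w).2 hw⟩).toAdd ≠ 0 := by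
      rw [hρ, toAdd_ev]
      have h5 : z ^ a 0 ≠ 1 := by
        intro h
        apply hzint
        have h6 : z ^ (a 0).natAbs = 1 := by
          rcases Int.natAbs_eq (a 0) with h7 | h7
          · rw [h7, zpow_natCast] at h; exact h
          · rw [h7, zpow_neg, zpow_natCast, inv_eq_one] at h; exact h
        refine IsIntegral.of_pow (Int.natAbs_pos.2 ha0) ?_
        rw [h6]; exact isIntegral_one
      have h6 : (List.map (fun x => if x.2 = true then g x.1 else -g x.1) (lft a 0 w)).sum =
          z ^ (min 0 (a j.succ)) * v j * (z ^ a 0 - 1) := by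
        simp [w, lft_cons, g, st, bot, zpow_add₀ hz0]
        ring
      rw [h6]
      exact mul_ne_zero (mul_ne_zero (zpow_ne_zero _ hz0) hj) (sub_ne_zero.2 h5)
    intro h
    rw [h] at hc
    exact hne ((Submodule.mem_bot ℤ).1 hc)
  · intro c hc
    rw [hMA, hA] at hc ⊢
    obtain ⟨⟨y, hy⟩, hyc⟩ := hc
    obtain ⟨w, rfl⟩ := exists_word y
    have hw := (hker w).1 hy
    obtain ⟨t, ht1⟩ := hp
    obtain ⟨t', ht'⟩ := exists_ht_eq a ⟨t, ht1⟩ (-1)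
    rw [hρ] at hyc
    -- use the inverse word of t
    have hinvt : ht a (FreeGroup.invRev t) = -1 := by
      have h8 : ψ (PresentedGroup.mk _ (FreeGroup.mk (t ++ FreeGroup.invRev t))) = 1 := by
        rw [← FreeGroup.mul_mk, ← FreeGroup.inv_mk, mul_inv_cancel, map_one, map_one]
      rw [hψ, ofAdd_eq_one, ht_append, ht1] at h8
      linarith
    have hww : ht a (t ++ (w ++ FreeGroup.invRev t)) = 0 := by
      simp [ht1, hw, hinvt]
    refine ⟨⟨_, (hker _).2 hww⟩, ?_⟩
    rw [hρ]
    have h9 : ev E (lft a 0 (t ++ FreeGroup.invRev t)) = 1 := by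
      rw [← hR, ← FreeGroup.mul_mk, ← FreeGroup.inv_mk, mul_inv_cancel, FreeGroup.one_eq_mk, hR]
      simp
    rw [lft_append, ev_append, ht1] at h9
    rw [lft_append, lft_append, ev_append, ev_append, ht1, hw, add_zero]
    have h10 : ev E (lft a (0 + 1) w) = Multiplicative.ofAdd (z • c) := by
      apply Multiplicative.toAdd.injective
      rw [zero_add, hshift, hyc]
      simp
    rw [h10, mul_left_comm, h9, mul_one]

end RD

namespace RD

def RR {n : ℕ} (x y : Fin (n + 1) × Bool) : Prop := x.1 = y.1 → x.2 = y.2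

lemma cr_iff {n : ℕ} (w : RWord n) : CyclicallyReduced w ↔
    List.IsChain RR w ∧ ∀ x ∈ w.getLast?, ∀ y ∈ w.head?, RR x y := by
  unfold CyclicallyReduced
  rw [← FreeGroup.isReduced_iff_reduce_eq]
  show List.IsChain RR (w ++ w) ↔ _
  rw [List.isChain_append]
  tauto

lemma cr_rot' {n : ℕ} (A B : RWord n) (h : CyclicallyReduced (A ++ B)) :
    CyclicallyReduced (B ++ A) := by
  rcases A.eq_nil_or_concat with rfl | ⟨A', u, rfl⟩
  · simpa using h
  rcases B with _ | ⟨v, B⟩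
  · simpa using h
  rw [cr_iff] at h ⊢
  obtain ⟨h1, h2⟩ := h
  rw [List.isChain_append] at h1 ⊢
  obtain ⟨h3, h4, h5⟩ := h1
  refine ⟨⟨h4, h3, ?_⟩, ?_⟩
  · intro x hx y hy
    refine h2 x ?_ y ?_
    · rw [List.getLast?_append]; rw [hx]; rfl
    · rw [List.head?_append]; rw [hy]; rfl
  · intro x hx y hy
    refine h5 x ?_ y ?_
    · rw [List.getLast?_append] at hx; simpa using hx
    · simpa using hy

lemma cr_insert {n : ℕ} (A P B : RWord n) (x p q) (hB : B.head? = some x)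
    (hu : ∀ u ∈ (B ++ A).getLast?, RR u p) (hp : P.head? = some p) (hq : P.getLast? = some q)
    (hqx : RR q x) (hP : List.IsChain RR P) (h : CyclicallyReduced (A ++ B)) :
    CyclicallyReduced (A ++ (P ++ B)) := by
  apply cr_rot'
  rw [List.append_assoc]
  apply cr_rot'
  have h' := (cr_iff _).1 (cr_rot' _ _ h)
  rw [cr_iff, List.isChain_append]
  refine ⟨⟨h'.1, hP, ?_⟩, ?_⟩
  · intro u hu' y hy
    rw [hp] at hy; simp at hy; subst hy
    exact hu u hu'
  · intro z hz y hy
    have e1 : z = q := by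
      simp [List.getLast?_append, hq] at hz; exact hz.symm
    have e2 : y = x := by
      simp [hB] at hy; exact hy.symm
    subst e1 e2; exact hqx

lemma max_split {n : ℕ} (a : Fin (n + 1) → ℤ) (w : RWord n) (hw : w ≠ []) (h0 : ht a w = 0) :
    ∃ A x B', w = A ++ x :: B' ∧ ∀ C D, w = C ++ D → ht a C ≤ ht a A := by
  have hl : 0 < w.length := List.length_pos_iff.2 hw
  obtain ⟨i, hi, hm⟩ := Finset.exists_max_image (Finset.range w.length)
    (fun i => ht a (w.take i)) ⟨0, by simpa⟩
  simp only [Finset.mem_range] at hi hm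
  refine ⟨w.take i, w[i], w.drop (i + 1), ?_, ?_⟩
  · rw [← List.drop_eq_getElem_cons hi, List.take_append_drop]
  · rintro C D rfl
    rcases D with _ | ⟨d, D⟩
    · rw [List.append_nil] at h0 hl
      have := hm 0 (by simpa)
      rw [h0]; simpa using this
    · have := hm C.length (by simp)
      simpa using this

lemma top_le {n : ℕ} (a : Fin (n + 1) → ℤ) (H h : ℤ) (w : RWord n)
    (hw : ∀ C D, w = C ++ D → h + ht a C ≤ H) : ∀ E ∈ lft a h w, top a E.1 ≤ H := by
  induction w generalizing h with
  | nil => simp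
  | cons x w ih =>
    intro E hE
    rw [lft_cons, List.mem_cons] at hE
    rcases hE with rfl | hE
    · have h1 := hw [] (x :: w) rfl
      have h2 := hw [x] w rfl
      rcases x with ⟨j, _ | _⟩ <;> simp [top, st] at * <;> omega
    · refine ih (h + st a x) ?_ E hE
      rintro C D rfl
      have := hw (x :: C) D rfl
      simp at this; omega

def Loc {n : ℕ} (a : Fin (n + 1) → ℤ) (v : RWord n) (p : ℕ) : Prop :=
  ∃ C x D, lft a 0 v = C ++ x :: D ∧ C.length = p ∧ x.1.1 ≠ 0 ∧
    (∀ z ∈ C, z.1.1 ≠ 0 → top a z.1 < top a x.1) ∧ ∀ z ∈ D, z.1.1 ≠ 0 → top a z.1 ≤ top a x.1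

lemma Loc.unique_aux {n : ℕ} {a : Fin (n + 1) → ℤ} {v : RWord n} {p q : ℕ} (hp : Loc a v p)
    (hq : Loc a v q) : ¬ p < q := by
  intro h
  obtain ⟨C, x, D, h1, h2, h3, h4, h5⟩ := hp
  obtain ⟨C', x', D', h1', h2', h3', h4', h5'⟩ := hq
  rw [h1] at h1'
  rw [List.append_eq_append_iff] at h1'
  rcases h1' with ⟨S, e1, e2⟩ | ⟨S, e1, e2⟩
  · rcases S with _ | ⟨s, S⟩
    · simp at e1; subst e1; omega
    · simp at e2
      obtain ⟨rfl, rfl⟩ := e2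
      have := h5 x' (by simp) h3'
      have := h4' x (by simp [e1]) h3
      omega
  · subst e1; simp at h2; omega

lemma Loc.unique {n : ℕ} {a : Fin (n + 1) → ℤ} {v : RWord n} {p q : ℕ} (hp : Loc a v p)
    (hq : Loc a v q) : p = q := by
  have := hp.unique_aux hq
  have := hq.unique_aux hp
  omega

def Dec {n : ℕ} (a : Fin (n + 1) → ℤ) (e : ℕ) (v w : RWord n) : Prop :=
  ∃ p, Loc a v (p + 1) ∧ w = v.take p ++ v.drop (p + 4 * e)

lemma Dec.unique {n : ℕ} {a : Fin (n + 1) → ℤ} {e : ℕ} {v w w' : RWord n} (h : Dec a e v w)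
    (h' : Dec a e v w') : w = w' := by
  obtain ⟨p, h1, rfl⟩ := h
  obtain ⟨q, h2, rfl⟩ := h'
  have := h1.unique h2
  have : p = q := by omega
  subst this; rfl

def blk {n : ℕ} (ε b : Bool) (y : Fin (n + 1)) : RWord n :=
  [(0, ε), (y, !b), (0, !ε), (y, b)]

lemma ht_blk {n : ℕ} (a : Fin (n + 1) → ℤ) (ε b : Bool) (y : Fin (n + 1)) :
    ht a (blk ε b y) = 0 := by
  rcases ε <;> rcases b <;> simp [blk, st]

def blks {n : ℕ} (e : ℕ) (ε b : Bool) (y : Fin (n + 1)) : RWord n :=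
  (List.replicate e (blk ε b y)).flatten

lemma blks_succ {n : ℕ} (e : ℕ) (ε b : Bool) (y : Fin (n + 1)) :
    blks (e + 1) ε b y = blk ε b y ++ blks e ε b y := by
  simp [blks, List.replicate_succ]

lemma ht_blks {n : ℕ} (a : Fin (n + 1) → ℤ) (e : ℕ) (ε b : Bool) (y : Fin (n + 1)) :
    ht a (blks e ε b y) = 0 := by
  induction e with
  | zero => simp [blks]
  | succ e ih => rw [blks_succ, ht_append, ih, ht_blk, add_zero]

lemma length_blks {n : ℕ} (e : ℕ) (ε b : Bool) (y : Fin (n + 1)) :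
    (blks e ε b y).length = 4 * e := by
  induction e with
  | zero => simp [blks]
  | succ e ih => rw [blks_succ, List.length_append, ih]; simp [blk]; ring

lemma lft_blks_succ {n : ℕ} (a : Fin (n + 1) → ℤ) (h : ℤ) (e : ℕ) (ε b : Bool) (y : Fin (n + 1)) :
    lft a h (blks (e + 1) ε b y) = lft a h (blk ε b y) ++ lft a h (blks e ε b y) := by
  rw [blks_succ, lft_append, ht_blk, add_zero]

lemma mem_lft_blks {n : ℕ} (a : Fin (n + 1) → ℤ) (h : ℤ) (e : ℕ) (ε b : Bool) (y : Fin (n + 1))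
    {E} (hE : E ∈ lft a h (blks e ε b y)) : E ∈ lft a h (blk ε b y) := by
  induction e with
  | zero => simp [blks] at hE
  | succ e ih =>
    rw [lft_blks_succ, List.mem_append] at hE
    exact hE.elim id ih

lemma blks_head {n : ℕ} (e : ℕ) (ε b : Bool) (y : Fin (n + 1)) (he : 1 ≤ e) :
    (blks e ε b y).head? = some (0, ε) := by
  obtain ⟨e, rfl⟩ := Nat.exists_eq_add_of_le' he
  rw [blks_succ]; rfl

lemma blks_last {n : ℕ} (e : ℕ) (ε b : Bool) (y : Fin (n + 1)) (he : 1 ≤ e) :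
    (blks e ε b y).getLast? = some (y, b) := by
  induction e, he using Nat.le_induction with
  | base => simp [blks, blk]
  | succ e he ih => rw [blks_succ, List.getLast?_append, ih]; rfl

lemma blks_chain {n : ℕ} (e : ℕ) (ε b : Bool) (y : Fin (n + 1)) (hy : y ≠ 0) :
    List.IsChain RR (blks e ε b y) := by
  induction e with
  | zero => simp [blks]
  | succ e ih =>
    rw [blks_succ, List.isChain_append]
    refine ⟨?_, ih, ?_⟩
    · simp [blk, RR, hy, hy.symm]
    · intro x hx z hz
      rcases Nat.eq_zero_or_pos e with rfl | he
      · simp [blks] at hz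
      · rw [blks_head _ _ _ _ he] at hz
        simp [blk] at hx hz
        subst hx hz
        intro h; exact absurd h hy

lemma lft_blk {n : ℕ} (a : Fin (n + 1) → ℤ) (h : ℤ) (ε b : Bool) (y : Fin (n + 1)) :
    ∃ α β γ : ℤ, lft a h (blk ε b y) = [((0, α), ε), ((y, β), !b), ((0, γ), !ε),
      ((y, β - st a (0, ε)), b)] ∧
      top a (y, β) = h + st a (0, ε) + max 0 (st a (y, !b)) := by
  refine ⟨if ε then h else h - a 0, if !b then h + st a (0, ε) else h + st a (0, ε) - a y,
    if !ε then h + st a (0, ε) + st a (y, !b) else h + st a (0, ε) + st a (y, !b) - a 0, ?_, ?_⟩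
  · rcases ε <;> rcases b <;> simp [lft_cons, st, blk] <;> ring
  · rcases ε <;> rcases b <;> simp [st, top] <;> omega

theorem surgery {n : ℕ} (a : Fin (n + 1) → ℤ) (ha : a 0 ≠ 0) (y : Fin (n + 1)) (hy : y ≠ 0)
    (e : ℕ) (he : 1 ≤ e) (w : RWord n) (hw : w ≠ []) (hc : CyclicallyReduced w)
    (h0 : ht a w = 0) :
    ∃ w' : RWord n, w' ≠ [] ∧ CyclicallyReduced w' ∧ w'.length = w.length + 4 * e ∧
      (∀ a'' : Fin (n + 1) → ℤ, ht a'' w' = ht a'' w) ∧ TopC a e y w' ∧ Dec a e w' w ∧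
      ∀ e', TopC (-a) e' y w → TopC (-a) e' y w' := by
  obtain ⟨A, ⟨z, b⟩, B', rfl, hmax⟩ := max_split a w hw h0
  obtain ⟨ε, hε⟩ : ∃ ε : Bool, st a (0, ε) = |a 0| := by
    rcases le_total 0 (a 0) with h | h
    · exact ⟨true, by simp [st, abs_of_nonneg h]⟩
    · exact ⟨false, by simp [st, abs_of_nonpos h]⟩
  have hpos : 0 < |a 0| := abs_pos.2 ha
  have hst : st a (y, !b) ≤ |a y| ∧ - |a y| ≤ st a (y, !b) ∧
      (0 ≤ st a (y, !b) → st a (y, !b) = |a y|) ∧ (st a (y, !b) ≤ 0 → st a (y, !b) = -|a y|) := by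
    rcases b <;> simp [st] <;> rcases abs_cases (a y) with h | h <;> omega
  obtain ⟨hs1, hs2, hs3, hs4⟩ := hst
  set P := blks e ε b y with hP
  set B : RWord n := (z, b) :: B' with hB
  set h := ht a A with hh
  have hneg : ∀ a'' : Fin (n + 1) → ℤ, ht a'' P = 0 := fun a'' => ht_blks a'' e ε b y
  have hlft : ∀ a'' : Fin (n + 1) → ℤ, lft a'' 0 (A ++ (P ++ B)) =
      lft a'' 0 A ++ (lft a'' (ht a'' A) P ++ lft a'' (ht a'' A) B) := by
    intro a''
    rw [lft_append, lft_append, hneg, add_zero, zero_add]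
  have hlft0 : ∀ a'' : Fin (n + 1) → ℤ, lft a'' 0 (A ++ B) =
      lft a'' 0 A ++ lft a'' (ht a'' A) B := by
    intro a''
    rw [lft_append, zero_add]
  have htop : ∀ E ∈ lft a 0 (A ++ B), top a E.1 ≤ h :=
    top_le a h 0 _ (fun C D hCD => by rw [zero_add]; exact hmax C D hCD)
  have htA : ∀ E ∈ lft a 0 A, top a E.1 ≤ h := fun E hE =>
    htop E (by rw [hlft0]; exact List.mem_append_left _ hE)
  have htB : ∀ E ∈ lft a h B, top a E.1 ≤ h := fun E hE =>
    htop E (by rw [hlft0]; exact List.mem_append_right _ hE)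
  obtain ⟨α, β, γ, hb, hβ⟩ := lft_blk a h ε b y
  rw [hε] at hb hβ
  have hβ' : top a (y, β - |a 0|) = top a (y, β) - |a 0| := by simp only [top]; ring
  have htP : ∀ E ∈ lft a h P, E.1.1 ≠ 0 → top a E.1 ≤ top a (y, β) := by
    intro E hE hE0
    have := mem_lft_blks a h e ε b y hE
    rw [hb] at this
    simp at this
    rcases this with rfl | rfl | rfl | rfl
    · simp at hE0
    · simp
    · simp at hE0
    · simp only [hβ']; omega
  obtain ⟨e, rfl⟩ := Nat.exists_eq_add_of_le' he
  refine ⟨A ++ (P ++ B), by simp [hB], ?_, ?_, ?_, ?_, ?_, ?_⟩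
  · refine cr_insert A P B (z, b) (0, ε) (y, b) rfl ?_ (blks_head _ _ _ _ he)
      (blks_last _ _ _ _ he) (fun _ => rfl) (blks_chain _ _ _ _ hy) hc
    rintro ⟨u0, u1⟩ hu
    intro h1
    simp only at h1
    subst h1
    by_contra h2
    simp only at h2
    have hu1 : st a (0, u1) = - |a 0| := by
      rw [← hε]
      have : u1 = !ε := by revert h2; rcases u1 <;> rcases ε <;> simp
      subst this
      rcases ε <;> simp [st]
    rcases A.eq_nil_or_concat with rfl | ⟨A', u, rfl⟩
    · rw [List.append_nil] at hu
      obtain ⟨B0, hB0⟩ := List.getLast?_eq_some_iff.1 hu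
      have := hmax B0 [(0, u1)] (by rw [List.nil_append, hB0])
      simp only [List.nil_append, hB0, ht_append, ht_cons, ht_nil] at h0
      simp [hh] at this
      omega
    · rw [List.getLast?_append] at hu
      simp at hu
      subst hu
      have := hmax A' ([(0, u1)] ++ B) (by simp)
      simp [hh] at this
      omega
  · simp [hP, length_blks]; ring
  · intro a''; simp [hneg]
  · refine ⟨β, !b, ?_, ?_⟩
    · rw [hlft, List.filter_append, List.filter_append]
      have f1 : ∀ L : List ((Fin (n + 1) × ℤ) × Bool), (∀ E ∈ L, top a E.1 ≤ h) →
          L.filter (fun E => decide (E.1.1 ≠ 0 ∧ top a (y, β) ≤ top a E.1)) = [] := by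
        intro L hL
        rw [List.filter_eq_nil_iff]
        intro E hE
        have := hL E hE
        simp only [decide_eq_true_eq, not_and]
        intro _
        have := le_max_left 0 (st a (y, !b))
        omega
      rw [f1 _ htA, f1 _ htB, List.nil_append, List.append_nil, hP]
      clear_value P
      clear hP
      generalize e + 1 = k
      induction k with
      | zero => simp [blks]
      | succ k ih =>
        rw [lft_blks_succ, List.filter_append, ih, hb]
        rw [List.replicate_succ]
        simp [hy, hβ', ha]
    · rcases le_total 0 (st a (y, !b)) with h1 | h1
      · refine ⟨A, P ++ B, rfl, ?_⟩
        rw [hβ, max_eq_right h1, hs3 h1]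
      · refine ⟨A ++ [(0, ε), (y, !b), (0, !ε)], (y, b) :: (blks e ε b y ++ B), ?_, ?_⟩
        · rw [hP, blks_succ]; simp [blk]
        · have := ht_blk a ε b y
          simp only [blk, ht_cons, ht_nil] at this
          simp only [ht_append, ht_cons, ht_nil]
          rw [hβ, max_eq_left h1]
          have h5 : st a (y, b) = - st a (y, !b) := by rcases b <;> simp [st]
          have := hs4 h1
          omega
  · refine ⟨A.length, ⟨lft a 0 A ++ [((0, α), ε)], ((y, β), !b),
      [((0, γ), !ε), ((y, β - |a 0|), b)] ++ (lft a h (blks e ε b y) ++ lft a h B), ?_, ?_, hy,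
      ?_, ?_⟩, ?_⟩
    · rw [hlft, hP, lft_blks_succ, hb]; simp [hh]
    · simp
    · intro E hE hE0
      rw [List.mem_append] at hE
      rcases hE with hE | hE
      · have := htA E hE
        have := le_max_left 0 (st a (y, !b))
        simp only [hβ]; omega
      · simp at hE; subst hE; simp at hE0
    · intro E hE hE0
      rw [List.mem_append, List.mem_append] at hE
      rcases hE with hE | hE | hE
      · simp at hE
        rcases hE with rfl | rfl
        · simp at hE0
        · simp only [hβ']; omega
      · refine htP E ?_ hE0
        rw [hP, lft_blks_succ]; exact List.mem_append_right _ hE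
      · have := htB E hE
        have := le_max_left 0 (st a (y, !b))
        simp only [hβ]; omega
    · rw [List.take_left, ← List.drop_drop, List.drop_left, ← length_blks (e + 1) ε b y, ← hP,
        List.drop_left]
  · rintro e' ⟨β1, s1, hf, C, D, hCD, hC⟩
    refine ⟨β1, s1, ?_, A, P ++ B, rfl, ?_⟩
    · rw [← hf, hlft, hlft0, List.filter_append, List.filter_append, List.filter_append]
      have : (lft (-a) (ht (-a) A) P).filter
          (fun E => decide (E.1.1 ≠ 0 ∧ top (-a) (y, β1) ≤ top (-a) E.1)) = [] := by
        rw [List.filter_eq_nil_iff]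
        intro E hE
        simp only [decide_eq_true_eq, not_and]
        intro hE0
        have hE' := mem_lft_blks _ _ _ _ _ _ hE
        obtain ⟨α', β', γ', hb', hβ2⟩ := lft_blk (-a) (ht (-a) A) ε b y
        rw [st_neg, hε] at hb' hβ2
        rw [st_neg] at hβ2
        have hb3 : top (-a) (y, β' - -|a 0|) = top (-a) (y, β') + |a 0| := by
          simp only [top]; ring
        have hC2 := hmax C D hCD
        rw [ht_neg, Pi.neg_apply, Pi.neg_apply, abs_neg, abs_neg] at hC
        rw [ht_neg] at hβ2
        have hmx : max 0 (- st a (y, !b)) ≤ |a y| := by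
          apply max_le (abs_nonneg _); omega
        rw [hb'] at hE'
        simp at hE'
        rcases hE' with rfl | rfl | rfl | rfl
        · simp at hE0
        · simp only; omega
        · simp at hE0
        · simp only [sub_neg_eq_add] at hb3 ⊢
          omega
      rw [this, List.nil_append]
    · have := hmax C D hCD
      rw [ht_neg] at hC ⊢
      omega

theorem surgery2 {n : ℕ} (a : Fin (n + 1) → ℤ) (ha : a 0 ≠ 0) (y : Fin (n + 1)) (hy : y ≠ 0)
    (e : ℕ) (he : 1 ≤ e) (w : RWord n) (hw : w ≠ []) (hc : CyclicallyReduced w)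
    (h0 : ht a w = 0) :
    ∃ w' : RWord n, w' ≠ [] ∧ CyclicallyReduced w' ∧ w'.length = w.length + 4 * e + 4 ∧
      (∀ a'' : Fin (n + 1) → ℤ, ht a'' w' = ht a'' w) ∧ TopC a e y w' ∧ TopC (-a) 1 y w' ∧
      ∃ v, Dec (-a) 1 w' v ∧ Dec a e v w := by
  obtain ⟨v, h1, h2, h3, h4, h5, h6, -⟩ := surgery a ha y hy e he w hw hc h0
  obtain ⟨w', h1', h2', h3', h4', h5', h6', h7⟩ := surgery (-a) (by simpa) y hy 1 le_rfl v h1 h2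
    (by rw [ht_neg, h4, h0, neg_zero])
  refine ⟨w', h1', h2', by omega, fun a'' => by rw [h4', h4], ?_, h5', v, h6', h6⟩
  have := h7 e
  rw [neg_neg] at this
  exact this h5

end RD

namespace RD

lemma ht_sum {n : ℕ} (a : Fin (n + 1) → ℤ) (w : RWord n) :
    ht a w = ∑ j, ht (Pi.single j 1) w * a j := by
  induction w with
  | nil => simp
  | cons x w ih =>
    simp only [ht_cons, add_mul, Finset.sum_add_distrib, ← ih]
    congr 1
    rw [Finset.sum_eq_single x.1]
    · simp [st]
    · intro j _ hj
      simp [st, Pi.single_apply, hj.symm]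
    · simp

lemma det_shift {n : ℕ} (M : Matrix (Fin n) (Fin n) ℤ) (s : Fin n → ℤ) (hs : ∀ i, s i * s i = 1) :
    ∃ c : ℕ, c ≤ n ∧ (M + Matrix.diagonal (fun i => (c : ℤ) * s i)).det ≠ 0 := by
  set N : Matrix (Fin n) (Fin n) ℤ := - (Matrix.diagonal s * M) with hN
  have hch : N.charpoly ≠ 0 := N.charpoly_monic.ne_zero
  obtain ⟨c, hc, hcr⟩ : ∃ c ∈ Finset.range (n + 1), N.charpoly.eval (c : ℤ) ≠ 0 := by
    by_contra! h
    have h1 : (Finset.range (n + 1)).image (fun c : ℕ => (c : ℤ)) ⊆ N.charpoly.roots.toFinset := by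
      intro x hx
      obtain ⟨c, hc, rfl⟩ := Finset.mem_image.1 hx
      rw [Multiset.mem_toFinset, Polynomial.mem_roots hch]
      exact h c hc
    have h2 := Finset.card_le_card h1
    rw [Finset.card_image_of_injective _ Nat.cast_injective, Finset.card_range] at h2
    have h3 := (Multiset.toFinset_card_le _).trans (Polynomial.card_roots' N.charpoly)
    rw [Matrix.charpoly_natDegree_eq_dim, Fintype.card_fin] at h3
    omega
  refine ⟨c, by simpa [Nat.lt_succ_iff] using hc, ?_⟩
  have h4 : Matrix.diagonal s * (M + Matrix.diagonal (fun i => (c : ℤ) * s i)) =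
      Matrix.scalar (Fin n) (c : ℤ) - N := by
    rw [mul_add, Matrix.diagonal_mul_diagonal, hN, sub_neg_eq_add, add_comm]
    congr 1
    rw [Matrix.scalar_apply]
    congr 1
    funext i
    rw [mul_left_comm, hs, mul_one]
  intro h5
  apply hcr
  rw [Matrix.eval_charpoly, ← h4, Matrix.det_mul, h5, mul_zero]

def Mh {n : ℕ} (r : Fin n → RWord n) : Matrix (Fin n) (Fin n) ℤ :=
  Matrix.of fun i j => ht (Pi.single j.succ 1) (r i)

lemma ht_replicate {n : ℕ} (a : Fin (n + 1) → ℤ) (c : ℕ) (x) :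
    ht a (List.replicate c x) = c * st a x := by
  simp [ht]

lemma prep {n : ℕ} (w : RWord n) (hw : w ≠ []) (hc : CyclicallyReduced w) (y : Fin (n + 1)) :
    ∃ s : Bool, ∀ c : ℕ, CyclicallyReduced (List.replicate c (y, s) ++ w) := by
  obtain ⟨v, w1, rfl⟩ := List.exists_cons_of_ne_nil hw
  obtain ⟨w2, u, hu⟩ : ∃ w2 u, v :: w1 = w2 ++ [u] := by
    rcases (v :: w1).eq_nil_or_concat with h | ⟨w2, u, h⟩
    · simp at h
    · exact ⟨w2, u, by simpa using h⟩
  have hlast : (v :: w1).getLast? = some u := by rw [hu]; simp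
  have huv : RR u v := ((cr_iff _).1 hc).2 u hlast v rfl
  obtain ⟨s, h1, h2⟩ : ∃ s : Bool, RR (y, s) v ∧ RR u (y, s) := by
    by_cases h : v.1 = y
    · exact ⟨v.2, fun _ => rfl, fun h' => huv (h'.trans h.symm)⟩
    · exact ⟨u.2, fun h' => absurd h'.symm h, fun _ => rfl⟩
  refine ⟨s, fun c => ?_⟩
  rcases c with _ | c
  · simpa using hc
  · have := cr_insert [] (List.replicate (c + 1) (y, s)) (v :: w1) v (y, s) (y, s) rfl
      (by
        intro u' hu'
        rw [List.append_nil, hlast] at hu'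
        simp at hu'; subst hu'; exact h2)
      (by simp [List.replicate_succ]) (by simp [List.getLast?_replicate]) h1
      (List.isChain_replicate_of_rel _ (fun _ => rfl)) (by simpa using hc)
    simpa using this

lemma detsurg {n l : ℕ} (r : Fin n → RWord n) (hr : r ∈ Rtuples n l) :
    ∃ c : Fin (n + 1), ∃ r' ∈ Rtuples n (l + n), (∀ i, r i = (r' i).drop c) ∧ (Mh r').det ≠ 0 := by
  choose s hs using fun i : Fin n => prep (r i) (hr i).1 (hr i).2.2 i.succ
  obtain ⟨c, hc, hdet⟩ := det_shift (Mh r) (fun i => if s i then 1 else -1)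
    (fun i => by split_ifs <;> simp)
  refine ⟨⟨c, by omega⟩, fun i => List.replicate c (i.succ, s i) ++ r i, ?_, ?_, ?_⟩
  · intro i
    refine ⟨by simp [(hr i).1], ?_, hs i c⟩
    have := (hr i).2.1
    simp; omega
  · intro i
    simp [List.drop_append]
  · convert hdet using 2
    ext i j
    simp only [Mh, Matrix.of_apply, ht_append, ht_replicate, Matrix.add_apply,
      Matrix.diagonal_apply, st, Pi.single_apply, Fin.succ_inj]
    rw [add_comm]
    by_cases h : i = j
    · subst h; simp
    · simp [h]

def AdmE {n : ℕ} (a : Fin (n + 1) → ℤ) (E : Fin n → (Fin (n + 1) → ℤ) → ℤ) : Prop :=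
  a 0 ≠ 0 ∧ (∃ w : RWord n, ht a w = 1) ∧ (∀ i, E i a = 0) ∧
    ∀ a' : Fin (n + 1) → ℤ, (∀ i, E i a' = 0) → ∀ j, a 0 * a' j = a' 0 * a j

def Ex {n : ℕ} (r : Fin n → RWord n) : Fin n → (Fin (n + 1) → ℤ) → ℤ := fun i a => ht a (r i)

lemma exists_word_ht {n : ℕ} (a : Fin (n + 1) → ℤ) (g : Fin (n + 1) → ℤ) (S : Finset (Fin (n + 1))) :
    ∃ w : RWord n, ht a w = ∑ j ∈ S, a j * g j := by
  induction S using Finset.induction_on with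
  | empty => exact ⟨[], by simp⟩
  | insert x S hx ih =>
    obtain ⟨w, hw⟩ := ih
    rw [Finset.sum_insert hx]
    rcases Int.natAbs_eq (g x) with h | h
    · refine ⟨List.replicate (g x).natAbs (x, true) ++ w, ?_⟩
      rw [ht_append, hw, ht_replicate]
      congr 1
      nth_rewrite 2 [h]
      simp [st, mul_comm]
    · refine ⟨List.replicate (g x).natAbs (x, false) ++ w, ?_⟩
      rw [ht_append, hw, ht_replicate]
      congr 1
      nth_rewrite 2 [h]
      simp [st, mul_comm]

lemma exists_adm {n : ℕ} (r : Fin n → RWord n) (hd : (Mh r).det ≠ 0) : ∃ a, AdmE a (Ex r) := by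
  have hht : ∀ (a : Fin (n + 1) → ℤ) i, ht a (r i) =
      ht (Pi.single 0 1) (r i) * a 0 + (Mh r).mulVec (fun j => a j.succ) i := by
    intro a i
    rw [ht_sum, Fin.sum_univ_succ]
    rfl
  let v0 : Fin n → ℤ := fun i => ht (Pi.single 0 1) (r i)
  let b : Fin (n + 1) → ℤ := Fin.cons (Mh r).det (fun j => - ((Mh r).adjugate.mulVec v0) j)
  have hb0 : b 0 ≠ 0 := hd
  have hb : ∀ i, ht b (r i) = 0 := by
    intro i
    rw [hht]
    have : (fun j => b (Fin.succ j)) = - ((Mh r).adjugate.mulVec v0) := rfl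
    rw [this, Matrix.mulVec_neg, Matrix.mulVec_mulVec, Matrix.mul_adjugate, Matrix.smul_mulVec,
      Matrix.one_mulVec]
    show v0 i * (Mh r).det + - ((Mh r).det * v0 i) = 0
    ring
  obtain ⟨a, ha1, ha2⟩ := Finset.extract_gcd (s := (Finset.univ : Finset (Fin (n + 1)))) b ⟨0, by simp⟩
  set d := Finset.univ.gcd b with hdd
  have hba : ∀ j, b j = d * a j := fun j => ha1 j (Finset.mem_univ j)
  have hd0 : d ≠ 0 := by intro h; apply hb0; rw [hba, h, zero_mul]
  have ha0 : a 0 ≠ 0 := by intro h; apply hb0; rw [hba, h, mul_zero]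
  have har : ∀ i, ht a (r i) = 0 := by
    intro i
    have h1 := hb i
    rw [ht_sum] at h1 ⊢
    have : ∑ j, ht (Pi.single j 1) (r i) * b j = d * ∑ j, ht (Pi.single j 1) (r i) * a j := by
      rw [Finset.mul_sum]
      apply Finset.sum_congr rfl
      intro j _
      rw [hba]; ring
    rw [this] at h1
    exact (mul_eq_zero.1 h1).resolve_left hd0
  refine ⟨a, ha0, ?_, har, ?_⟩
  · obtain ⟨g, hg⟩ := Finset.gcd_eq_sum_mul (Finset.univ : Finset (Fin (n + 1))) a
    obtain ⟨w, hw⟩ := exists_word_ht a g Finset.univ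
    refine ⟨w, ?_⟩
    rw [hw, ← ha2, hg]
  · intro a' ha' j
    induction j using Fin.cases with
    | zero => ring
    | succ j =>
      have h2 : (Mh r).mulVec (fun j => a 0 * a' (Fin.succ j) - a' 0 * a (Fin.succ j)) = 0 := by
        have : (fun j : Fin n => a 0 * a' (Fin.succ j) - a' 0 * a (Fin.succ j)) =
            a 0 • (fun j : Fin n => a' j.succ) - a' 0 • (fun j : Fin n => a j.succ) := rfl
        rw [this, Matrix.mulVec_sub, Matrix.mulVec_smul, Matrix.mulVec_smul]
        funext i
        have e1 := ha' i
        have e2 := har i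
        simp only [Ex] at e1
        rw [hht] at e1 e2
        simp only [Pi.sub_apply, Pi.smul_apply, smul_eq_mul, Pi.zero_apply]
        linear_combination a 0 * e1 - a' 0 * e2
      have h3 := Matrix.eq_zero_of_mulVec_eq_zero hd h2
      have := congrFun h3 j
      simp only [Pi.zero_apply] at this
      linarith

def Good {n : ℕ} (e : ℕ) (r : Fin n → RWord n) : Prop :=
  ∃ a, AdmE a (Ex r) ∧ (∀ i, TopC a e i.succ (r i)) ∧ ∀ i, TopC (-a) 1 i.succ (r i)

lemma Good.fbc {n : ℕ} {r : Fin n → RWord n} (h : Good 1 r) :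
    FreeByCyclic (PresentedGroup (relsOf r)) := by
  obtain ⟨a, ⟨h1, h2, h3, h4⟩, h5, h6⟩ := h
  exact thmA a h1 h2 r h3 h5 h6

lemma Good.not_fbc {n : ℕ} (hn : 1 ≤ n) {r : Fin n → RWord n} (h : Good 2 r) :
    ¬ FreeByCyclic (PresentedGroup (relsOf r)) := by
  obtain ⟨a, ⟨h1, h2, h3, h4⟩, h5, h6⟩ := h
  exact thmB hn a h1 h2 r h3 h4 h5 h6

noncomputable def aOf {n : ℕ} (E : Fin n → (Fin (n + 1) → ℤ) → ℤ) : Fin (n + 1) → ℤ :=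
  if h : ∃ a, AdmE a E then h.choose else 0

lemma surg_all {n l e : ℕ} (he : 1 ≤ e) (r : Fin n → RWord n) (hr : r ∈ Rtuples n l) :
    ∃ c : Fin (n + 1), ∃ r'', r'' ∈ Rtuples n (l + (n + 4 * e + 4)) ∧ Good e r'' ∧
      ∃ v r' : Fin n → RWord n, (∀ i, Dec (-aOf (Ex r'')) 1 (r'' i) (v i)) ∧
        (∀ i, Dec (aOf (Ex r'')) e (v i) (r' i)) ∧ ∀ i, r i = (r' i).drop c := by
  obtain ⟨c, r', hr', hdrop, hdet⟩ := detsurg r hr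
  have hex := exists_adm r' hdet
  have ha : AdmE (aOf (Ex r')) (Ex r') := by
    rw [aOf, dif_pos hex]; exact hex.choose_spec
  set a := aOf (Ex r') with haa
  choose r'' h1 h2 h3 h4 h5 h6 v h7 h8 using fun i : Fin n =>
    surgery2 a ha.1 i.succ (Fin.succ_ne_zero i) e he (r' i) (hr' i).1 (hr' i).2.2 (ha.2.2.1 i)
  have hE : Ex r'' = Ex r' := by
    funext i a''; exact h4 i a''
  refine ⟨c, r'', fun i => ⟨h1 i, ?_, h2 i⟩, ⟨a, by rw [hE]; exact ha, h5, h6⟩, v, r', ?_, ?_, hdrop⟩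
  · have := (hr' i).2.1
    rw [h3]; omega
  · rw [hE]; exact h7
  · rw [hE]; exact h8

lemma finite_R (n l : ℕ) : (Rtuples n l).Finite := by
  apply Set.Finite.subset (Set.Finite.pi' (fun _ : Fin n => List.finite_length_le (Fin (n + 1) × Bool) l))
  intro r hr i
  exact (hr i).2.1

lemma count_good {n l e : ℕ} (he : 1 ≤ e) : Nat.card (Rtuples n l) ≤
    (n + 1) * Nat.card {r : Fin n → RWord n // r ∈ Rtuples n (l + (n + 4 * e + 4)) ∧ Good e r} := by
  choose c r'' h1 h2 v r' h3 h4 h5 using fun r : Rtuples n l => surg_all (e := e) he r.1 r.2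
  have : Finite {r : Fin n → RWord n // r ∈ Rtuples n (l + (n + 4 * e + 4)) ∧ Good e r} :=
    ((finite_R n _).subset (fun r hr => hr.1 : {r | r ∈ Rtuples n (l + (n + 4 * e + 4)) ∧ Good e r} ⊆ _)).to_subtype
  let f : Rtuples n l → Fin (n + 1) ×
    {r : Fin n → RWord n // r ∈ Rtuples n (l + (n + 4 * e + 4)) ∧ Good e r} :=
    fun r => (c r, ⟨r'' r, h1 r, h2 r⟩)
  have hf : Function.Injective f := by
    intro r q hrq
    have e1 : c r = c q := congrArg Prod.fst hrq
    have e2 : r'' r = r'' q := congrArg (fun x => x.2.1) hrq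
    apply Subtype.ext
    funext i
    have e3 : v r i = v q i := (h3 r i).unique (by rw [e2]; exact h3 q i)
    have e4 : r' r i = r' q i := (h4 r i).unique (by rw [e2, e3]; exact h4 q i)
    rw [h5 r i, h5 q i, e4, e1]
  have := Nat.card_le_card_of_injective f hf
  simpa [Nat.card_prod] using this

def wdec {n : ℕ} (w : RWord n) : Option ((Fin (n + 1) × Bool) × (Fin (n + 1) × Bool)) → RWord n
  | none => w
  | some x => w.dropLast ++ [x.1, x.2]

lemma shrink {n l : ℕ} (hn : 1 ≤ n) (hl : 2 ≤ l) (w : RWord n) (h1 : w ≠ []) (h2 : w.length ≤ l + 1)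
    (h3 : CyclicallyReduced w) :
    ∃ w' o, (w' ≠ [] ∧ w'.length ≤ l ∧ CyclicallyReduced w') ∧ w = wdec w' o := by
  by_cases h : w.length ≤ l
  · exact ⟨w, none, ⟨h1, h, h3⟩, rfl⟩
  have hlen : w.length = l + 1 := by omega
  obtain ⟨w1, q, rfl⟩ := (List.eq_nil_or_concat w).resolve_left h1
  have hw1 : w1 ≠ [] := by rintro rfl; simp at hlen; omega
  obtain ⟨v, p, rfl⟩ := (List.eq_nil_or_concat w1).resolve_left hw1
  have hv : v ≠ [] := by rintro rfl; simp at hlen; omega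
  obtain ⟨x, v1, rfl⟩ := List.exists_cons_of_ne_nil hv
  obtain ⟨v2, u, hu⟩ := (List.eq_nil_or_concat (x :: v1)).resolve_left hv
  obtain ⟨z, hz1, hz2⟩ : ∃ z, RR u z ∧ RR z x := by
    by_cases hux : u.1 = x.1
    · have : Nontrivial (Fin (n + 1)) := Fin.nontrivial_iff_two_le.2 (by omega)
      obtain ⟨j, hj⟩ := exists_ne x.1
      exact ⟨(j, true), fun h => absurd (h.symm.trans hux) hj, fun h => absurd h hj⟩
    · exact ⟨x, fun h => absurd h hux, fun _ => rfl⟩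
  refine ⟨(x :: v1) ++ [z], some (p, q), ⟨by simp, ?_, ?_⟩, ?_⟩
  · simp at hlen ⊢; omega
  · have h4 := ((cr_iff _).1 h3).1
    have h5 : List.IsChain RR (x :: v1) := by
      simp only [List.concat_eq_append, List.append_assoc] at h4
      exact (List.isChain_append.1 h4).1
    rw [cr_iff, List.isChain_append]
    refine ⟨⟨h5, by simp, ?_⟩, ?_⟩
    · intro u' hu' z' hz'
      rw [hu] at hu'
      simp at hu' hz'
      subst hu' hz'; exact hz1
    · intro z' hz' x' hx'
      rw [List.getLast?_append] at hz'
      simp at hz' hx'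
      subst hz' hx'; exact hz2
  · simp only [wdec, List.dropLast_concat]; simp

lemma growth {n l : ℕ} (hn : 1 ≤ n) (hl : 2 ≤ l) : Nat.card (Rtuples n (l + 1)) ≤
    Nat.card (Fin n → Option ((Fin (n + 1) × Bool) × (Fin (n + 1) × Bool))) *
      Nat.card (Rtuples n l) := by
  have hs : ∀ r : Rtuples n (l + 1), ∃ (r' : Fin n → RWord n)
      (o : Fin n → Option ((Fin (n + 1) × Bool) × (Fin (n + 1) × Bool))), r' ∈ Rtuples n l ∧
      ∀ i, r.1 i = wdec (r' i) (o i) := by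
    intro r
    choose w' o h1 h2 using fun i => shrink hn hl (r.1 i) (r.2 i).1 (r.2 i).2.1 (r.2 i).2.2
    exact ⟨w', o, h1, h2⟩
  choose r' o h1 h2 using hs
  have := (finite_R n l).to_subtype
  rw [← Nat.card_prod]
  refine Nat.card_le_card_of_injective (fun r => (o r, (⟨r' r, h1 r⟩ : Rtuples n l))) ?_
  intro r q hrq
  have e1 : o r = o q := congrArg Prod.fst hrq
  have e2 : r' r = r' q := congrArg (fun x => x.2.1) hrq
  apply Subtype.ext
  funext i
  rw [h2, h2, e1, e2]

lemma growth' {n l : ℕ} (hn : 1 ≤ n) (hl : 2 ≤ l) (C : ℕ) : Nat.card (Rtuples n (l + C)) ≤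
    Nat.card (Fin n → Option ((Fin (n + 1) × Bool) × (Fin (n + 1) × Bool))) ^ C *
      Nat.card (Rtuples n l) := by
  induction C with
  | zero => simp
  | succ C ih =>
    rw [pow_succ', mul_assoc]
    exact (growth (l := l + C) hn (by omega)).trans (Nat.mul_le_mul_left _ ih)

lemma card_R_pos {n l : ℕ} (hl : 1 ≤ l) : 0 < Nat.card (Rtuples n l) := by
  have := (finite_R n l).to_subtype
  have : Nonempty (Rtuples n l) := by
    refine ⟨⟨fun _ => [(0, true)], fun i => ⟨by simp, by simpa using hl, ?_⟩⟩⟩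
    rw [cr_iff]
    simp [RR]
  exact Nat.card_pos

lemma good_ratio {n : ℕ} (hn : 1 ≤ n) (e : ℕ) (he : 1 ≤ e) :
    ∃ c : ℝ, 0 < c ∧ ∀ᶠ l in Filter.atTop, c ≤ tupleRatio n (Good e) l := by
  set K := Nat.card (Fin n → Option ((Fin (n + 1) × Bool) × (Fin (n + 1) × Bool))) with hK
  have hKpos : 0 < K := Nat.card_pos
  set C := n + 4 * e + 4 with hC
  refine ⟨1 / ((K : ℝ) ^ C * (n + 1)), by positivity, ?_⟩
  filter_upwards [Filter.eventually_ge_atTop (C + 2)] with m hm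
  obtain ⟨l, rfl⟩ := Nat.exists_eq_add_of_le' hm
  have h1 := growth' (l := l + 2) hn (by omega) C
  have h2 := count_good (n := n) (l := l + 2) he
  have e1 : l + (C + 2) = l + 2 + C := by ring
  rw [e1]
  have h3 : 0 < Nat.card (Rtuples n (l + 2 + C)) := card_R_pos (by omega)
  unfold tupleRatio
  rw [← hC] at h2
  have h4 : Nat.card (Rtuples n (l + 2 + C)) ≤ K ^ C * ((n + 1) *
    Nat.card {r : Fin n → RWord n // r ∈ Rtuples n (l + 2 + C) ∧ Good e r}) :=
    h1.trans (Nat.mul_le_mul_left _ h2)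
  have h5 : (Nat.card (Rtuples n (l + 2 + C)) : ℝ) ≤ (K : ℝ) ^ C * (((n : ℝ) + 1) *
    (Nat.card {r : Fin n → RWord n // r ∈ Rtuples n (l + 2 + C) ∧ Good e r} : ℝ)) := by
    exact_mod_cast h4
  rw [div_le_div_iff₀ (by positivity) (by exact_mod_cast h3)]
  linarith

lemma ratio_mono {n l : ℕ} {P Q : (Fin n → RWord n) → Prop} (h : ∀ r, P r → Q r) :
    tupleRatio n P l ≤ tupleRatio n Q l := by
  unfold tupleRatio
  gcongr
  have : Finite {r : Fin n → RWord n // r ∈ Rtuples n l ∧ Q r} :=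
    ((finite_R n _).subset (fun r hr => hr.1 : {r | r ∈ Rtuples n l ∧ Q r} ⊆ _)).to_subtype
  exact Nat.card_le_card_of_injective
    (fun r => (⟨r.1, r.2.1, h _ r.2.2⟩ : {r : Fin n → RWord n // r ∈ Rtuples n l ∧ Q r}))
    (fun r q hrq => Subtype.ext (congrArg (fun x => x.1) hrq))

lemma ratio_add {n l : ℕ} {P Q : (Fin n → RWord n) → Prop} (hl : 1 ≤ l) (h : ∀ r, P r → ¬ Q r) :
    tupleRatio n P l + tupleRatio n Q l ≤ 1 := by
  unfold tupleRatio
  have h3 : 0 < Nat.card (Rtuples n l) := card_R_pos hl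
  rw [← add_div, div_le_one (by exact_mod_cast h3)]
  have := (finite_R n l).to_subtype
  have f1 : Finite {r : Fin n → RWord n // r ∈ Rtuples n l ∧ Q r} :=
    ((finite_R n _).subset (fun r hr => hr.1 : {r | r ∈ Rtuples n l ∧ Q r} ⊆ _)).to_subtype
  have f2 : Finite {r : Fin n → RWord n // r ∈ Rtuples n l ∧ P r} :=
    ((finite_R n _).subset (fun r hr => hr.1 : {r | r ∈ Rtuples n l ∧ P r} ⊆ _)).to_subtype
  have : Nat.card {r : Fin n → RWord n // r ∈ Rtuples n l ∧ P r} +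
      Nat.card {r : Fin n → RWord n // r ∈ Rtuples n l ∧ Q r} ≤ Nat.card (Rtuples n l) := by
    rw [← Nat.card_sum]
    refine Nat.card_le_card_of_injective
      (Sum.elim (fun r => (⟨r.1, r.2.1⟩ : Rtuples n l)) (fun r => ⟨r.1, r.2.1⟩)) ?_
    rintro (⟨r, hr⟩ | ⟨r, hr⟩) (⟨q, hq⟩ | ⟨q, hq⟩) hrq
    · have : r = q := congrArg (fun x => x.1) hrq
      subst this; rfl
    · have : r = q := congrArg (fun x => x.1) hrq
      subst this; exact absurd hq.2 (h _ hr.2)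
    · have : r = q := congrArg (fun x => x.1) hrq
      subst this; exact absurd hr.2 (h _ hq.2)
    · have : r = q := congrArg (fun x => x.1) hrq
      subst this; rfl
  exact_mod_cast this

lemma ratio_nonneg {n l : ℕ} {P : (Fin n → RWord n) → Prop} : 0 ≤ tupleRatio n P l := by
  unfold tupleRatio; positivity

end RD

/-- A random deficiency 1 group in the few-relator model is free-by-cyclic with asymptotic
probability that is positive and bounded away from 1. -/
theorem random_def1_freeByCyclic_probability (n : ℕ) (hn : 1 ≤ n) :
    0 < Filter.liminf
        (tupleRatio n fun r => FreeByCyclic (PresentedGroup (relsOf r))) Filter.atTop ∧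
    Filter.limsup
        (tupleRatio n fun r => FreeByCyclic (PresentedGroup (relsOf r))) Filter.atTop < 1 := by
  obtain ⟨c, hc, h1⟩ := RD.good_ratio hn 1 le_rfl
  obtain ⟨d, hd, h2⟩ := RD.good_ratio hn 2 (by norm_num)
  have hle : ∀ᶠ l in Filter.atTop,
      tupleRatio n (fun r => FreeByCyclic (PresentedGroup (relsOf r))) l ≤ 1 - d := by
    filter_upwards [h2, Filter.eventually_ge_atTop 1] with l hl hl1
    have := RD.ratio_add (n := n) (P := fun r => FreeByCyclic (PresentedGroup (relsOf r)))
      (Q := RD.Good 2) hl1 (fun r h3 h4 => h4.not_fbc hn h3)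
    linarith
  have hge : ∀ᶠ l in Filter.atTop,
      c ≤ tupleRatio n (fun r => FreeByCyclic (PresentedGroup (relsOf r))) l := by
    filter_upwards [h1] with l hl
    exact hl.trans (RD.ratio_mono (fun r h => h.fbc))
  have hbdd : Filter.IsBoundedUnder (· ≤ ·) Filter.atTop
      (tupleRatio n fun r => FreeByCyclic (PresentedGroup (relsOf r))) := ⟨1 - d, by simpa using hle⟩
  have hbdd' : Filter.IsBoundedUnder (· ≥ ·) Filter.atTop
      (tupleRatio n fun r => FreeByCyclic (PresentedGroup (relsOf r))) := ⟨c, by simpa using hge⟩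
  constructor
  · exact hc.trans_le (Filter.le_liminf_of_le hbdd.isCoboundedUnder_ge hge)
  · exact (Filter.limsup_le_of_le hbdd'.isCoboundedUnder_le hle).trans_lt (by linarith)
end
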